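/- Let I and J be ℤ-invariant subsets of ℂ^* with I∩J=∅. (1) If M is an irreducible finite-dimensional H^A_m-module of type I and N is an irreducible finite-dimensional H^A_n-module of type J, then Ind_{H^A_m⊗H^A_n}^{H^A_{m+n}}(M⊗N) := H^A_{m+n} ⊗_{H^A_m⊗H^A_n} (M⊗N) is an irreducible H^A_{m+n}-module of type I∪J. (2) Conversely, if L is an irreducible finite-dimensional H^A_n-module of type I∪J, then there exist m with 0≤m≤n, an irreducible H^A_m-module M of type I and an irreducible H^A_{n−m}-module N of type J such that L ≅ Ind_{H^A_m⊗H^A_{n−m}}^{H^A_n}(M⊗N). -/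

import Mathlib

set_option synthInstance.maxHeartbeats 1000000
set_option maxHeartbeats 1000000

noncomputable section
open scoped BigOperators

/-- generators of the affine Hecke algebra of type `A` of degree `n`:
`T_1, …, T_{n-1}` (indexed by `Fin (n-1)`) and `X_1, …, X_n` (indexed by `Fin n`)
with their inverses. -/
inductive AGen (n : ℕ) : Type
  | T : Fin (n - 1) → AGen n
  | X : Fin n → AGen n
  | Xi : Fin n → AGen n

def aT {n : ℕ} (i : Fin (n - 1)) : FreeAlgebra ℂ (AGen n) := FreeAlgebra.ι ℂ (AGen.T i)
def aX {n : ℕ} (i : Fin n) : FreeAlgebra ℂ (AGen n) := FreeAlgebra.ι ℂ (AGen.X i)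
def aXi {n : ℕ} (i : Fin n) : FreeAlgebra ℂ (AGen n) := FreeAlgebra.ι ℂ (AGen.Xi i)

/-- the defining relations of the affine Hecke algebra `H^A_n`
(here `T_k` for `k : Fin (n-1)` is the paper's `T_{k+1}`, and it exchanges the
variables `X_k` and `X_{k+1}` in the 0-indexed notation). -/
inductive HARel (p₁ : ℂ) (n : ℕ) :
    FreeAlgebra ℂ (AGen n) → FreeAlgebra ℂ (AGen n) → Prop
  | Xcomm (i j : Fin n) : HARel p₁ n (aX i * aX j) (aX j * aX i)
  | Xinv_right (i : Fin n) : HARel p₁ n (aX i * aXi i) 1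
  | Xinv_left (i : Fin n) : HARel p₁ n (aXi i * aX i) 1
  | braid (i j : Fin (n - 1)) (hj : (j : ℕ) = (i : ℕ) + 1) :
      HARel p₁ n (aT i * aT j * aT i) (aT j * aT i * aT j)
  | Tcomm (i j : Fin (n - 1)) (h : (i : ℕ) + 1 < (j : ℕ) ∨ (j : ℕ) + 1 < (i : ℕ)) :
      HARel p₁ n (aT i * aT j) (aT j * aT i)
  | quad (i : Fin (n - 1)) :
      HARel p₁ n ((aT i - algebraMap ℂ _ p₁) * (aT i + algebraMap ℂ _ p₁⁻¹)) 0
  | TXT (k : Fin (n - 1)) (a b : Fin n) (ha : (a : ℕ) = (k : ℕ)) (hb : (b : ℕ) = (k : ℕ) + 1) :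
      HARel p₁ n (aT k * aX a * aT k) (aX b)
  | TXcomm (k : Fin (n - 1)) (a : Fin n) (h : (a : ℕ) ≠ (k : ℕ) ∧ (a : ℕ) ≠ (k : ℕ) + 1) :
      HARel p₁ n (aT k * aX a) (aX a * aT k)

/-- the affine Hecke algebra of type `A` of degree `n`. -/
abbrev HA (p₁ : ℂ) (n : ℕ) : Type := RingQuot (HARel p₁ n)

def TgA (p₁ : ℂ) {n : ℕ} (i : Fin (n - 1)) : HA p₁ n :=
  RingQuot.mkAlgHom ℂ (HARel p₁ n) (aT i)
def XgA (p₁ : ℂ) {n : ℕ} (i : Fin n) : HA p₁ n :=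
  RingQuot.mkAlgHom ℂ (HARel p₁ n) (aX i)
def XigA (p₁ : ℂ) {n : ℕ} (i : Fin n) : HA p₁ n :=
  RingQuot.mkAlgHom ℂ (HARel p₁ n) (aXi i)

/-- a finite-dimensional representation of `H^A_n`. -/
structure ARep (p₁ : ℂ) (n : ℕ) where
  carrier : Type
  [ag : AddCommGroup carrier]
  [mo : Module ℂ carrier]
  [fd : FiniteDimensional ℂ carrier]
  rho : HA p₁ n →ₐ[ℂ] Module.End ℂ carrier

attribute [instance] ARep.ag ARep.mo ARep.fd

/-- the representation is nonzero and has no proper invariant subspace. -/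
def IsIrredA {p₁ : ℂ} {n : ℕ} (M : ARep p₁ n) : Prop :=
  (∃ v : M.carrier, v ≠ 0) ∧
  ∀ W : Submodule ℂ M.carrier,
    (∀ x : HA p₁ n, ∀ w ∈ W, M.rho x w ∈ W) → W = ⊥ ∨ W = ⊤

/-- all eigenvalues of all the `X_i` belong to `S`. -/
def OfTypeA {p₁ : ℂ} {n : ℕ} (M : ARep p₁ n) (S : Set ℂ) : Prop :=
  ∀ (i : Fin n) (c : ℂ) (v : M.carrier), v ≠ 0 → M.rho (XgA p₁ i) v = c • v → c ∈ S

/-- `S` is invariant under the `ℤ`-action `a ↦ a p₁^{2k}`. -/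
def ZInv (p₁ : ℂ) (S : Set ℂ) : Prop :=
  ∀ a ∈ S, a * p₁ ^ 2 ∈ S ∧ a * (p₁ ^ 2)⁻¹ ∈ S

/-- `em` is the canonical embedding `H^A_m → H^A_{m+k}` (on the first factor),
`m + k = nn`. -/
def IsEmb1 (p₁ : ℂ) (m nn : ℕ) (em : HA p₁ m →ₐ[ℂ] HA p₁ nn) : Prop :=
  (∀ (i : Fin (m - 1)) (i' : Fin (nn - 1)), (i' : ℕ) = (i : ℕ) →
    em (TgA p₁ i) = TgA p₁ i') ∧
  (∀ (j : Fin m) (j' : Fin nn), (j' : ℕ) = (j : ℕ) → em (XgA p₁ j) = XgA p₁ j') ∧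
  (∀ (j : Fin m) (j' : Fin nn), (j' : ℕ) = (j : ℕ) → em (XigA p₁ j) = XigA p₁ j')

/-- `em` is the canonical embedding `H^A_k → H^A_{m+k}` (on the second factor,
shifting indices by `m`), `m + k = nn`. -/
def IsEmb2 (p₁ : ℂ) (m k nn : ℕ) (em : HA p₁ k →ₐ[ℂ] HA p₁ nn) : Prop :=
  (∀ (i : Fin (k - 1)) (i' : Fin (nn - 1)), (i' : ℕ) = m + (i : ℕ) →
    em (TgA p₁ i) = TgA p₁ i') ∧
  (∀ (j : Fin k) (j' : Fin nn), (j' : ℕ) = m + (j : ℕ) → em (XgA p₁ j) = XgA p₁ j') ∧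
  (∀ (j : Fin k) (j' : Fin nn), (j' : ℕ) = m + (j : ℕ) → em (XigA p₁ j) = XigA p₁ j')

/-- `V` is (a module isomorphic to) the induced module
`Ind_{H^A_m ⊗ H^A_k}^{H^A_{nn}} (M ⊗ N)`, characterized by its universal property. -/
def IsInducedA {p₁ : ℂ} {m k nn : ℕ}
    (em₁ : HA p₁ m →ₐ[ℂ] HA p₁ nn) (em₂ : HA p₁ k →ₐ[ℂ] HA p₁ nn)
    (M : ARep p₁ m) (N : ARep p₁ k) (V : ARep p₁ nn) : Prop :=
  ∃ φ : M.carrier →ₗ[ℂ] N.carrier →ₗ[ℂ] V.carrier,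
    (∀ (x : HA p₁ m) (u : M.carrier) (v : N.carrier),
      φ (M.rho x u) v = V.rho (em₁ x) (φ u v)) ∧
    (∀ (y : HA p₁ k) (u : M.carrier) (v : N.carrier),
      φ u (N.rho y v) = V.rho (em₂ y) (φ u v)) ∧
    (∀ W : Submodule ℂ V.carrier,
      (∀ z : HA p₁ nn, ∀ w ∈ W, V.rho z w ∈ W) →
      (∀ u v, φ u v ∈ W) → W = ⊤) ∧
    (∀ (Z : ARep p₁ nn) (ψ : M.carrier →ₗ[ℂ] N.carrier →ₗ[ℂ] Z.carrier),
      (∀ (x : HA p₁ m) (u : M.carrier) (v : N.carrier),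
        ψ (M.rho x u) v = Z.rho (em₁ x) (ψ u v)) →
      (∀ (y : HA p₁ k) (u : M.carrier) (v : N.carrier),
        ψ u (N.rho y v) = Z.rho (em₂ y) (ψ u v)) →
      ∃! g : V.carrier →ₗ[ℂ] Z.carrier,
        (∀ (z : HA p₁ nn) (w : V.carrier), g (V.rho z w) = Z.rho z (g w)) ∧
        ∀ u v, g (φ u v) = ψ u v)

section RingLemmas

variable {R : Type*} [Ring R] [Algebra ℂ R]

/-- the two exchange relations, commutation and quadratic relation -/
structure Exch (q : ℂ) (t a b : R) : Prop where
  ab : b * a = a * b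
  r1 : t * a = b * t + q • a - a * b
  r2 : t * b = a * t - q • a + a * b
  tt : t * t = q • t + 1

theorem Exch.flip {q : ℂ} {t a b : R} (H : Exch q t a b) :
    Exch q t (q • 1 - b) (q • 1 - a) := by
  obtain ⟨ab, r1, r2, tt⟩ := H
  refine ⟨?_, ?_, ?_, tt⟩ <;>
  · simp only [mul_sub, sub_mul, smul_mul_assoc, mul_smul_comm, mul_one, one_mul, r1, r2, ab,
      smul_sub, smul_add]
    module

theorem Exch.tD {q : ℂ} {t a b : R} (H : Exch q t a b) :
    t * ((1 + b * (q • 1 - b)) * (1 + a * (q • 1 - a)))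
      = ((1 + b * (q • 1 - b)) * (1 + a * (q • 1 - a))) * t := by
  obtain ⟨ab, r1, r2, tt⟩ := H
  have r1' : ∀ z, t * (a * z) = b * (t * z) + q • (a * z) - a * (b * z) := fun z => by
    rw [← mul_assoc, r1]; simp only [mul_assoc, add_mul, sub_mul, smul_mul_assoc]
  have r2' : ∀ z, t * (b * z) = a * (t * z) - q • (a * z) + a * (b * z) := fun z => by
    rw [← mul_assoc, r2]; simp only [mul_assoc, add_mul, sub_mul, smul_mul_assoc]
  have ab' : ∀ z, b * (a * z) = a * (b * z) := fun z => by
    rw [← mul_assoc, ab, mul_assoc]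
  simp only [mul_sub, sub_mul, mul_add, add_mul, smul_mul_assoc, mul_smul_comm, mul_one, one_mul,
    r1, r2, ab, r1', r2', ab', mul_assoc, smul_sub, smul_add]
  module

/-- everything needed for the `3 × 3` braid relation -/
structure BraidData (q : ℂ) (t a b g g' h h' : R) : Prop where
  ex : Exch q t a b
  ga : g * a = a * g
  gb : g * b = b * g
  ga' : g' * a = a * g'
  gb' : g' * b = b * g'
  ha : h * a = a * h
  hb : h * b = b * h
  ha' : h' * a = a * h'
  hb' : h' * b = b * h'
  hg : h * g = g * h
  hg' : h' * g' = g' * h'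
  gg : g * g' = 1 + a * (q • 1 - a)
  gg' : g' * g = 1 + a * (q • 1 - a)
  hh : h * h' = 1 + b * (q • 1 - b)
  hh' : h' * h = 1 + b * (q • 1 - b)
  tG : t * (h * g) = (h * g) * t
  tG' : t * (h' * g') = (h' * g') * t
  ug : IsUnit g
  uh : IsUnit h
  uh' : IsUnit h'

variable {q : ℂ} {t a b g g' h h' : R}

theorem BraidData.c11 (H : BraidData q t a b g g' h h') : t * b * t = b * t * b + h * a * h' := by
  obtain ⟨⟨ab, r1, r2, tt⟩, ga, gb, ga', gb', ha, hb, ha', hb', hg, hg', gg, gg', hh, hh',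
    tG, tG', ug, uh, uh'⟩ := H
  rw [ha, mul_assoc a, hh]
  have ab' : ∀ z, b * (a * z) = a * (b * z) := fun z => by
    rw [← mul_assoc, ab, mul_assoc]
  simp only [mul_sub, sub_mul, mul_add, add_mul, smul_mul_assoc, mul_smul_comm, mul_one, one_mul,
    r1, r2, ab, ab', mul_assoc, smul_sub, smul_add, tt]
  module

theorem BraidData.c12 (H : BraidData q t a b g g' h h') : t * h * a = b * t * h + h * a * (q • 1 - b) := by
  obtain ⟨⟨ab, r1, r2, tt⟩, ga, gb, ga', gb', ha, hb, ha', hb', hg, hg', gg, gg', hh, hh',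
    tG, tG', ug, uh, uh'⟩ := H
  apply ug.mul_right_cancel
  have e1 : t * h * a * g = h * g * (t * a) := by
    rw [mul_assoc (t * h), ← ga, ← mul_assoc, mul_assoc t, tG, mul_assoc]
  have e2 : b * t * h * g = h * g * (b * t) := by
    calc b * t * h * g = b * (t * (h * g)) := by simp only [mul_assoc]
      _ = (b * h) * g * t := by rw [tG]; simp only [mul_assoc]
      _ = h * (b * g) * t := by rw [← hb]; simp only [mul_assoc]
      _ = _ := by rw [← gb]; simp only [mul_assoc]
  have e3 : h * a * (q • 1 - b) * g = h * g * (a * (q • 1 - b)) := by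
    simp only [mul_sub, sub_mul, mul_smul_comm, smul_mul_assoc, mul_one, one_mul]
    congr 1
    · rw [mul_assoc h, ← ga]; simp only [mul_assoc]
    · calc h * a * b * g = h * a * (b * g) := by simp only [mul_assoc]
        _ = h * (a * g) * b := by rw [← gb]; simp only [mul_assoc]
        _ = _ := by rw [← ga]; simp only [mul_assoc]
  rw [add_mul, e1, e2, e3, ← mul_add]
  congr 1
  rw [r1, mul_sub, mul_smul_comm, mul_one]; abel

theorem BraidData.c13 (H : BraidData q t a b g g' h h') : t * h * g = h * g * t := by
  rw [mul_assoc, H.tG]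

theorem BraidData.c21 (H : BraidData q t a b g g' h h') : a * h' * t = (q • 1 - b) * a * h' + h' * t * b := by
  obtain ⟨⟨ab, r1, r2, tt⟩, ga, gb, ga', gb', ha, hb, ha', hb', hg, hg', gg, gg', hh, hh',
    tG, tG', ug, uh, uh'⟩ := H
  have hb'' : ∀ z, h' * (b * z) = b * (h' * z) := fun z => by
    rw [← mul_assoc, hb', mul_assoc]
  have ha'' : ∀ z, h' * (a * z) = a * (h' * z) := fun z => by
    rw [← mul_assoc, ha', mul_assoc]
  have ab' : ∀ z, b * (a * z) = a * (b * z) := fun z => by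
    rw [← mul_assoc, ab, mul_assoc]
  simp only [mul_sub, sub_mul, mul_add, add_mul, smul_mul_assoc, mul_smul_comm, mul_one, one_mul,
    r1, r2, ab, ab', mul_assoc, smul_sub, smul_add, tt, hb'', ha'', hb', ha']
  module

theorem BraidData.c22 (H : BraidData q t a b g g' h h') : a * (q • 1 - b) * a + g * t * g'
    = (q • 1 - b) * a * (q • 1 - b) + h' * t * h := by
  obtain ⟨⟨ab, r1, r2, tt⟩, ga, gb, ga', gb', ha, hb, ha', hb', hg, hg', gg, gg', hh, hh',
    tG, tG', ug, uh, uh'⟩ := H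
  apply uh.mul_left_cancel
  have e1 : h * (g * t * g') = t * (1 + a * (q • 1 - a)) * h := by
    calc h * (g * t * g') = (h * g) * t * g' := by simp only [mul_assoc]
      _ = t * h * (g * g') := by rw [← tG]; simp only [mul_assoc]
      _ = t * (h * (1 + a * (q • 1 - a))) := by rw [gg]; simp only [mul_assoc]
      _ = _ := by
        rw [mul_assoc]; congr 1
        have ha'' : ∀ z, h * (a * z) = a * (h * z) := fun z => by
          rw [← mul_assoc, ha, mul_assoc]
        simp only [mul_sub, sub_mul, mul_add, add_mul, smul_mul_assoc, mul_smul_comm, mul_one,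
          one_mul, mul_assoc, ha'', ha]
  have e2 : h * (h' * t * h) = (1 + b * (q • 1 - b)) * t * h := by
    rw [← hh]; simp only [mul_assoc]
  have e3 : ∀ z : R, h * z = z * h → h * z = z * h := fun z hz => hz
  have ha'' : ∀ z, h * (a * z) = a * (h * z) := fun z => by
    rw [← mul_assoc, ha, mul_assoc]
  have hb'' : ∀ z, h * (b * z) = b * (h * z) := fun z => by
    rw [← mul_assoc, hb, mul_assoc]
  have ab' : ∀ z, b * (a * z) = a * (b * z) := fun z => by
    rw [← mul_assoc, ab, mul_assoc]
  have r1' : ∀ z, t * (a * z) = b * (t * z) + q • (a * z) - a * (b * z) := fun z => by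
    rw [← mul_assoc, r1]; simp only [mul_assoc, add_mul, sub_mul, smul_mul_assoc]
  rw [mul_add, mul_add, e1, e2]
  simp only [mul_sub, sub_mul, mul_add, add_mul, smul_mul_assoc, mul_smul_comm, mul_one, one_mul,
    r1, r2, ab, ab', mul_assoc, smul_sub, smul_add, tt, hb'', ha'', hb, ha, r1']
  module

theorem BraidData.c23 (H : BraidData q t a b g g' h h') : a * (q • 1 - b) * g + g * t * (q • 1 - a) = (q • 1 - b) * g * t := by
  obtain ⟨⟨ab, r1, r2, tt⟩, ga, gb, ga', gb', ha, hb, ha', hb', hg, hg', gg, gg', hh, hh',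
    tG, tG', ug, uh, uh'⟩ := H
  have ha'' : ∀ z, g * (a * z) = a * (g * z) := fun z => by
    rw [← mul_assoc, ga, mul_assoc]
  have hb'' : ∀ z, g * (b * z) = b * (g * z) := fun z => by
    rw [← mul_assoc, gb, mul_assoc]
  simp only [mul_sub, sub_mul, mul_add, add_mul, smul_mul_assoc, mul_smul_comm, mul_one, one_mul,
    r1, r2, ab, mul_assoc, smul_sub, smul_add, tt, hb'', ha'', ga, gb]
  module

theorem BraidData.c31 (H : BraidData q t a b g g' h h') : g' * h' * t = t * g' * h' := by
  rw [mul_assoc t, ← H.hg', H.tG']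

theorem BraidData.c32 (H : BraidData q t a b g g' h h') : (q • 1 - a) * t * g' + g' * (q • 1 - b) * a = t * g' * (q • 1 - b) := by
  obtain ⟨⟨ab, r1, r2, tt⟩, ga, gb, ga', gb', ha, hb, ha', hb', hg, hg', gg, gg', hh, hh',
    tG, tG', ug, uh, uh'⟩ := H
  apply uh'.mul_right_cancel
  have e1 : t * (g' * h') = h' * (g' * t) := by
    rw [← hg', tG', mul_assoc]
  have e2 : ∀ z, t * (g' * (h' * z)) = h' * (g' * (t * z)) := fun z => by
    have := congrArg (· * z) e1
    simpa only [mul_assoc] using this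
  have a1 : a * h' = h' * a := ha'.symm
  have a2 : ∀ z, a * (h' * z) = h' * (a * z) := fun z => by
    rw [← mul_assoc, a1, mul_assoc]
  have b1 : b * h' = h' * b := hb'.symm
  have b2 : ∀ z, b * (h' * z) = h' * (b * z) := fun z => by
    rw [← mul_assoc, b1, mul_assoc]
  have a3 : ∀ z, a * (g' * z) = g' * (a * z) := fun z => by
    rw [← mul_assoc, ← ga', mul_assoc]
  have a4 : g' * h' = h' * g' := hg'.symm
  have a5 : ∀ z, g' * (h' * z) = h' * (g' * z) := fun z => by
    rw [← mul_assoc, a4, mul_assoc]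
  simp only [mul_sub, sub_mul, mul_add, add_mul, smul_mul_assoc, mul_smul_comm, mul_one, one_mul,
    mul_assoc, smul_sub, smul_add, a1, a2, b1, b2, a3, e1, e2]
  simp only [a4, a5, r1, r2, ab, mul_sub, mul_add, mul_smul_comm]
  module

theorem BraidData.c33 (H : BraidData q t a b g g' h h') : (q • 1 - a) * t * (q • 1 - a) + g' * (q • 1 - b) * g
    = t * (q • 1 - a) * t := by
  obtain ⟨⟨ab, r1, r2, tt⟩, ga, gb, ga', gb', ha, hb, ha', hb', hg, hg', gg, gg', hh, hh',
    tG, tG', ug, uh, uh'⟩ := H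
  have e : g' * (q • 1 - b) * g = (q • 1 - b) * (1 + a * (q • 1 - a)) := by
    rw [← gg', ← mul_assoc]; congr 1
    rw [mul_sub, sub_mul, gb', mul_smul_comm, smul_mul_assoc, mul_one, one_mul]
  have ab' : ∀ z, b * (a * z) = a * (b * z) := fun z => by
    rw [← mul_assoc, ab, mul_assoc]
  have r1' : ∀ z, t * (a * z) = b * (t * z) + q • (a * z) - a * (b * z) := fun z => by
    rw [← mul_assoc, r1]; simp only [mul_assoc, add_mul, sub_mul, smul_mul_assoc]
  rw [e]
  simp only [mul_sub, sub_mul, mul_add, add_mul, smul_mul_assoc, mul_smul_comm, mul_one, one_mul,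
    r1, r2, ab, ab', mul_assoc, smul_sub, smul_add, tt, r1']
  module

end RingLemmas

abbrev Lab := Bool × ℕ

def lsucc (l : Lab) : Lab := (l.1, l.2 + 1)

def LVal (sz : Bool → ℕ) (l : Lab) : Prop := l.2 < sz l.1

/-- commuting pair of Hecke actions with disjoint spectra. -/
structure LS (q : ℂ) (sz : Bool → ℕ) (R : Type*) [Ring R] [Algebra ℂ R] where
  x : Lab → R
  t : Lab → R
  xx : ∀ l l', LVal sz l → LVal sz l' → Commute (x l) (x l')
  xu : ∀ l, LVal sz l → IsUnit (x l)
  braid : ∀ l, LVal sz (lsucc (lsucc l)) →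
    t l * t (lsucc l) * t l = t (lsucc l) * t l * t (lsucc l)
  tcomm : ∀ l l', LVal sz (lsucc l) → LVal sz (lsucc l') →
    l ≠ l' → lsucc l ≠ l' → l ≠ lsucc l' → Commute (t l) (t l')
  quad : ∀ l, LVal sz (lsucc l) → t l * t l = q • t l + 1
  txt : ∀ l, LVal sz (lsucc l) → t l * x l * t l = x (lsucc l)
  txc : ∀ l l', LVal sz (lsucc l) → LVal sz l' → l' ≠ l → l' ≠ lsucc l →
    Commute (t l) (x l')
  ud : ∀ l l', LVal sz l → LVal sz l' → l.1 ≠ l'.1 → IsUnit (x l' - x l)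
  ue : ∀ l l', LVal sz l → LVal sz l' → l.1 ≠ l'.1 →
    IsUnit ((x l' - x l) * (x l' - x l) - (q * q) • (x l * x l'))

theorem LVal_of_succ {sz : Bool → ℕ} {l : Lab} (h : LVal sz (lsucc l)) : LVal sz l := by
  unfold LVal lsucc at *; simp at h; omega

namespace LS

variable {q : ℂ} {sz : Bool → ℕ} {R : Type*} [Ring R] [Algebra ℂ R] (S : LS q sz R)

def A (l l' : Lab) : R := q • (S.x l' * Ring.inverse (S.x l' - S.x l))

def G (l l' : Lab) : R := if l.1 = true then 1 + S.A l l' * (q • 1 - S.A l l') else 1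

theorem commute_inverse {d y : R} (hd : IsUnit d) (h : Commute y d) :
    Commute y (Ring.inverse d) := by
  obtain ⟨u, rfl⟩ := hd
  rw [Ring.inverse_unit]
  exact h.units_inv_right

theorem A_comm {l l' : Lab} (hl : LVal sz l) (hl' : LVal sz l') (hm : l.1 ≠ l'.1) {y : R}
    (h1 : Commute y (S.x l)) (h2 : Commute y (S.x l')) : Commute y (S.A l l') :=
  ((h2.mul_right (commute_inverse (S.ud l l' hl hl' hm) (h2.sub_right h1)))).smul_right q

theorem G_comm {l l' : Lab} {y : R} (h : Commute y (S.A l l')) : Commute y (S.G l l') := by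
  unfold G
  split_ifs
  · exact (Commute.one_right y).add_right
      (h.mul_right (((Commute.one_right y).smul_right q).sub_right h))
  · exact Commute.one_right y

theorem A_mul {l l' : Lab} (hl : LVal sz l) (hl' : LVal sz l') (hm : l.1 ≠ l'.1) :
    S.A l l' * (S.x l' - S.x l) = q • S.x l' := by
  unfold A
  rw [smul_mul_assoc, mul_assoc, Ring.inverse_mul_cancel _ (S.ud l l' hl hl' hm), mul_one]

theorem A_sum {l l' : Lab} (hl : LVal sz l) (hl' : LVal sz l') (hm : l.1 ≠ l'.1) :
    S.A l' l = q • 1 - S.A l l' := by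
  apply (S.ud l l' hl hl' hm).mul_right_cancel
  have h1 := S.A_mul hl hl' hm
  have h2 := S.A_mul hl' hl (Ne.symm hm)
  rw [sub_mul, h1, smul_mul_assoc, one_mul, ← neg_sub (S.x l) (S.x l'), mul_neg, h2, smul_neg,
    smul_sub]
  abel

theorem x_A {l l' l'' : Lab} (hl : LVal sz l) (hl' : LVal sz l') (hm : l.1 ≠ l'.1)
    (h : LVal sz l'') : Commute (S.x l'') (S.A l l') :=
  S.A_comm hl hl' hm (S.xx _ _ h hl) (S.xx _ _ h hl')

theorem A_A {l l' l1 l2 : Lab} (hl : LVal sz l) (hl' : LVal sz l') (hm : l.1 ≠ l'.1)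
    (h1 : LVal sz l1) (h2 : LVal sz l2) (hm2 : l1.1 ≠ l2.1) : Commute (S.A l1 l2) (S.A l l') :=
  S.A_comm hl hl' hm (S.x_A h1 h2 hm2 hl).symm (S.x_A h1 h2 hm2 hl').symm

theorem G_A {l l' l1 l2 : Lab} (hl : LVal sz l) (hl' : LVal sz l') (hm : l.1 ≠ l'.1)
    (h1 : LVal sz l1) (h2 : LVal sz l2) (hm2 : l1.1 ≠ l2.1) : Commute (S.G l1 l2) (S.A l l') :=
  (S.G_comm (S.A_A h1 h2 hm2 hl hl' hm)).symm

theorem G_G {l l' l1 l2 : Lab} (hl : LVal sz l) (hl' : LVal sz l') (hm : l.1 ≠ l'.1)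
    (h1 : LVal sz l1) (h2 : LVal sz l2) (hm2 : l1.1 ≠ l2.1) : Commute (S.G l1 l2) (S.G l l') :=
  S.G_comm (S.G_A hl hl' hm h1 h2 hm2)

theorem t_A {l l' l'' : Lab} (hl : LVal sz l) (hl' : LVal sz l') (hm : l.1 ≠ l'.1)
    (h : LVal sz (lsucc l'')) (n1 : l ≠ l'') (n2 : l ≠ lsucc l'') (n3 : l' ≠ l'')
    (n4 : l' ≠ lsucc l'') : Commute (S.t l'') (S.A l l') :=
  S.A_comm hl hl' hm (S.txc _ _ h hl n1 n2) (S.txc _ _ h hl' n3 n4)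

theorem G_mul {l l' : Lab} (hl : LVal sz l) (hl' : LVal sz l') (hm : l.1 ≠ l'.1) :
    S.G l l' * S.G l' l = 1 + S.A l l' * (q • 1 - S.A l l') := by
  unfold G
  rcases l with ⟨_ | _, r⟩ <;> rcases l' with ⟨_ | _, r'⟩
  · simp at hm
  · rw [S.A_sum hl hl' hm]; simp
    simp only [mul_sub, sub_mul, smul_mul_assoc, mul_smul_comm, one_mul, mul_one]
  · simp
  · simp at hm

theorem one_add_A_unit {l l' : Lab} (hl : LVal sz l) (hl' : LVal sz l') (hm : l.1 ≠ l'.1) :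
    IsUnit (1 + S.A l l' * (q • 1 - S.A l l')) := by
  have hd := S.ud l l' hl hl' hm
  have he := S.ue l l' hl hl' hm
  have h1 := S.A_mul hl hl' hm
  have h2 : (q • 1 - S.A l l') * (S.x l' - S.x l) = - (q • S.x l) := by
    rw [sub_mul, h1, smul_mul_assoc, one_mul, smul_sub]; abel
  set d := S.x l' - S.x l with hdd
  have hc : Commute d (S.A l l') := by
    have := (S.x_A hl hl' hm hl').sub_left (S.x_A hl hl' hm hl)
    exact this
  have key : (1 + S.A l l' * (q • 1 - S.A l l')) * (d * d)
      = (d * d) - (q * q) • (S.x l * S.x l') := by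
    have : S.A l l' * (q • 1 - S.A l l') * (d * d)
        = (S.A l l' * d) * ((q • 1 - S.A l l') * d) := by
      have e : (q • 1 - S.A l l') * d = d * (q • 1 - S.A l l') := by
        rw [sub_mul (q • (1 : R)) (S.A l l') d, mul_sub d (q • (1 : R)) (S.A l l'), hc.eq,
          smul_mul_assoc, mul_smul_comm, one_mul, mul_one]
      calc S.A l l' * (q • 1 - S.A l l') * (d * d)
          = S.A l l' * ((q • 1 - S.A l l') * d) * d := by simp only [mul_assoc]
        _ = (S.A l l' * d) * ((q • 1 - S.A l l') * d) := by rw [e, ← mul_assoc, mul_assoc (S.A l l' * d), e]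
    rw [add_mul, one_mul, this, h1, h2, (S.xx l l' hl hl').eq, mul_neg, smul_mul_assoc,
      mul_smul_comm, smul_smul]
    abel
  have hdd : IsUnit (d * d) := hd.mul hd
  obtain ⟨u, hu⟩ := hdd
  have : 1 + S.A l l' * (q • 1 - S.A l l')
     = ((d * d) - (q * q) • (S.x l * S.x l')) * ↑u⁻¹ := by
    rw [← key, ← hu, mul_assoc, Units.mul_inv, mul_one]
  rw [this]
  exact he.mul (Units.isUnit _)

theorem G_unit {l l' : Lab} (hl : LVal sz l) (hl' : LVal sz l') (hm : l.1 ≠ l'.1) :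
    IsUnit (S.G l l') := by
  unfold G
  split_ifs
  · exact S.one_add_A_unit hl hl' hm
  · exact isUnit_one

theorem ne_of_color {l l' : Lab} (h : l.1 ≠ l'.1) : l ≠ l' := fun e => h (by rw [e])

theorem exch {l w : Lab} (hl : LVal sz (lsucc l)) (hw : LVal sz w) (hm : l.1 ≠ w.1) :
    Exch q (S.t l) (S.A l w) (S.A (lsucc l) w) := by
  have hl0 := LVal_of_succ hl
  have hm' : (lsucc l).1 ≠ w.1 := hm
  have tt := S.quad l hl
  have txt := S.txt l hl
  have tw : Commute (S.t l) (S.x w) :=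
    S.txc l w hl hw (ne_of_color hm).symm (ne_of_color hm').symm
  have hA : S.A (lsucc l) w * S.A l w = S.A l w * S.A (lsucc l) w :=
    (S.A_A hl0 hw hm hl hw hm').eq
  have uv : S.x (lsucc l) * S.x l = S.x l * S.x (lsucc l) := (S.xx _ _ hl hl0).eq
  have uw : S.x w * S.x l = S.x l * S.x w := (S.xx _ _ hw hl0).eq
  have vw : S.x w * S.x (lsucc l) = S.x (lsucc l) * S.x w := (S.xx _ _ hw hl).eq
  have cu : S.x l * S.A l w = S.A l w * S.x l := (S.x_A hl0 hw hm hl0).eq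
  have cv : S.x (lsucc l) * S.A l w = S.A l w * S.x (lsucc l) := (S.x_A hl0 hw hm hl).eq
  have cw : S.x w * S.A l w = S.A l w * S.x w := (S.x_A hl0 hw hm hw).eq
  have du : S.x l * S.A (lsucc l) w = S.A (lsucc l) w * S.x l := (S.x_A hl hw hm' hl0).eq
  have dv : S.x (lsucc l) * S.A (lsucc l) w = S.A (lsucc l) w * S.x (lsucc l) :=
    (S.x_A hl hw hm' hl).eq
  have dw : S.x w * S.A (lsucc l) w = S.A (lsucc l) w * S.x w := (S.x_A hl hw hm' hw).eq
  have ha := S.A_mul hl0 hw hm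
  have hb := S.A_mul hl hw hm'
  have hua := S.ud l w hl0 hw hm
  have hub := S.ud (lsucc l) w hl hw hm'
  have tw := tw.eq
  generalize S.A l w = a at *
  generalize S.A (lsucc l) w = b at *
  generalize S.x (lsucc l) = v at *
  generalize S.x l = u at *
  generalize S.x w = w at *
  generalize S.t l = t at *
  have tu : t * u = v * t - q • v := by
    have h := congrArg (· * t) txt
    simp only [mul_assoc, tt, mul_add, mul_smul_comm, mul_one] at h
    have h2 : t * (u * t) = v := by rw [← mul_assoc]; exact txt
    rw [h2] at h
    rw [← h]; abel
  have tv : t * v = u * t + q • v := by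
    have h := congrArg (t * ·) txt
    simp only [← mul_assoc, tt, add_mul, smul_mul_assoc, one_mul] at h
    rw [txt] at h
    rw [← h]; abel
  have ha1 : a * w = a * u + q • w := by
    rw [mul_sub] at ha; rw [← ha]; abel
  have hb1 : b * w = b * v + q • w := by
    rw [mul_sub] at hb; rw [← hb]; abel
  -- `t a = b t + q a - a b`, cancel `w - v` on the left and `w - u` on the right
  refine ⟨hA, ?_, ?_, tt⟩
  · apply hub.mul_left_cancel
    apply hua.mul_right_cancel
    have L : (w - v) * (t * a) * (w - u) = (w - v) * (q • (w * t)) := by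
      rw [mul_assoc, mul_assoc t, ha, mul_smul_comm, tw]
    have e1 : (w - v) * (b * t) = q • (w * t) := by
      have : (w - v) * b = q • w := by rw [sub_mul, dw, dv, ← hb, mul_sub]
      rw [← mul_assoc, this, smul_mul_assoc]
    have e2 : (w - v) * (a * b) = q • (a * w) := by
      have : (w - v) * b = q • w := by rw [sub_mul, dw, dv, ← hb, mul_sub]
      rw [← hA, ← mul_assoc, this, smul_mul_assoc, cw]
    have e3 : a * w * (w - u) = q • (w * w) := by
      have : w * (w - u) = (w - u) * w := by rw [mul_sub, sub_mul, uw]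
      rw [mul_assoc, this, ← mul_assoc, ha, smul_mul_assoc]
    rw [L, mul_sub (w - v) (b * t + q • a) (a * b), mul_add (w - v) (b * t), e1, e2, sub_mul (q • (w * t) + (w - v) * q • a),
      add_mul (q • (w * t)), smul_mul_assoc q (a * w), e3,
      mul_assoc _ (q • a), smul_mul_assoc q a, ha]
    have twu : w * t * (w - u) = (w - v) * (w * t) + q • (v * w) := by
      rw [mul_assoc, mul_sub, tu, tw, sub_mul, mul_sub, mul_sub, mul_smul_comm, vw]
      have : w * (v * t) = v * (w * t) := by rw [← mul_assoc, vw, mul_assoc]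
      rw [this]; abel
    rw [smul_mul_assoc, twu]
    simp only [mul_smul_comm, sub_mul, smul_sub, smul_add]
    abel
  · apply hua.mul_left_cancel
    apply hub.mul_right_cancel
    have L : (w - u) * (t * b) * (w - v) = (w - u) * (q • (w * t)) := by
      rw [mul_assoc, mul_assoc t, hb, mul_smul_comm, tw]
    have e0 : (w - u) * a = q • w := by rw [sub_mul, cw, cu, ← ha, mul_sub]
    have e1 : (w - u) * (a * t) = q • (w * t) := by
      rw [← mul_assoc, e0, smul_mul_assoc]
    have e2 : (w - u) * (a * b) * (w - v) = (q * q) • (w * w) := by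
      rw [← mul_assoc, e0, mul_assoc, hb, smul_mul_assoc, mul_smul_comm, smul_smul]
    rw [L, mul_add (w - u) (a * t - q • a), mul_sub (w - u) (a * t) (q • a), e1,
      mul_smul_comm q (w - u) a, e0, add_mul _ _ (w - v), e2, sub_mul _ _ (w - v)]
    have twu : w * t * (w - v) = (w - u) * (w * t) - q • (w * v) := by
      rw [mul_assoc, mul_sub, tv, tw, sub_mul, mul_sub, mul_add, mul_smul_comm]
      have : w * (u * t) = u * (w * t) := by rw [← mul_assoc, uw, mul_assoc]
      rw [this]; abel
    rw [smul_mul_assoc, twu]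
    simp only [mul_smul_comm, smul_mul_assoc, sub_mul, mul_sub, smul_sub, smul_add]
    module

theorem braidData {l w : Lab} (hl : LVal sz (lsucc l)) (hw : LVal sz w) (hm : l.1 ≠ w.1) :
    BraidData q (S.t l) (S.A l w) (S.A (lsucc l) w) (S.G l w) (S.G w l)
      (S.G (lsucc l) w) (S.G w (lsucc l)) := by
  have hl0 := LVal_of_succ hl
  have hm' : (lsucc l).1 ≠ w.1 := hm
  have ex := S.exch hl hw hm
  have gg : S.G w l * S.G l w = 1 + S.A l w * (q • 1 - S.A l w) := by
    rw [(S.G_G hl0 hw hm hw hl0 hm.symm).eq, S.G_mul hl0 hw hm]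
  have hh : S.G w (lsucc l) * S.G (lsucc l) w
      = 1 + S.A (lsucc l) w * (q • 1 - S.A (lsucc l) w) := by
    rw [(S.G_G hl hw hm' hw hl hm'.symm).eq, S.G_mul hl hw hm']
  refine ⟨ex, ?_, ?_, ?_, ?_, ?_, ?_, ?_, ?_, ?_, ?_, S.G_mul hl0 hw hm, gg, S.G_mul hl hw hm', hh,
    ?_, ?_, S.G_unit hl0 hw hm, S.G_unit hl hw hm', S.G_unit hw hl hm'.symm⟩
  · exact S.G_A hl0 hw hm hl0 hw hm
  · exact S.G_A hl hw hm' hl0 hw hm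
  · exact S.G_A hl0 hw hm hw hl0 hm.symm
  · exact S.G_A hl hw hm' hw hl0 hm.symm
  · exact S.G_A hl0 hw hm hl hw hm'
  · exact S.G_A hl hw hm' hl hw hm'
  · exact S.G_A hl0 hw hm hw hl hm'.symm
  · exact S.G_A hl hw hm' hw hl hm'.symm
  · exact S.G_G hl0 hw hm hl hw hm'
  · exact S.G_G hw hl0 hm.symm hw hl hm'.symm
  · unfold G
    have : (lsucc l).1 = l.1 := rfl
    rw [this]
    split_ifs
    · exact ex.tD
    · simp
  · unfold G
    split_ifs
    · have := ex.flip.tD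
      rw [← S.A_sum hl0 hw hm, ← S.A_sum hl hw hm'] at this
      suffices hs : (1 + S.A w (lsucc l) * (q • 1 - S.A w (lsucc l))) * (1 + S.A w l * (q • 1 - S.A w l))
          = (1 + S.A w l * (q • 1 - S.A w l)) * (1 + S.A w (lsucc l) * (q • 1 - S.A w (lsucc l))) by
        rw [hs, this]
      have hc := S.A_A hw hl0 hm.symm hw hl hm'.symm
      have h1 : Commute (S.A w (lsucc l)) (1 + S.A w l * (q • 1 - S.A w l)) :=
        (Commute.one_right _).add_right (hc.mul_right
          (((Commute.one_right _).smul_right q).sub_right hc))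
      have h2 := ((Commute.one_right _).add_right (h1.symm.mul_right
          (((Commute.one_right _).smul_right q).sub_right h1.symm)))
      exact h2.symm.eq
    · simp

end LS

/-- colorings of `n` positions with `m` positions colored `true` -/
abbrev Idx (n m : ℕ) : Type := {S : Finset ℕ // S ∈ Finset.powersetCard m (Finset.range n)}


namespace Idx

variable {n m : ℕ}

theorem sub (c : Idx n m) {i : ℕ} (h : i ∈ c.1) : i < n := by
  have := (Finset.mem_powersetCard.1 c.2).1 h
  simpa using this

theorem card (c : Idx n m) : c.1.card = m := (Finset.mem_powersetCard.1 c.2).2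

def lab (c : Idx n m) (i : ℕ) : Lab :=
  if i ∈ c.1 then (true, Nat.count (· ∈ c.1) i) else (false, Nat.count (· ∉ c.1) i)

theorem color (c : Idx n m) (i : ℕ) : (c.lab i).1 = decide (i ∈ c.1) := by
  unfold lab; split_ifs with h <;> simp [h]

def sw (i : ℕ) (c : Idx n m) : Idx n m :=
  if h : i + 1 < n then ⟨c.1.map (Equiv.swap i (i + 1)).toEmbedding, by
    rw [Finset.mem_powersetCard]
    refine ⟨?_, by rw [Finset.card_map]; exact c.card⟩
    intro j hj
    simp only [Finset.mem_map, Equiv.coe_toEmbedding] at hj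
    obtain ⟨a, ha, rfl⟩ := hj
    have := c.sub ha
    simp only [Finset.mem_range]
    rw [Equiv.swap_apply_def]
    split_ifs <;> omega⟩ else c

theorem mem_sw {i : ℕ} (h : i + 1 < n) (c : Idx n m) (j : ℕ) :
    j ∈ (sw i c).1 ↔ Equiv.swap i (i + 1) j ∈ c.1 := by
  unfold sw
  rw [dif_pos h]
  simp only [Finset.mem_map, Equiv.coe_toEmbedding]
  constructor
  · rintro ⟨a, ha, rfl⟩; simpa using ha
  · intro hj; exact ⟨_, hj, by simp⟩

theorem ext' {c c' : Idx n m} (h : ∀ i < n, (c.lab i).1 = (c'.lab i).1) : c = c' := by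
  apply Subtype.ext
  ext i
  by_cases hi : i < n
  · have := h i hi
    simpa [color] using this
  · exact ⟨fun h => absurd (c.sub h) hi, fun h => absurd (c'.sub h) hi⟩

theorem lab_succ (c : Idx n m) {i : ℕ} (h : (c.lab i).1 = (c.lab (i + 1)).1) :
    c.lab (i + 1) = lsucc (c.lab i) := by
  simp only [color, decide_eq_decide] at h
  unfold lab lsucc
  by_cases hi : i ∈ c.1
  · have h2 := h.1 hi
    simp [hi, h2, Nat.count_succ]
  · have h2 : i + 1 ∉ c.1 := fun h' => hi (h.2 h')
    simp [hi, h2, Nat.count_succ]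

theorem color_sw {i : ℕ} (h : i + 1 < n) (c : Idx n m) (j : ℕ) :
    ((sw i c).lab j).1 = (c.lab (Equiv.swap i (i + 1) j)).1 := by
  rw [color, color, decide_eq_decide, mem_sw h]

theorem sw_same {i : ℕ} (h : i + 1 < n) (c : Idx n m) (hs : (c.lab i).1 = (c.lab (i + 1)).1) :
    sw i c = c := by
  apply ext'
  intro j hj
  rw [color_sw h, Equiv.swap_apply_def]
  split_ifs with h1 h2
  · rw [h1, hs]
  · rw [h2, hs]
  · rfl

theorem sw_sw {i : ℕ} (h : i + 1 < n) (c : Idx n m) : sw i (sw i c) = c := by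
  apply ext'
  intro j hj
  rw [color_sw h, color_sw h, Equiv.swap_apply_self]

theorem sw_comm {i j : ℕ} (hi : i + 1 < n) (hj : j + 1 < n) (hij : i + 1 < j ∨ j + 1 < i)
    (c : Idx n m) : sw i (sw j c) = sw j (sw i c) := by
  apply ext'
  intro a ha
  rw [color_sw hi, color_sw hj, color_sw hj, color_sw hi]
  congr 2
  simp only [Equiv.swap_apply_def]
  split_ifs <;> omega

theorem count_eq {p p' : ℕ → Prop} [DecidablePred p] [DecidablePred p'] (i : ℕ)
    (h : ∀ j < i, p j ↔ p' j) : Nat.count p i = Nat.count p' i := by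
  induction i with
  | zero => simp
  | succ i ih =>
    rw [Nat.count_succ, Nat.count_succ, ih (fun j hj => h j (by omega))]
    have := h i (by omega)
    simp [this]

theorem count_swap {p p' : ℕ → Prop} [DecidablePred p] [DecidablePred p'] (i j : ℕ)
    (h : ∀ j, p' j ↔ p (Equiv.swap i (i + 1) j)) (hj : j ≠ i + 1) :
    Nat.count p' j = Nat.count p j := by
  rcases lt_or_gt_of_ne hj with hj | hj
  · apply count_eq
    intro a ha
    rw [h, Equiv.swap_apply_of_ne_of_ne (by omega) (by omega)]
  · obtain ⟨d, rfl⟩ : ∃ d, j = i + 2 + d := ⟨j - (i + 2), by omega⟩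
    clear hj


    induction d with
    | zero =>
      have e : Nat.count p' i = Nat.count p i := by
        apply count_eq
        intro a ha
        rw [h, Equiv.swap_apply_of_ne_of_ne (by omega) (by omega)]
      have h1 : p' i ↔ p (i + 1) := by rw [h, Equiv.swap_apply_left]
      have h2 : p' (i + 1) ↔ p i := by rw [h, Equiv.swap_apply_right]
      rw [Nat.add_zero, show i + 2 = i + 1 + 1 from rfl, Nat.count_succ, Nat.count_succ,
        Nat.count_succ, Nat.count_succ, e]
      simp only [h1, h2]
      omega
    | succ d ih =>
      rw [show i + 2 + (d + 1) = i + 2 + d + 1 by omega, Nat.count_succ, Nat.count_succ, ih (by omega)]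
      have : p' (i + 2 + d) ↔ p (i + 2 + d) := by
        rw [h, Equiv.swap_apply_of_ne_of_ne (by omega) (by omega)]
      simp only [this]

theorem lab_sw_of_ne {i : ℕ} (h : i + 1 < n) (c : Idx n m) {j : ℕ} (h1 : j ≠ i) (h2 : j ≠ i + 1) :
    (sw i c).lab j = c.lab j := by
  have hm : j ∈ (sw i c).1 ↔ j ∈ c.1 := by
    rw [mem_sw h, Equiv.swap_apply_of_ne_of_ne h1 h2]
  have e1 : Nat.count (· ∈ (sw i c).1) j = Nat.count (· ∈ c.1) j :=
    count_swap i j (fun a => mem_sw h c a) h2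
  have e2 : Nat.count (· ∉ (sw i c).1) j = Nat.count (· ∉ c.1) j :=
    count_swap i j (fun a => not_congr (mem_sw h c a)) h2
  unfold lab
  simp only [hm, e1, e2]

theorem lab_sw_left {i : ℕ} (h : i + 1 < n) (c : Idx n m)
    (hs : (c.lab i).1 ≠ (c.lab (i + 1)).1) :
    (sw i c).lab i = c.lab (i + 1) := by
  have hm : i ∈ (sw i c).1 ↔ i + 1 ∈ c.1 := by
    rw [mem_sw h, Equiv.swap_apply_left]
  have e1 : Nat.count (· ∈ (sw i c).1) i = Nat.count (· ∈ c.1) i :=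
    count_swap i i (fun a => mem_sw h c a) (by omega)
  have e2 : Nat.count (· ∉ (sw i c).1) i = Nat.count (· ∉ c.1) i :=
    count_swap i i (fun a => not_congr (mem_sw h c a)) (by omega)
  simp only [color, ne_eq, decide_eq_decide] at hs
  unfold lab
  simp only [hm, e1, e2, Nat.count_succ]
  by_cases h1 : i ∈ c.1 <;> by_cases h2 : i + 1 ∈ c.1 <;> simp_all

theorem lab_sw_right {i : ℕ} (h : i + 1 < n) (c : Idx n m)
    (hs : (c.lab i).1 ≠ (c.lab (i + 1)).1) :
    (sw i c).lab (i + 1) = c.lab i := by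
  have := lab_sw_left h (sw i c) (by
    rw [color_sw h, color_sw h, Equiv.swap_apply_left, Equiv.swap_apply_right]; exact hs.symm)
  rw [sw_sw h] at this
  exact this.symm

theorem lab_lt (c : Idx n m) {i j : ℕ} (hij : i < j) : c.lab i ≠ c.lab j := by
  unfold lab
  split_ifs with h1 h2 h2
  · intro e
    have := Nat.count_strict_mono (p := (· ∈ c.1)) h1 hij
    simp at e; omega
  · simp
  · simp
  · intro e
    have := Nat.count_strict_mono (p := (· ∉ c.1)) h1 hij
    simp at e; omega

theorem lab_inj (c : Idx n m) {i j : ℕ} (hij : i ≠ j) : c.lab i ≠ c.lab j := by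
  rcases lt_or_gt_of_ne hij with h | h
  · exact c.lab_lt h
  · exact (c.lab_lt h).symm

def szf (m k : ℕ) : Bool → ℕ := fun b => if b then m else k

theorem count_top (c : Idx n m) : Nat.count (· ∈ c.1) n = m := by
  rw [Nat.count_eq_card_filter_range]
  conv_rhs => rw [← c.card]
  congr 1
  ext i
  simp only [Finset.mem_filter, Finset.mem_range]
  exact ⟨fun h => h.2, fun h => ⟨c.sub h, h⟩⟩

theorem count_top' (c : Idx n m) : Nat.count (· ∉ c.1) n + m = n := by
  have h := Finset.card_filter_add_card_filter_not (s := Finset.range n) (· ∈ c.1)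
  rw [← Nat.count_eq_card_filter_range, ← Nat.count_eq_card_filter_range, count_top] at h
  simp at h; omega

theorem lab_val {k : ℕ} (hn : m + k = n) (c : Idx n m) {i : ℕ} (hi : i < n) :
    LVal (szf m k) (c.lab i) := by
  unfold LVal lab szf
  split_ifs with h1 h2 h2
  · have := Nat.count_strict_mono (p := (· ∈ c.1)) h1 hi
    rw [count_top] at this; exact this
  · simp at h2
  · simp at h2
  · have := Nat.count_strict_mono (p := (· ∉ c.1)) h1 hi
    have := c.count_top'
    simp only; omega

def inv (c : Idx n m) : ℕ := ∑ i ∈ c.1, i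

theorem inv_sw {i : ℕ} (h : i + 1 < n) (c : Idx n m) (h1 : (c.lab i).1 = false)
    (h2 : (c.lab (i + 1)).1 = true) : (sw i c).inv < c.inv := by
  simp only [color, decide_eq_true_eq, decide_eq_false_iff_not] at h1 h2
  unfold inv sw
  rw [dif_pos h]
  simp only [Finset.sum_map, Equiv.coe_toEmbedding]
  apply Finset.sum_lt_sum
  · intro j hj
    rw [Equiv.swap_apply_def]
    split_ifs with h3 h4
    · subst h3; exact absurd hj h1
    · omega
    · exact le_rfl
  · exact ⟨i + 1, h2, by rw [Equiv.swap_apply_right]; omega⟩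

def base (h : m ≤ n) : Idx n m := ⟨Finset.range m, by
  rw [Finset.mem_powersetCard]; exact ⟨Finset.range_mono h, Finset.card_range m⟩⟩

theorem lab_base_lt (h : m ≤ n) {i : ℕ} (hi : i < m) : (base h).lab i = (true, i) := by
  have : i ∈ (base h).1 := Finset.mem_range.2 hi
  unfold lab
  rw [if_pos this]
  congr 1
  have e : Nat.count (· ∈ (base h).1) i = Nat.count (fun _ => True) i := by
    apply count_eq
    intro j hj
    simp only [iff_true]
    exact Finset.mem_range.2 (by omega)
  rw [e]; simp

theorem lab_base_ge (h : m ≤ n) (i : ℕ) : (base h).lab (m + i) = (false, i) := by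
  have : m + i ∉ (base h).1 := by simp [base]
  unfold lab
  rw [if_neg this]
  congr 1
  induction i with
  | zero =>
    have e : Nat.count (· ∉ (base h).1) (m + 0) = Nat.count (fun _ => False) (m + 0) := by
      apply count_eq
      intro j hj
      simp [base]; omega
    rw [e]; simp
  | succ i ih =>
    have h0 : m + i ∉ (base h).1 := by simp [base]
    rw [← Nat.add_assoc, Nat.count_succ, ih h0, if_pos h0]

theorem eq_base (h : m ≤ n) (c : Idx n m)
    (hd : ∀ i, i + 1 < n → ¬ ((c.lab i).1 = false ∧ (c.lab (i + 1)).1 = true)) : c = base h := by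
  simp only [color, decide_eq_true_eq, decide_eq_false_iff_not, not_and, not_not] at hd
  have hd' : ∀ i, i + 1 ∈ c.1 → i ∈ c.1 := by
    intro i hi
    by_contra h'
    exact hd i (c.sub hi) h' hi
  have hdown : ∀ d i, i + d ∈ c.1 → i ∈ c.1 := by
    intro d
    induction d with
    | zero => intro i hi; exact hi
    | succ d ih => intro i hi; exact ih i (hd' _ hi)
  apply Subtype.ext
  change c.1 = Finset.range m
  apply Finset.eq_of_subset_of_card_le
  · intro i hi
    rw [Finset.mem_range]
    have : Finset.range (i + 1) ⊆ c.1 := by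
      intro j hj
      rw [Finset.mem_range] at hj
      apply hdown (i - j) j
      rw [Nat.add_sub_cancel' (by omega)]; exact hi
    have := Finset.card_le_card this
    rw [Finset.card_range, c.card] at this
    omega
  · rw [Finset.card_range, c.card]

end Idx

/-- the relations of the affine Hecke algebra, indexed by natural numbers -/
structure IsHecke (q : ℂ) (n : ℕ) {R : Type*} [Ring R] [Algebra ℂ R] (T X : ℕ → R) : Prop where
  Xcomm : ∀ i j, i < n → j < n → Commute (X i) (X j)
  Xunit : ∀ i, i < n → IsUnit (X i)
  braid : ∀ i, i + 2 < n → T i * T (i + 1) * T i = T (i + 1) * T i * T (i + 1)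
  Tcomm : ∀ i j, i + 1 < j → j + 1 < n → Commute (T i) (T j)
  quad : ∀ i, i + 1 < n → T i * T i = q • T i + 1
  TXT : ∀ i, i + 1 < n → T i * X i * T i = X (i + 1)
  TXcomm : ∀ i a, i + 1 < n → a < n → a ≠ i → a ≠ i + 1 → Commute (T i) (X a)

theorem IsHecke.TX {q : ℂ} {n : ℕ} {R : Type*} [Ring R] [Algebra ℂ R] {T X : ℕ → R}
    (H : IsHecke q n T X) {i : ℕ} (hi : i + 1 < n) :
    T i * X i = X (i + 1) * T i - q • X (i + 1) := by
  have txt := H.TXT i hi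
  have h := congrArg (· * T i) txt
  simp only [mul_assoc, H.quad i hi, mul_add, mul_smul_comm, mul_one] at h
  have h2 : T i * (X i * T i) = X (i + 1) := by rw [← mul_assoc]; exact txt
  rw [h2] at h
  rw [← h]; abel

theorem IsHecke.TX' {q : ℂ} {n : ℕ} {R : Type*} [Ring R] [Algebra ℂ R] {T X : ℕ → R}
    (H : IsHecke q n T X) {i : ℕ} (hi : i + 1 < n) :
    T i * X (i + 1) = X i * T i + q • X (i + 1) := by
  have txt := H.TXT i hi
  have h := congrArg (T i * ·) txt
  simp only [← mul_assoc, H.quad i hi, add_mul, smul_mul_assoc, one_mul] at h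
  rw [txt] at h
  rw [← h]; abel

namespace LS

variable {q : ℂ} {m k n : ℕ} {E : Type} [AddCommGroup E] [Module ℂ E]
  (S : LS q (Idx.szf m k) (Module.End ℂ E))

def P (l l' : Lab) : Module.End ℂ E := if l.1 = l'.1 then S.t l else S.A l l'
def Q (l l' : Lab) : Module.End ℂ E := if l.1 = l'.1 then 0 else S.G l l'

def opX (n : ℕ) (i : ℕ) : Module.End ℂ (Idx n m → E) :=
  LinearMap.pi fun c => (S.x (c.lab i)) ∘ₗ LinearMap.proj c

def opT (n : ℕ) (i : ℕ) : Module.End ℂ (Idx n m → E) :=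
  LinearMap.pi fun c => (S.P (c.lab i) (c.lab (i + 1))) ∘ₗ LinearMap.proj c
    + (S.Q (c.lab i) (c.lab (i + 1))) ∘ₗ LinearMap.proj (Idx.sw i c)

theorem opX_apply (i : ℕ) (f : Idx n m → E) (c : Idx n m) :
    S.opX n i f c = S.x (c.lab i) (f c) := rfl

theorem opT_apply (i : ℕ) (f : Idx n m → E) (c : Idx n m) :
    S.opT n i f c = S.P (c.lab i) (c.lab (i + 1)) (f c)
      + S.Q (c.lab i) (c.lab (i + 1)) (f (Idx.sw i c)) := rfl

theorem opT_same {i : ℕ} {c : Idx n m} {l l' : Lab} (h : c.lab i = l) (h' : c.lab (i + 1) = l')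
    (hs : l.1 = l'.1) (f : Idx n m → E) : S.opT n i f c = S.t l (f c) := by
  rw [opT_apply, h, h', P, Q, if_pos hs, if_pos hs]; simp

theorem opT_mixed {i : ℕ} {c c' : Idx n m} {l l' : Lab} (h : c.lab i = l) (h' : c.lab (i + 1) = l')
    (hs : l.1 ≠ l'.1) (hc : Idx.sw i c = c') (f : Idx n m → E) :
    S.opT n i f c = S.A l l' (f c) + S.G l l' (f c') := by
  rw [opT_apply, h, h', P, Q, if_neg hs, if_neg hs, hc]

theorem braid_mixed (hn : m + k = n) {i : ℕ} (hi : i + 2 < n) (c : Idx n m)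
    (h1 : (c.lab i).1 = (c.lab (i + 1)).1) (h2 : (c.lab (i + 1)).1 ≠ (c.lab (i + 2)).1)
    (f : Idx n m → E) :
    ∀ c', (c' = c ∨ c' = Idx.sw (i + 1) c ∨ c' = Idx.sw i (Idx.sw (i + 1) c)) →
    (S.opT n i * S.opT n (i + 1) * S.opT n i) f c'
      = (S.opT n (i + 1) * S.opT n i * S.opT n (i + 1)) f c' := by
  have hi1 : i + 1 + 1 < n := by omega
  have hi0 : i + 1 < n := by omega
  obtain ⟨l, hl⟩ : ∃ l, c.lab i = l := ⟨_, rfl⟩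
  obtain ⟨w, hw⟩ : ∃ w, c.lab (i + 2) = w := ⟨_, rfl⟩
  have hl1 : c.lab (i + 1) = lsucc l := by rw [Idx.lab_succ c h1, hl]
  have hv1 : LVal (Idx.szf m k) (lsucc l) := by rw [← hl1]; exact c.lab_val hn hi0
  have hvw : LVal (Idx.szf m k) w := by rw [← hw]; exact c.lab_val hn hi
  have hv0 := LVal_of_succ hv1
  rw [hl1, hw] at h2
  have hm : l.1 ≠ w.1 := h2
  have hm' : (lsucc l).1 ≠ w.1 := h2
  have B := S.braidData hv1 hvw hm
  have sA := S.A_sum hv0 hvw hm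
  have sB := S.A_sum hv1 hvw hm'
  obtain ⟨c2, hc2⟩ : ∃ c2, Idx.sw (i + 1) c = c2 := ⟨_, rfl⟩
  obtain ⟨c3, hc3⟩ : ∃ c3, Idx.sw i c2 = c3 := ⟨_, rfl⟩
  have hcm : (c.lab (i + 1)).1 ≠ (c.lab (i + 1 + 1)).1 := by rw [hl1, hw]; exact h2
  have l2a : c2.lab i = l := by
    rw [← hc2, Idx.lab_sw_of_ne hi1 c (by omega) (by omega), hl]
  have l2b : c2.lab (i + 1) = w := by
    rw [← hc2, Idx.lab_sw_left hi1 c hcm, hw]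
  have l2c : c2.lab (i + 1 + 1) = lsucc l := by
    rw [← hc2, Idx.lab_sw_right hi1 c hcm, hl1]
  have hcm2 : (c2.lab i).1 ≠ (c2.lab (i + 1)).1 := by rw [l2a, l2b]; exact hm
  have l3a : c3.lab i = w := by
    rw [← hc3, Idx.lab_sw_left hi0 c2 hcm2, l2b]
  have l3b : c3.lab (i + 1) = l := by
    rw [← hc3, Idx.lab_sw_right hi0 c2 hcm2, l2a]
  have l3c : c3.lab (i + 1 + 1) = lsucc l := by
    rw [← hc3, Idx.lab_sw_of_ne hi0 c2 (by omega) (by omega), l2c]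
  have s2 : Idx.sw (i + 1) c2 = c := by rw [← hc2, Idx.sw_sw hi1]
  have s3 : Idx.sw i c3 = c2 := by rw [← hc3, Idx.sw_sw hi0]
  have a1 := fun f => S.opT_same hl hl1 rfl f
  have a2 := fun f => S.opT_mixed l2a l2b hm hc3 f
  have a3 := fun f => S.opT_mixed l3a l3b hm.symm s3 f
  have b1 := fun f => S.opT_mixed hl1 hw hm' hc2 f
  have b2 := fun f => S.opT_mixed l2b l2c hm'.symm s2 f
  have b3 := fun f => S.opT_same l3b l3c rfl f
  rw [sA] at a3
  rw [sB] at b2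
  have c11 := B.c11
  have c12 := B.c12
  have c13 := B.c13
  have c21 := B.c21
  have c22 := B.c22
  have c23 := B.c23
  have c31 := B.c31
  have c32 := B.c32
  have c33 := B.c33
  generalize hα' : q • (1 : Module.End ℂ E) - S.A l w = α' at *
  generalize hβ' : q • (1 : Module.End ℂ E) - S.A (lsucc l) w = β' at *
  rintro c' (rfl | h | h)
  · have e1 := LinearMap.congr_fun c11 (f c')
    have e2 := LinearMap.congr_fun c12 (f c2)
    have e3 := LinearMap.congr_fun c13 (f c3)
    simp only [Module.End.mul_apply, LinearMap.add_apply] at e1 e2 e3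
    simp only [Module.End.mul_apply, a1, a2, a3, b1, b2, b3, map_add]
    rw [e1, e2, e3]; abel
  · rw [hc2] at h
    subst h
    have e1 := LinearMap.congr_fun c21 (f c)
    have e2 := LinearMap.congr_fun c22 (f c')
    have e3 := LinearMap.congr_fun c23 (f c3)
    simp only [Module.End.mul_apply, LinearMap.add_apply] at e1 e2 e3
    simp only [Module.End.mul_apply, a1, a2, a3, b1, b2, b3, map_add]
    rw [← e3, e1]
    linear_combination (norm := module) e2
  · rw [hc2, hc3] at h
    subst h
    have e1 := LinearMap.congr_fun c31 (f c)
    have e2 := LinearMap.congr_fun c32 (f c2)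
    have e3 := LinearMap.congr_fun c33 (f c')
    simp only [Module.End.mul_apply, LinearMap.add_apply] at e1 e2 e3
    simp only [Module.End.mul_apply, a1, a2, a3, b1, b2, b3, map_add]
    rw [← e3, e1, ← e2]
    abel

theorem op_braid (hn : m + k = n) {i : ℕ} (hi : i + 2 < n) :
    S.opT n i * S.opT n (i + 1) * S.opT n i = S.opT n (i + 1) * S.opT n i * S.opT n (i + 1) := by
  have hi1 : i + 1 + 1 < n := by omega
  have hi0 : i + 1 < n := by omega
  refine LinearMap.ext fun f => funext fun c => ?_
  by_cases h1 : (c.lab i).1 = (c.lab (i + 1)).1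
  · by_cases h2 : (c.lab (i + 1)).1 = (c.lab (i + 2)).1
    · have e1 := c.lab_succ h1
      have e2 : c.lab (i + 1 + 1) = lsucc (lsucc (c.lab i)) := by rw [← e1]; exact c.lab_succ h2
      have hv : LVal (Idx.szf m k) (lsucc (lsucc (c.lab i))) := by
        rw [← e2]; exact c.lab_val hn hi1
      have a1 := fun f => S.opT_same (c := c) (i := i) rfl e1 rfl f
      have a2 := fun f => S.opT_same (c := c) (i := i + 1) e1 e2 rfl f
      simp only [Module.End.mul_apply, a1, a2]
      exact LinearMap.congr_fun (S.braid _ hv) (f c)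
    · exact S.braid_mixed hn hi c h1 h2 f c (Or.inl rfl)
  · by_cases h2 : (c.lab (i + 1)).1 = (c.lab (i + 2)).1
    · -- c is of type `c3`
      have k1 : ((Idx.sw i c).lab i).1 = (c.lab (i + 1)).1 := by
        rw [Idx.color_sw hi0, Equiv.swap_apply_left]
      have k2 : ((Idx.sw i c).lab (i + 1)).1 = (c.lab i).1 := by
        rw [Idx.color_sw hi0, Equiv.swap_apply_right]
      have k3 : ((Idx.sw i c).lab (i + 2)).1 = (c.lab (i + 2)).1 := by
        rw [Idx.color_sw hi0, Equiv.swap_apply_of_ne_of_ne (by omega) (by omega)]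
      apply S.braid_mixed hn hi (Idx.sw (i + 1) (Idx.sw i c)) _ _ f c
      · right; right; rw [Idx.sw_sw hi1, Idx.sw_sw hi0]
      · rw [Idx.color_sw hi1, Idx.color_sw hi1, Equiv.swap_apply_left,
          Equiv.swap_apply_of_ne_of_ne (by omega) (by omega), k1, h2]; exact k3.symm
      · rw [Idx.color_sw hi1, Idx.color_sw hi1, Equiv.swap_apply_left,
          show i + 2 = i + 1 + 1 from rfl, Equiv.swap_apply_right, k2]
        change ((Idx.sw i c).lab (i + 2)).1 ≠ _
        rw [k3, ← h2]; exact Ne.symm h1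
    · -- c is of type `c2`
      have h3 : (c.lab i).1 = (c.lab (i + 2)).1 := by
        revert h1 h2
        generalize (c.lab i).1 = x; generalize (c.lab (i + 1)).1 = y
        generalize (c.lab (i + 2)).1 = z
        cases x <;> cases y <;> cases z <;> simp
      apply S.braid_mixed hn hi (Idx.sw (i + 1) c) _ _ f c
      · right; left; rw [Idx.sw_sw hi1]
      · rw [Idx.color_sw hi1, Idx.color_sw hi1, Equiv.swap_apply_left,
          Equiv.swap_apply_of_ne_of_ne (by omega) (by omega)]; exact h3
      · rw [Idx.color_sw hi1, Idx.color_sw hi1, Equiv.swap_apply_left,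
          show i + 2 = i + 1 + 1 from rfl, Equiv.swap_apply_right]
        exact Ne.symm h2

theorem op_quad (hn : m + k = n) {i : ℕ} (hi : i + 1 < n) :
    S.opT n i * S.opT n i = q • S.opT n i + 1 := by
  refine LinearMap.ext fun f => funext fun c => ?_
  by_cases h1 : (c.lab i).1 = (c.lab (i + 1)).1
  · have e1 := c.lab_succ h1
    have hv : LVal (Idx.szf m k) (lsucc (c.lab i)) := by rw [← e1]; exact c.lab_val hn hi
    have a1 := fun f => S.opT_same (c := c) (i := i) rfl e1 rfl f
    simp only [Module.End.mul_apply, a1, LinearMap.add_apply, LinearMap.smul_apply, Pi.add_apply,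
      Pi.smul_apply, Module.End.one_apply]
    have := LinearMap.congr_fun (S.quad _ hv) (f c)
    simpa using this
  · have a1 := fun f => S.opT_mixed (c := c) (i := i) rfl rfl h1 rfl f
    have a2 := fun f => S.opT_mixed (c := Idx.sw i c) (i := i) (Idx.lab_sw_left hi c h1)
      (Idx.lab_sw_right hi c h1) (Ne.symm h1) (Idx.sw_sw hi c) f
    have hv0 := c.lab_val hn (i := i) (by omega)
    have hv1 := c.lab_val hn hi
    have hG := LinearMap.congr_fun (S.G_mul hv0 hv1 h1) (f c)
    have hGA := LinearMap.congr_fun (S.G_A hv0 hv1 h1 hv0 hv1 h1).eq (f (Idx.sw i c))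
    rw [S.A_sum hv0 hv1 h1] at a2
    simp only [Module.End.mul_apply, LinearMap.add_apply, LinearMap.sub_apply, LinearMap.smul_apply,
      Module.End.one_apply, map_sub, map_smul] at hG hGA
    simp only [Module.End.mul_apply, a1, a2, LinearMap.add_apply, LinearMap.smul_apply,
      Pi.add_apply, LinearMap.sub_apply,
      Pi.smul_apply, Module.End.one_apply, map_add, map_sub, map_smul]
    rw [hG, hGA]
    module

theorem op_TXT (hn : m + k = n) {i : ℕ} (hi : i + 1 < n) :
    S.opT n i * S.opX n i = S.opX n (i + 1) * S.opT n i - q • S.opX n (i + 1) := by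
  refine LinearMap.ext fun f => funext fun c => ?_
  by_cases h1 : (c.lab i).1 = (c.lab (i + 1)).1
  · have e1 := c.lab_succ h1
    have hv : LVal (Idx.szf m k) (lsucc (c.lab i)) := by rw [← e1]; exact c.lab_val hn hi
    have a1 := fun f => S.opT_same (c := c) (i := i) rfl e1 rfl f
    simp only [Module.End.mul_apply, a1, LinearMap.sub_apply, LinearMap.smul_apply, Pi.sub_apply,
      Pi.smul_apply, Module.End.one_apply, opX_apply]
    have h2 : S.t (c.lab i) * S.x (c.lab i) = S.x (lsucc (c.lab i)) * S.t (c.lab i)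
        - q • S.x (lsucc (c.lab i)) := by
      have txt := S.txt _ hv
      have h := congrArg (· * S.t (c.lab i)) txt
      simp only [mul_assoc, S.quad _ hv, mul_add, mul_smul_comm, mul_one] at h
      rw [mul_assoc] at txt
      rw [txt] at h
      rw [← h]; abel
    have := LinearMap.congr_fun h2 (f c)
    rw [e1]
    simpa using this
  · have a1 := fun f => S.opT_mixed (c := c) (i := i) rfl rfl h1 rfl f
    have hv0 := c.lab_val hn (i := i) (by omega)
    have hv1 := c.lab_val hn hi
    have hA := LinearMap.congr_fun (S.A_mul hv0 hv1 h1) (f c)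
    have hxA := LinearMap.congr_fun (S.x_A hv0 hv1 h1 hv1).eq (f c)
    have hGx := LinearMap.congr_fun (S.G_comm (S.x_A hv0 hv1 h1 hv1)).eq (f (Idx.sw i c))
    simp only [Module.End.mul_apply, LinearMap.add_apply, LinearMap.sub_apply, LinearMap.smul_apply,
      Module.End.one_apply, map_sub, map_smul] at hA hxA hGx
    simp only [Module.End.mul_apply, a1, LinearMap.add_apply, LinearMap.smul_apply,
      Pi.add_apply, LinearMap.sub_apply, Pi.sub_apply, opX_apply, Idx.lab_sw_left hi c h1,
      Pi.smul_apply, Module.End.one_apply, map_add, map_sub, map_smul]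
    rw [hGx, hxA, ← hA]
    abel

theorem op_TXcomm (hn : m + k = n) {i a : ℕ} (hi : i + 1 < n) (ha : a < n) (h1 : a ≠ i)
    (h2 : a ≠ i + 1) : Commute (S.opT n i) (S.opX n a) := by
  refine LinearMap.ext fun f => funext fun c => ?_
  have hva := c.lab_val hn ha
  have hv0 := c.lab_val hn (i := i) (by omega)
  have hv1 := c.lab_val hn hi
  by_cases h : (c.lab i).1 = (c.lab (i + 1)).1
  · have e1 := c.lab_succ h
    have a1 := fun f => S.opT_same (c := c) (i := i) rfl e1 rfl f
    simp only [Module.End.mul_apply, a1, opX_apply]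
    rw [e1] at hv1
    exact LinearMap.congr_fun (S.txc _ _ hv1 hva (c.lab_inj h1) (by
      rw [← e1]; exact c.lab_inj h2)).eq (f c)
  · have a1 := fun f => S.opT_mixed (c := c) (i := i) rfl rfl h rfl f
    have hxA := LinearMap.congr_fun (S.x_A hv0 hv1 h hva).eq (f c)
    have hGx := LinearMap.congr_fun (S.G_comm (S.x_A hv0 hv1 h hva)).eq (f (Idx.sw i c))
    simp only [Module.End.mul_apply] at hxA hGx
    simp only [Module.End.mul_apply, a1, opX_apply, Idx.lab_sw_of_ne hi c h1 h2, map_add]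
    rw [hxA, hGx]

/-- operators attached to disjoint pairs of labels commute -/
theorem PQ_comm {l1 l2 l3 l4 : Lab} (v1 : LVal (Idx.szf m k) l1) (v2 : LVal (Idx.szf m k) l2)
    (v3 : LVal (Idx.szf m k) l3) (v4 : LVal (Idx.szf m k) l4)
    (s1 : l1.1 = l2.1 → l2 = lsucc l1) (s2 : l3.1 = l4.1 → l4 = lsucc l3)
    (n1 : l1 ≠ l3) (n2 : l1 ≠ l4) (n3 : l2 ≠ l3) (n4 : l2 ≠ l4) :
    Commute (S.P l1 l2) (S.P l3 l4) ∧ Commute (S.P l1 l2) (S.Q l3 l4) ∧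
    Commute (S.Q l1 l2) (S.P l3 l4) ∧ Commute (S.Q l1 l2) (S.Q l3 l4) := by
  unfold P Q
  by_cases h1 : l1.1 = l2.1 <;> by_cases h2 : l3.1 = l4.1
  · simp only [if_pos h1, if_pos h2]
    obtain rfl := s1 h1
    obtain rfl := s2 h2
    exact ⟨S.tcomm _ _ v2 v4 n1 n3 n2, Commute.zero_right _, Commute.zero_left _,
      Commute.zero_left _⟩
  · simp only [if_pos h1, if_neg h2]
    obtain rfl := s1 h1
    have := S.t_A v3 v4 h2 v2 n1.symm n3.symm n2.symm n4.symm
    exact ⟨this, S.G_comm this, Commute.zero_left _, Commute.zero_left _⟩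
  · simp only [if_neg h1, if_pos h2]
    obtain rfl := s2 h2
    have := S.t_A v1 v2 h1 v4 n1 n2 n3 n4
    exact ⟨this.symm, Commute.zero_right _, (S.G_comm this).symm, Commute.zero_right _⟩
  · simp only [if_neg h1, if_neg h2]
    exact ⟨S.A_A v3 v4 h2 v1 v2 h1, (S.G_A v1 v2 h1 v3 v4 h2).symm, S.G_A v3 v4 h2 v1 v2 h1,
      S.G_G v3 v4 h2 v1 v2 h1⟩

theorem op_Tcomm (hn : m + k = n) {i j : ℕ} (hij : i + 1 < j) (hj : j + 1 < n) :
    Commute (S.opT n i) (S.opT n j) := by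
  have hi : i + 1 < n := by omega
  refine LinearMap.ext fun f => funext fun c => ?_
  obtain ⟨h1, h2, h3, h4⟩ := S.PQ_comm (c.lab_val hn (i := i) (by omega)) (c.lab_val hn hi)
    (c.lab_val hn (i := j) (by omega)) (c.lab_val hn hj) (fun h => c.lab_succ h)
    (fun h => c.lab_succ h) (c.lab_inj (by omega)) (c.lab_inj (by omega)) (c.lab_inj (by omega))
    (c.lab_inj (by omega))
  have e1 := LinearMap.congr_fun h1.eq (f c)
  have e2 := LinearMap.congr_fun h2.eq (f (Idx.sw j c))
  have e3 := LinearMap.congr_fun h3.eq (f (Idx.sw i c))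
  have e4 := LinearMap.congr_fun h4.eq (f (Idx.sw j (Idx.sw i c)))
  simp only [Module.End.mul_apply] at e1 e2 e3 e4
  simp only [Module.End.mul_apply, opT_apply, map_add,
    Idx.lab_sw_of_ne hi c (j := j) (by omega) (by omega),
    Idx.lab_sw_of_ne hi c (j := j + 1) (by omega) (by omega),
    Idx.lab_sw_of_ne hj c (j := i) (by omega) (by omega),
    Idx.lab_sw_of_ne hj c (j := i + 1) (by omega) (by omega),
    Idx.sw_comm hi hj (Or.inl hij) c]
  rw [e1, e2, e3, e4]
  abel

theorem op_hecke (hn : m + k = n) : IsHecke q n (S.opT n) (S.opX n) where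
  Xcomm i j hi hj := by
    refine LinearMap.ext fun f => funext fun c => ?_
    exact LinearMap.congr_fun (S.xx _ _ (c.lab_val hn hi) (c.lab_val hn hj)).eq (f c)
  Xunit i hi := by
    rw [Module.End.isUnit_iff]
    constructor
    · intro f g h
      funext c
      have := congrFun h c
      exact ((Module.End.isUnit_iff _).1 (S.xu _ (c.lab_val hn hi))).1 this
    · intro g
      choose f hf using fun c : Idx n m =>
        ((Module.End.isUnit_iff _).1 (S.xu _ (c.lab_val hn hi))).2 (g c)
      exact ⟨f, funext hf⟩
  braid i hi := S.op_braid hn hi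
  Tcomm i j hij hj := S.op_Tcomm hn hij hj
  quad i hi := S.op_quad hn hi
  TXT i hi := by
    rw [S.op_TXT hn hi, sub_mul, mul_assoc, S.op_quad hn hi, mul_add, mul_smul_comm,
      smul_mul_assoc, mul_one]; abel
  TXcomm i a hi ha h1 h2 := S.op_TXcomm hn hi ha h1 h2

end LS

namespace LS

variable {q : ℂ} {m k n : ℕ} {E : Type} [AddCommGroup E] [Module ℂ E]
  (S : LS q (Idx.szf m k) (Module.End ℂ E))
  {Z : Type} [AddCommGroup Z] [Module ℂ Z] (TZ XZ : ℕ → Module.End ℂ Z)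

/-- intertwining property of a weight map -/
def Good (c : Idx n m) (θ : E →ₗ[ℂ] Z) : Prop :=
  (∀ i, i < n → ∀ e, XZ i (θ e) = θ (S.x (c.lab i) e)) ∧
  (∀ i, i + 1 < n → (c.lab i).1 = (c.lab (i + 1)).1 → ∀ e, TZ i (θ e) = θ (S.t (c.lab i) e))

def up (i : ℕ) (c : Idx n m) (θ : E →ₗ[ℂ] Z) : E →ₗ[ℂ] Z :=
  TZ i ∘ₗ θ - θ ∘ₗ S.A (c.lab i) (c.lab (i + 1))

theorem up_apply (i : ℕ) (c : Idx n m) (θ : E →ₗ[ℂ] Z) (e : E) :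
    S.up TZ i c θ e = TZ i (θ e) - θ (S.A (c.lab i) (c.lab (i + 1)) e) := rfl

open Classical in
def th (ψ : E →ₗ[ℂ] Z) (c : Idx n m) : E →ₗ[ℂ] Z :=
  if h : ∃ i, i + 1 < n ∧ (c.lab i).1 = false ∧ (c.lab (i + 1)).1 = true then
    S.up TZ h.choose (Idx.sw h.choose c) (th ψ (Idx.sw h.choose c))
  else ψ
termination_by c.inv
decreasing_by exact Idx.inv_sw h.choose_spec.1 c h.choose_spec.2.1 h.choose_spec.2.2

theorem stepT {q : ℂ} {a b : Module.End ℂ Z} {t α1 α2 : Module.End ℂ E} {θ'' θ' θ : E →ₗ[ℂ] Z}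
    (ex : Exch q t α2 α1) (hb : ∀ e, b (θ'' e) = θ'' (t e)) (hba : a * b * a = b * a * b)
    (ha : a * a = q • a + 1) (h' : ∀ e, θ' e = a (θ'' e) - θ'' (α1 e))
    (h : ∀ e, θ e = b (θ' e) - θ' (α2 e)) (e : E) : a (θ e) = θ (t e) := by
  have hba' := fun z => LinearMap.congr_fun hba z
  have ha' := fun z => LinearMap.congr_fun ha z
  have r2 := fun z => LinearMap.congr_fun ex.r2 z
  have tt := fun z => LinearMap.congr_fun ex.tt z
  have ab := fun z => LinearMap.congr_fun ex.ab z
  simp only [Module.End.mul_apply, LinearMap.add_apply, LinearMap.sub_apply, LinearMap.smul_apply,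
    Module.End.one_apply] at hba' ha' r2 tt ab
  simp only [h, h', map_sub, hb, hba', ha', r2, tt, ab, map_add, map_smul]
  module

theorem th_desc_step {c : Idx n m} {i j : ℕ} (hn : m + k = n) (H : IsHecke q n TZ XZ)
    (hi : i + 1 < n) (hj : j + 1 < n) (hij : i + 1 < j) (θ : E →ₗ[ℂ] Z)
    (mi : (c.lab i).1 ≠ (c.lab (i + 1)).1) (mj : (c.lab j).1 ≠ (c.lab (j + 1)).1) :
    S.up TZ i (Idx.sw i c) (S.up TZ j (Idx.sw j (Idx.sw i c)) θ)
     = S.up TZ j (Idx.sw j c) (S.up TZ i (Idx.sw i (Idx.sw j c)) θ) := by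
  rw [Idx.sw_comm hi hj (Or.inl hij)]
  ext e
  have mi' := (Idx.color_sw hj c i)
  have mi'' := (Idx.color_sw hj c (i+1))
  rw [Equiv.swap_apply_of_ne_of_ne (by omega) (by omega)] at mi' mi''
  have mj' := (Idx.color_sw hi c j)
  have mj'' := (Idx.color_sw hi c (j+1))
  rw [Equiv.swap_apply_of_ne_of_ne (by omega) (by omega)] at mj' mj''
  simp only [up_apply, map_sub]
  have cT := LinearMap.congr_fun (H.Tcomm i j hij hj).eq (θ e)
  have vi := c.lab_val hn (i := i) (by omega)
  have vi1 := c.lab_val hn hi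
  have vj := c.lab_val hn (i := j) (by omega)
  have vj1 := c.lab_val hn hj
  rw [Idx.lab_sw_left hi c mi, Idx.lab_sw_right hi c mi, Idx.lab_sw_left hj c mj,
    Idx.lab_sw_right hj c mj, ← Idx.sw_comm hi hj (Or.inl hij), 
    Idx.lab_sw_left hi _ (by rw [mi', mi'']; exact mi),
    Idx.lab_sw_right hi _ (by rw [mi', mi'']; exact mi),
    Idx.sw_comm hi hj (Or.inl hij), 
    Idx.lab_sw_left hj _ (by rw [mj', mj'']; exact mj),
    Idx.lab_sw_right hj _ (by rw [mj', mj'']; exact mj),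
    Idx.lab_sw_of_ne hi _ (by omega) (by omega), Idx.lab_sw_of_ne hi _ (by omega) (by omega),
    Idx.lab_sw_of_ne hj _ (by omega) (by omega), Idx.lab_sw_of_ne hj _ (by omega) (by omega)]
  have cA := LinearMap.congr_fun (S.A_A vi1 vi mi.symm vj1 vj mj.symm).eq e
  simp only [Module.End.mul_apply] at cT cA
  rw [cA, cT]
  abel

theorem good_step {c : Idx n m} {i : ℕ} (hn : m + k = n) (H : IsHecke q n TZ XZ) (hi : i + 1 < n)
    (h1 : (c.lab i).1 = false) (h2 : (c.lab (i + 1)).1 = true) (th' : Idx n m → (E →ₗ[ℂ] Z))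
    (hc : th' c = S.up TZ i (Idx.sw i c) (th' (Idx.sw i c)))
    (IH : ∀ c' : Idx n m, c'.inv < c.inv → S.Good TZ XZ c' (th' c') ∧
      ∀ j, j + 1 < n → (c'.lab j).1 = false → (c'.lab (j + 1)).1 = true →
        th' c' = S.up TZ j (Idx.sw j c') (th' (Idx.sw j c'))) :
    S.Good TZ XZ c (th' c) := by
  have hm : (c.lab i).1 ≠ (c.lab (i + 1)).1 := by rw [h1, h2]; simp
  have hlt := Idx.inv_sw hi c h1 h2
  have vi := c.lab_val hn (i := i) (by omega)
  have vi1 := c.lab_val hn hi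
  obtain ⟨⟨gX, gT⟩, hd⟩ := IH _ hlt
  obtain ⟨c', hc'⟩ : ∃ c', Idx.sw i c = c' := ⟨_, rfl⟩
  have ll : c'.lab i = c.lab (i + 1) := by rw [← hc']; exact Idx.lab_sw_left hi c hm
  have lr : c'.lab (i + 1) = c.lab i := by rw [← hc']; exact Idx.lab_sw_right hi c hm
  have lo : ∀ j, j ≠ i → j ≠ i + 1 → c'.lab j = c.lab j := fun j a b => by
    rw [← hc']; exact Idx.lab_sw_of_ne hi c a b
  rw [hc'] at hlt gX gT hd hc
  have he : ∀ e, th' c e = TZ i (th' c' e) - th' c' (S.A (c.lab (i+1)) (c.lab i) e) := by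
    intro e; rw [hc, up_apply, ll, lr]
  have hA := S.A_mul vi1 vi hm.symm
  have xA0 := S.x_A vi1 vi hm.symm vi
  have xA1 := S.x_A vi1 vi hm.symm vi1
  refine ⟨?_, ?_⟩
  · intro j hj e
    by_cases j1 : j = i
    · subst j1
      have e1 := LinearMap.congr_fun (H.TX' hi) (th' c' e)
      have g0 := gX j hj
      have g1 := gX (j+1) hi
      have hA' := LinearMap.congr_fun hA e
      have c0 := LinearMap.congr_fun xA0.eq e
      have c1 := LinearMap.congr_fun xA1.eq e
      rw [ll] at g0
      rw [lr] at g1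
      simp only [Module.End.mul_apply, LinearMap.add_apply, LinearMap.sub_apply, map_sub,
        LinearMap.smul_apply, Module.End.one_apply] at e1 hA' c0 c1
      simp only [he, map_sub, g0, g1] at e1 ⊢
      rw [e1, ← map_smul, ← hA', c1, map_sub]
      abel
    by_cases j2 : j = i + 1
    · subst j2
      have e1 := LinearMap.congr_fun (H.TX hi) (th' c' e)
      have g0 := gX i (by omega)
      have g1 := gX (i+1) hi
      have hA' := LinearMap.congr_fun hA e
      have c0 := LinearMap.congr_fun xA0.eq e
      have c1 := LinearMap.congr_fun xA1.eq e
      rw [ll] at g0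
      rw [lr] at g1
      simp only [Module.End.mul_apply, LinearMap.add_apply, LinearMap.sub_apply, map_sub,
        LinearMap.smul_apply, Module.End.one_apply] at e1 hA' c0 c1
      simp only [he, map_sub, g0, g1] at e1 ⊢
      rw [e1, ← map_smul, ← hA', c0, map_sub]
      abel
    · have e1 := LinearMap.congr_fun (H.TXcomm i j hi hj j1 j2).eq (th' c' e)
      have g0 := gX j hj
      rw [lo j j1 j2] at g0
      have vj := c.lab_val hn hj
      have c0 := LinearMap.congr_fun (S.x_A vi1 vi hm.symm vj).eq e
      simp only [Module.End.mul_apply] at e1 c0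
      simp only [he, map_sub, g0, ← c0]
      rw [← e1, g0]
  · intro j hj hs e
    have ej := c.lab_succ hs
    have vj1 := c.lab_val hn hj
    have vj1' := vj1
    rw [ej] at vj1'
    have ji : j ≠ i := by rintro rfl; exact hm hs
    by_cases j1 : j = i + 1
    · subst j1
      have hjm : (c'.lab (i+1)).1 = false := by rw [lr, h1]
      have l2 := lo (i + 1 + 1) (by omega) (by omega)
      have hjm' : (c'.lab (i+1+1)).1 = true := by rw [l2, ← hs, h2]
      have hm2 : (c'.lab (i+1)).1 ≠ (c'.lab (i+1+1)).1 := by rw [hjm, hjm']; simp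
      have hth := hd (i+1) hj hjm hjm'
      have hlt2 := Idx.inv_sw hj c' hjm hjm'
      obtain ⟨⟨_, gT2⟩, _⟩ := IH _ (hlt2.trans hlt)
      have k1 := Idx.lab_sw_left hj c' hm2
      have k2 := Idx.lab_sw_right hj c' hm2
      have k3 := Idx.lab_sw_of_ne hj c' (j := i) (by omega) (by omega)
      rw [l2, ej] at k1
      rw [lr] at k2
      rw [ll] at k3
      have gb := gT2 i hi (by rw [k1, k3]; rfl)
      rw [k3] at gb
      refine stepT (S.exch vj1' vi hm.symm) gb (H.braid i (by omega)).symm (H.quad _ hj)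
        (fun e => ?_) he e
      rw [hth, up_apply, k1, k2]
    by_cases j2 : i = j + 1
    · subst j2
      have l2 := lo j (by omega) (by omega)
      have hjm : (c'.lab j).1 = false := by rw [l2, hs, h1]
      have hjm' : (c'.lab (j+1)).1 = true := by rw [ll, h2]
      have hm2 : (c'.lab j).1 ≠ (c'.lab (j+1)).1 := by rw [hjm, hjm']; simp
      have hth := hd j hj hjm hjm'
      have hlt2 := Idx.inv_sw hj c' hjm hjm'
      obtain ⟨⟨_, gT2⟩, _⟩ := IH _ (hlt2.trans hlt)
      have k1 := Idx.lab_sw_left hj c' hm2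
      have k2 := Idx.lab_sw_right hj c' hm2
      have k3 := Idx.lab_sw_of_ne hj c' (j := j+1+1) (by omega) (by omega)
      rw [ll] at k1
      rw [l2] at k2
      rw [lr, ej] at k3
      have gb := gT2 (j+1) hi (by rw [k2, k3]; rfl)
      rw [k2] at gb
      have vj := LVal_of_succ vj1'
      have hmj : (c.lab j).1 ≠ (c.lab (j+1+1)).1 := by rw [hs]; exact hm
      have hmj2 : (lsucc (c.lab j)).1 ≠ (c.lab (j+1+1)).1 := hmj
      have ex := (S.exch vj1' vi1 hmj).flip
      rw [← S.A_sum vj vi1 hmj, ← S.A_sum vj1' vi1 hmj2] at ex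
      rw [ej] at he
      refine stepT ex gb (H.braid j (by omega)) (H.quad _ hj)
        (fun e => ?_) he e
      rw [hth, up_apply, k1, k2]
    · have cT : Commute (TZ i) (TZ j) := by
        rcases lt_or_gt_of_ne ji with h | h
        · exact (H.Tcomm j i (by omega) hi).symm
        · exact H.Tcomm i j (by omega) hj
      have cT' := LinearMap.congr_fun cT.eq (th' c' e)
      have g0 := gT j hj (by rw [lo j (by omega) (by omega), lo (j+1) (by omega) (by omega), hs])
      rw [lo j (by omega) (by omega)] at g0
      have tA := S.t_A vi1 vi hm.symm vj1' (c.lab_inj (by omega))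
        (by rw [← ej]; exact c.lab_inj (by omega)) (c.lab_inj (by omega))
        (by rw [← ej]; exact c.lab_inj (by omega))
      have tA' := LinearMap.congr_fun tA.eq e
      simp only [Module.End.mul_apply] at cT' tA'
      simp only [he, map_sub, g0, ← tA']
      rw [← cT', g0]

theorem th_main (hn : m + k = n) (H : IsHecke q n TZ XZ) (ψ : E →ₗ[ℂ] Z)
    (hψ : S.Good TZ XZ (Idx.base (n := n) (by omega : m ≤ n)) ψ) (N : ℕ) :
    ∀ c : Idx n m, c.inv < N → S.Good TZ XZ c (S.th TZ ψ c) ∧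
      ∀ j, j + 1 < n → (c.lab j).1 = false → (c.lab (j + 1)).1 = true →
        S.th TZ ψ c = S.up TZ j (Idx.sw j c) (S.th TZ ψ (Idx.sw j c)) := by
  induction N with
  | zero => intro c hc; omega
  | succ N IH =>
    intro c hc
    have IH' : ∀ c' : Idx n m, c'.inv < c.inv → _ := fun c' h => IH c' (by omega)
    have hdesc : ∀ j, j + 1 < n → (c.lab j).1 = false → (c.lab (j + 1)).1 = true →
        S.th TZ ψ c = S.up TZ j (Idx.sw j c) (S.th TZ ψ (Idx.sw j c)) := by
      intro j hj j1 j2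
      have hex : ∃ i, i + 1 < n ∧ (c.lab i).1 = false ∧ (c.lab (i + 1)).1 = true := ⟨j, hj, j1, j2⟩
      have hdef : S.th TZ ψ c = S.up TZ hex.choose (Idx.sw hex.choose c)
          (S.th TZ ψ (Idx.sw hex.choose c)) := by
        rw [th, dif_pos hex]
      obtain ⟨hi, i1, i2⟩ := hex.choose_spec
      generalize hex.choose = i at *
      by_cases hij : i = j
      · subst hij; exact hdef
      have mi : (c.lab i).1 ≠ (c.lab (i + 1)).1 := by rw [i1, i2]; simp
      have mj : (c.lab j).1 ≠ (c.lab (j + 1)).1 := by rw [j1, j2]; simp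
      have ne1 : j ≠ i + 1 := by rintro rfl; rw [i2] at j1; simp at j1
      have ne2 : i ≠ j + 1 := by rintro rfl; rw [j2] at i1; simp at i1
      have d1 := (IH' _ (Idx.inv_sw hi c i1 i2)).2 j hj
        (by rw [Idx.lab_sw_of_ne hi c (by omega) (by omega), j1])
        (by rw [Idx.lab_sw_of_ne hi c (by omega) (by omega), j2])
      have d2 := (IH' _ (Idx.inv_sw hj c j1 j2)).2 i hi
        (by rw [Idx.lab_sw_of_ne hj c (by omega) (by omega), i1])
        (by rw [Idx.lab_sw_of_ne hj c (by omega) (by omega), i2])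
      rw [hdef, d1, d2]
      rcases lt_or_gt_of_ne hij with h | h
      · rw [S.th_desc_step TZ XZ hn H hi hj (by omega) _ mi mj, Idx.sw_comm hi hj (by omega)]
      · rw [S.th_desc_step TZ XZ hn H hj hi (by omega) _ mj mi, Idx.sw_comm hi hj (by omega)]
    refine ⟨?_, hdesc⟩
    by_cases hex : ∃ i, i + 1 < n ∧ (c.lab i).1 = false ∧ (c.lab (i + 1)).1 = true
    · obtain ⟨i, hi, i1, i2⟩ := hex
      exact S.good_step TZ XZ hn H hi i1 i2 (S.th TZ ψ) (hdesc i hi i1 i2) IH'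
    · have : c = Idx.base (by omega : m ≤ n) := by
        apply Idx.eq_base
        intro i hi h
        exact hex ⟨i, hi, h⟩
      rw [th, dif_neg hex, this]
      exact hψ

theorem th_T (hn : m + k = n) (H : IsHecke q n TZ XZ) (ψ : E →ₗ[ℂ] Z)
    (hψ : S.Good TZ XZ (Idx.base (n := n) (by omega : m ≤ n)) ψ) {i : ℕ} (hi : i + 1 < n)
    (c : Idx n m) (e : E) :
    TZ i (S.th TZ ψ c e) = S.th TZ ψ c (S.P (c.lab i) (c.lab (i+1)) e)
      + S.th TZ ψ (Idx.sw i c) (S.Q ((Idx.sw i c).lab i) ((Idx.sw i c).lab (i+1)) e) := by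
  have main := fun c : Idx n m => S.th_main TZ XZ hn H ψ hψ (c.inv + 1) c (by omega)
  by_cases hs : (c.lab i).1 = (c.lab (i + 1)).1
  · rw [Idx.sw_same hi c hs, P, Q, if_pos hs, if_pos hs, (main c).1.2 i hi hs]
    simp
  have hs' := Ne.symm hs
  rw [Idx.lab_sw_left hi c hs, Idx.lab_sw_right hi c hs, P, Q, if_neg hs, if_neg hs']
  have vi := c.lab_val hn (i := i) (by omega)
  have vi1 := c.lab_val hn hi
  by_cases h1 : (c.lab i).1 = true
  · have h2 : (c.lab (i + 1)).1 = false := by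
      rw [h1] at hs'; simpa using hs'
    have := (main (Idx.sw i c)).2 i hi (by rw [Idx.lab_sw_left hi c hs, h2])
      (by rw [Idx.lab_sw_right hi c hs, h1])
    rw [this, up_apply, Idx.sw_sw hi, G, if_neg (by rw [h2]; simp)]
    simp
  · have h1 : (c.lab i).1 = false := by simpa using h1
    have h2 : (c.lab (i + 1)).1 = true := by
      rw [h1] at hs'; simpa using hs'
    have hd := (main c).2 i hi h1 h2
    have he : ∀ e, S.th TZ ψ c e = TZ i (S.th TZ ψ (Idx.sw i c) e)
        - S.th TZ ψ (Idx.sw i c) (S.A (c.lab (i+1)) (c.lab i) e) := fun e => by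
      rw [hd, up_apply, Idx.lab_sw_left hi c hs, Idx.lab_sw_right hi c hs]
    rw [G, if_pos h2, S.A_sum vi1 vi hs']
    have hq := LinearMap.congr_fun (H.quad i hi) (S.th TZ ψ (Idx.sw i c) e)
    simp only [Module.End.mul_apply, LinearMap.add_apply, LinearMap.sub_apply, map_sub,
        LinearMap.smul_apply, Module.End.one_apply, map_add, map_smul] at hq ⊢
    simp only [he, map_sub, hq]
    module

/-- the universal map out of `V₀` -/
def uni (n : ℕ) (ψ : E →ₗ[ℂ] Z) : (Idx n m → E) →ₗ[ℂ] Z :=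
  ∑ c : Idx n m, (S.th TZ ψ c) ∘ₗ LinearMap.proj c

theorem uni_apply (ψ : E →ₗ[ℂ] Z) (f : Idx n m → E) :
    S.uni TZ n ψ f = ∑ c : Idx n m, S.th TZ ψ c (f c) := by
  simp [uni]

theorem uni_T (hn : m + k = n) (H : IsHecke q n TZ XZ) (ψ : E →ₗ[ℂ] Z)
    (hψ : S.Good TZ XZ (Idx.base (n := n) (by omega : m ≤ n)) ψ) {i : ℕ} (hi : i + 1 < n)
    (f : Idx n m → E) : S.uni TZ n ψ (S.opT n i f) = TZ i (S.uni TZ n ψ f) := by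
  rw [uni_apply, uni_apply, map_sum]
  simp only [opT_apply, map_add, S.th_T TZ XZ hn H ψ hψ hi, Finset.sum_add_distrib]
  congr 1
  have hinv : Function.Involutive (Idx.sw i : Idx n m → Idx n m) := fun c => Idx.sw_sw hi c
  refine Fintype.sum_equiv (hinv.toPerm) _ _ fun c => ?_
  rw [Function.Involutive.coe_toPerm, Idx.sw_sw hi]

theorem uni_X (hn : m + k = n) (H : IsHecke q n TZ XZ) (ψ : E →ₗ[ℂ] Z)
    (hψ : S.Good TZ XZ (Idx.base (n := n) (by omega : m ≤ n)) ψ) {i : ℕ} (hi : i < n)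
    (f : Idx n m → E) : S.uni TZ n ψ (S.opX n i f) = XZ i (S.uni TZ n ψ f) := by
  rw [uni_apply, uni_apply, map_sum]
  refine Finset.sum_congr rfl fun c _ => ?_
  rw [opX_apply, (S.th_main TZ XZ hn H ψ hψ (c.inv + 1) c (by omega)).1.1 i hi]

theorem uni_base (hmn : m ≤ n) (ψ : E →ₗ[ℂ] Z) (e : E) :
    S.uni TZ n ψ (Pi.single (Idx.base hmn) e) = ψ e := by
  classical
  rw [uni_apply, Finset.sum_eq_single (Idx.base hmn)]
  · rw [Pi.single_eq_same, th, dif_neg]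
    rintro ⟨i, hi, h1, h2⟩
    rw [Idx.color] at h1 h2
    simp [Idx.base] at h1 h2
    omega
  · intro b _ hb
    rw [Pi.single_eq_of_ne hb, map_zero]
  · simp

end LS

namespace LS

variable {q : ℂ} {m k n : ℕ} {E : Type} [AddCommGroup E] [Module ℂ E]
  (S : LS q (Idx.szf m k) (Module.End ℂ E))

theorem opX_single (i : ℕ) (c : Idx n m) (e : E) :
    S.opX n i (Pi.single c e) = Pi.single c (S.x (c.lab i) e) := by
  funext d
  rw [opX_apply]
  by_cases h : d = c
  · subst h; simp
  · rw [Pi.single_eq_of_ne h, Pi.single_eq_of_ne h, map_zero]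

theorem opT_single_same {i : ℕ} (hi : i + 1 < n) (c : Idx n m)
    (hs : (c.lab i).1 = (c.lab (i + 1)).1) (e : E) :
    S.opT n i (Pi.single c e) = Pi.single c (S.t (c.lab i) e) := by
  funext d
  rw [opT_apply]
  by_cases h : d = c
  · subst h; simp [P, Q, hs]
  · have : Idx.sw i d ≠ c := by
      intro h'
      apply h
      rw [← Idx.sw_sw hi d, h', Idx.sw_same hi c hs]
    rw [Pi.single_eq_of_ne h, Pi.single_eq_of_ne h, Pi.single_eq_of_ne this, map_zero, map_zero,
      add_zero]

theorem sw_ne {i : ℕ} (hi : i + 1 < n) (c : Idx n m)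
    (hs : (c.lab i).1 ≠ (c.lab (i + 1)).1) : Idx.sw i c ≠ c := by
  intro h
  apply hs
  conv_lhs => rw [← h]
  rw [Idx.color_sw hi, Equiv.swap_apply_left]

theorem opT_single_mixed {i : ℕ} (hi : i + 1 < n) (c : Idx n m)
    (hs : (c.lab i).1 ≠ (c.lab (i + 1)).1) (e : E) :
    S.opT n i (Pi.single c e) = Pi.single c (S.A (c.lab i) (c.lab (i+1)) e)
      + Pi.single (Idx.sw i c) (S.G (c.lab (i+1)) (c.lab i) e) := by
  have hne := sw_ne hi c hs
  funext d
  rw [opT_apply, Pi.add_apply]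
  by_cases h : d = c
  · subst h
    rw [Pi.single_eq_same, Pi.single_eq_of_ne hne, Pi.single_eq_same, Pi.single_eq_of_ne hne.symm,
      map_zero, P, if_neg hs]
  · by_cases h2 : d = Idx.sw i c
    · subst h2
      rw [Pi.single_eq_of_ne hne, Idx.sw_sw hi, Pi.single_eq_same, Pi.single_eq_of_ne hne,
        Pi.single_eq_same, map_zero, Q, Idx.lab_sw_left hi c hs, Idx.lab_sw_right hi c hs,
        if_neg (Ne.symm hs)]
    · have : Idx.sw i d ≠ c := by
        intro h'
        apply h2
        rw [← h', Idx.sw_sw hi]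
      rw [Pi.single_eq_of_ne h, Pi.single_eq_of_ne h, Pi.single_eq_of_ne this,
        Pi.single_eq_of_ne h2, map_zero, map_zero]

theorem gen_single (hmn : m ≤ n) (W : Submodule ℂ (Idx n m → E))
    (hT : ∀ i, i + 1 < n → ∀ w ∈ W, S.opT n i w ∈ W)
    (hb : ∀ e, Pi.single (Idx.base hmn) e ∈ W) (N : ℕ) :
    ∀ c : Idx n m, c.inv < N → ∀ e, Pi.single c e ∈ W := by
  induction N with
  | zero => intro c h; omega
  | succ N IH =>
    intro c hc e
    by_cases hex : ∃ i, i + 1 < n ∧ (c.lab i).1 = false ∧ (c.lab (i + 1)).1 = true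
    · obtain ⟨i, hi, h1, h2⟩ := hex
      have hs : (c.lab i).1 ≠ (c.lab (i + 1)).1 := by rw [h1, h2]; simp
      have hlt := Idx.inv_sw hi c h1 h2
      have ll := Idx.lab_sw_left hi c hs
      have lr := Idx.lab_sw_right hi c hs
      have hs2 : ((Idx.sw i c).lab i).1 ≠ ((Idx.sw i c).lab (i+1)).1 := by
        rw [ll, lr]; exact hs.symm
      have IH' := IH (Idx.sw i c) (by omega)
      have key := hT i hi _ (IH' e)
      rw [S.opT_single_mixed hi _ hs2, Idx.sw_sw hi, lr, G, if_neg (by rw [h1]; simp)] at key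
      have := W.sub_mem key (IH' (S.A ((Idx.sw i c).lab i) (c.lab i) e))
      simpa using this
    · have : c = Idx.base hmn := by
        apply Idx.eq_base
        intro i hi h
        exact hex ⟨i, hi, h⟩
      rw [this]; exact hb e

theorem gen (hmn : m ≤ n) (W : Submodule ℂ (Idx n m → E))
    (hT : ∀ i, i + 1 < n → ∀ w ∈ W, S.opT n i w ∈ W)
    (hb : ∀ e, Pi.single (Idx.base hmn) e ∈ W) : W = ⊤ := by
  classical
  rw [eq_top_iff]
  intro f _
  rw [← Finset.univ_sum_single f]
  exact W.sum_mem fun c _ => S.gen_single hmn W hT hb (c.inv + 1) c (by omega) (f c)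

theorem aeval_opX (i : ℕ) (π : Polynomial ℂ) (f : Idx n m → E) (c : Idx n m) :
    Polynomial.aeval (S.opX n i) π f c = Polynomial.aeval (S.x (c.lab i)) π (f c) := by
  induction π using Polynomial.induction_on generalizing f with
  | C a => simp [Module.algebraMap_end_apply]
  | add p r hp hr => simp [hp, hr]
  | monomial j a h =>
    have h2 := h (S.opX n i f)
    simp only [map_mul, Polynomial.aeval_C, map_pow, Polynomial.aeval_X, Module.End.mul_apply,
      Module.algebraMap_end_apply, Pi.smul_apply, opX_apply, pow_succ] at h2 ⊢
    exact h2

theorem aeval_mem (W : Submodule ℂ E) (x : Module.End ℂ E) (h : ∀ w ∈ W, x w ∈ W)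
    (π : Polynomial ℂ) : ∀ w ∈ W, Polynomial.aeval x π w ∈ W := by
  induction π using Polynomial.induction_on with
  | C a => intro w hw; simp [Module.algebraMap_end_apply]; exact W.smul_mem _ hw
  | add p r hp hr => intro w hw; simp; exact W.add_mem (hp w hw) (hr w hw)
  | monomial j a h' =>
    intro w hw
    have h2 := h' _ (h w hw)
    simp only [map_mul, Polynomial.aeval_C, map_pow, Polynomial.aeval_X, Module.End.mul_apply,
      Module.algebraMap_end_apply, pow_succ] at h2 ⊢
    exact h2

theorem proj_step (hn : m + k = n) (π : Polynomial ℂ)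
    (hπ : ∀ l, LVal (Idx.szf m k) l → Polynomial.aeval (S.x l) π = if l.1 = true then 1 else 0)
    (W : Submodule ℂ (Idx n m → E))
    (hX : ∀ i, i < n → ∀ w ∈ W, S.opX n i w ∈ W)
    {i : ℕ} (hi : i < n) (b : Bool) (f : Idx n m → E) (hf : f ∈ W) :
    (fun c => if (c.lab i).1 = b then f c else 0) ∈ W := by
  have h1 := aeval_mem W _ (hX i hi) π f hf
  cases b
  · have h2 := W.sub_mem hf h1
    convert h2 using 1
    funext c
    rw [Pi.sub_apply, aeval_opX, hπ _ (c.lab_val hn hi)]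
    by_cases h : (c.lab i).1 = true <;> simp [h]
  · convert h1 using 1
    funext c
    rw [aeval_opX, hπ _ (c.lab_val hn hi)]
    by_cases h : (c.lab i).1 = true <;> simp [h]

theorem proj_single (hn : m + k = n) (π : Polynomial ℂ)
    (hπ : ∀ l, LVal (Idx.szf m k) l → Polynomial.aeval (S.x l) π = if l.1 = true then 1 else 0)
    (W : Submodule ℂ (Idx n m → E))
    (hX : ∀ i, i < n → ∀ w ∈ W, S.opX n i w ∈ W)
    (c : Idx n m) (f : Idx n m → E) (hf : f ∈ W) : Pi.single c (f c) ∈ W := by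
  classical
  have key : ∀ j, j ≤ n → (fun d : Idx n m => if ∀ i < j, (d.lab i).1 = (c.lab i).1 then f d else 0)
      ∈ W := by
    intro j
    induction j with
    | zero => intro _; simpa using hf
    | succ j ih =>
      intro hj
      have := S.proj_step hn π hπ W hX (i := j) (by omega) (c.lab j).1 _ (ih (by omega))
      convert this using 1
      funext d
      by_cases h : (d.lab j).1 = (c.lab j).1
      · rw [if_pos h]
        congr 1
        rw [eq_iff_iff]
        constructor
        · intro h' i hi; exact h' i (by omega)
        · intro h' i hi
          by_cases e : i = j
          · subst e; exact h
          · exact h' i (by omega)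
      · rw [if_neg h, if_neg]
        intro h'; exact h (h' j (by omega))
  convert key n le_rfl using 1
  funext d
  by_cases h : d = c
  · subst h; simp
  · rw [Pi.single_eq_of_ne h, if_neg]
    intro h'; exact h (Idx.ext' h')

theorem down (hn : m + k = n) (π : Polynomial ℂ)
    (hπ : ∀ l, LVal (Idx.szf m k) l → Polynomial.aeval (S.x l) π = if l.1 = true then 1 else 0)
    (W : Submodule ℂ (Idx n m → E))
    (hX : ∀ i, i < n → ∀ w ∈ W, S.opX n i w ∈ W)
    (hT : ∀ i, i + 1 < n → ∀ w ∈ W, S.opT n i w ∈ W) (N : ℕ) :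
    ∀ c : Idx n m, c.inv < N → ∀ e, e ≠ 0 → Pi.single c e ∈ W →
      ∃ e', e' ≠ 0 ∧ Pi.single (Idx.base (by omega : m ≤ n)) e' ∈ W := by
  induction N with
  | zero => intro c h; omega
  | succ N IH =>
    intro c hc e he hW
    by_cases hex : ∃ i, i + 1 < n ∧ (c.lab i).1 = false ∧ (c.lab (i + 1)).1 = true
    · obtain ⟨i, hi, h1, h2⟩ := hex
      have hs : (c.lab i).1 ≠ (c.lab (i + 1)).1 := by rw [h1, h2]; simp
      have hlt := Idx.inv_sw hi c h1 h2
      have key := S.proj_single hn π hπ W hX (Idx.sw i c) _ (hT i hi _ hW)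
      rw [S.opT_single_mixed hi c hs, Pi.add_apply, Pi.single_eq_same,
        Pi.single_eq_of_ne (sw_ne hi c hs), zero_add] at key
      refine IH (Idx.sw i c) (by omega) _ ?_ key
      have := (Module.End.isUnit_iff _).1
        (S.G_unit (c.lab_val hn hi) (c.lab_val hn (i := i) (by omega)) hs.symm)
      intro h0
      exact he (this.1 (by rw [h0, map_zero]))
    · have : c = Idx.base (by omega : m ≤ n) := by
        apply Idx.eq_base
        intro i hi h
        exact hex ⟨i, hi, h⟩
      rw [this] at hW
      exact ⟨e, he, hW⟩

theorem irred (hn : m + k = n) (π : Polynomial ℂ)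
    (hπ : ∀ l, LVal (Idx.szf m k) l → Polynomial.aeval (S.x l) π = if l.1 = true then 1 else 0)
    (W : Submodule ℂ (Idx n m → E))
    (hX : ∀ i, i < n → ∀ w ∈ W, S.opX n i w ∈ W)
    (hT : ∀ i, i + 1 < n → ∀ w ∈ W, S.opT n i w ∈ W)
    (hE : ∀ U : Submodule ℂ E, (∀ l, LVal (Idx.szf m k) l → ∀ u ∈ U, S.x l u ∈ U) →
      (∀ l, LVal (Idx.szf m k) (lsucc l) → ∀ u ∈ U, S.t l u ∈ U) → U = ⊥ ∨ U = ⊤) :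
    W = ⊥ ∨ W = ⊤ := by
  by_cases hW : W = ⊥
  · exact Or.inl hW
  right
  obtain ⟨f, hf, hf0⟩ := W.ne_bot_iff.1 hW
  obtain ⟨c, hc⟩ := Function.ne_iff.1 hf0
  obtain ⟨e, he, heW⟩ := S.down hn π hπ W hX hT (c.inv + 1) c (by omega) (f c) hc
    (S.proj_single hn π hπ W hX c f hf)
  have hmn : m ≤ n := by omega
  set U : Submodule ℂ E := W.comap (LinearMap.single ℂ (fun _ => E) (Idx.base hmn)) with hU
  have memU : ∀ e, e ∈ U ↔ Pi.single (Idx.base hmn) e ∈ W := fun e => Iff.rfl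
  have exl : ∀ l, LVal (Idx.szf m k) l → ∃ i, i < n ∧ (Idx.base hmn).lab i = l := by
    rintro ⟨b, r⟩ hl
    cases b
    · have : r < k := hl
      exact ⟨m + r, by omega, Idx.lab_base_ge hmn r⟩
    · have : r < m := hl
      exact ⟨r, by omega, Idx.lab_base_lt hmn this⟩
  have exl2 : ∀ l, LVal (Idx.szf m k) (lsucc l) → ∃ i, i + 1 < n ∧ (Idx.base hmn).lab i = l ∧
      (Idx.base hmn).lab (i+1) = lsucc l := by
    rintro ⟨b, r⟩ hl
    cases b
    · have : r + 1 < k := hl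
      exact ⟨m + r, by omega, Idx.lab_base_ge hmn r, Idx.lab_base_ge hmn (r+1)⟩
    · have : r + 1 < m := hl
      exact ⟨r, by omega, Idx.lab_base_lt hmn (by omega), Idx.lab_base_lt hmn this⟩
  have hUtop : U = ⊤ := by
    refine (hE U ?_ ?_).resolve_left ?_
    · intro l hl u hu
      obtain ⟨i, hi, hil⟩ := exl l hl
      rw [memU] at *
      have := hX i hi _ hu
      rwa [opX_single, hil] at this
    · intro l hl u hu
      obtain ⟨i, hi, hil, hil2⟩ := exl2 l hl
      rw [memU] at *
      have := hT i hi _ hu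
      rwa [S.opT_single_same hi _ (by rw [hil, hil2]; rfl), hil] at this
    · intro h
      have : e ∈ U := heW
      rw [h] at this
      exact he (by simpa using this)
  apply S.gen hmn W hT
  intro e
  rw [← memU, hUtop]; trivial

theorem opX_eig (i : ℕ) (z : ℂ) (f : Idx n m → E) (hf : f ≠ 0) (h : S.opX n i f = z • f) :
    ∃ c : Idx n m, ∃ e, e ≠ 0 ∧ S.x (c.lab i) e = z • e := by
  obtain ⟨c, hc⟩ := Function.ne_iff.1 hf
  exact ⟨c, f c, hc, congrFun h c⟩

end LS

theorem HA_ind {p₁ : ℂ} {n : ℕ} (P : HA p₁ n → Prop) (hC : ∀ z : ℂ, P (algebraMap ℂ _ z))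
    (hT : ∀ i, P (TgA p₁ i)) (hX : ∀ i, P (XgA p₁ i)) (hXi : ∀ i, P (XigA p₁ i))
    (hadd : ∀ x y, P x → P y → P (x + y)) (hmul : ∀ x y, P x → P y → P (x * y)) (x : HA p₁ n) :
    P x := by
  obtain ⟨y, rfl⟩ := RingQuot.mkAlgHom_surjective ℂ (HARel p₁ n) x
  induction y using FreeAlgebra.induction with
  | grade0 r => rw [AlgHom.commutes]; exact hC r
  | grade1 g =>
    cases g with
    | T i => exact hT i
    | X i => exact hX i
    | Xi i => exact hXi i
  | mul a b ha hb => rw [map_mul]; exact hmul _ _ ha hb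
  | add a b ha hb => rw [map_add]; exact hadd _ _ ha hb

/-- nat-indexed generators -/
def hT (p₁ : ℂ) (n : ℕ) (i : ℕ) : HA p₁ n := if h : i < n - 1 then TgA p₁ ⟨i, h⟩ else 0
def hX (p₁ : ℂ) (n : ℕ) (i : ℕ) : HA p₁ n := if h : i < n then XgA p₁ ⟨i, h⟩ else 0
def hXi (p₁ : ℂ) (n : ℕ) (i : ℕ) : HA p₁ n := if h : i < n then XigA p₁ ⟨i, h⟩ else 0

section
variable {p₁ : ℂ} {n : ℕ}
theorem hT_eq (i : Fin (n - 1)) : hT p₁ n i = TgA p₁ i := by simp [hT]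
theorem hX_eq (i : Fin n) : hX p₁ n i = XgA p₁ i := by simp [hX]
theorem hXi_eq (i : Fin n) : hXi p₁ n i = XigA p₁ i := by simp [hXi]

theorem HA_rel {x y : FreeAlgebra ℂ (AGen n)} (h : HARel p₁ n x y) :
    RingQuot.mkAlgHom ℂ (HARel p₁ n) x = RingQuot.mkAlgHom ℂ (HARel p₁ n) y :=
  RingQuot.mkAlgHom_rel ℂ h

theorem XXi (i : Fin n) : XgA p₁ i * XigA p₁ i = 1 := by
  have := HA_rel (HARel.Xinv_right (p₁ := p₁) i)
  simp only [map_mul, map_one] at this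
  exact this
theorem XiX (i : Fin n) : XigA p₁ i * XgA p₁ i = 1 := by
  have := HA_rel (HARel.Xinv_left (p₁ := p₁) i)
  simp only [map_mul, map_one] at this
  exact this

theorem HA_hecke (hp : p₁ ≠ 0) : IsHecke (p₁ - p₁⁻¹) n (hT p₁ n) (hX p₁ n) where
  Xcomm i j hi hj := by
    rw [hX, hX, dif_pos hi, dif_pos hj]
    have := HA_rel (HARel.Xcomm (p₁ := p₁) ⟨i, hi⟩ ⟨j, hj⟩)
    rw [map_mul, map_mul] at this
    exact this
  Xunit i hi := by
    rw [hX, dif_pos hi]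
    exact ⟨⟨_, _, XXi ⟨i, hi⟩, XiX ⟨i, hi⟩⟩, rfl⟩
  braid i hi := by
    have h1 : i < n - 1 := by omega
    have h2 : i + 1 < n - 1 := by omega
    rw [hT, hT, dif_pos h1, dif_pos h2]
    have := HA_rel (HARel.braid (p₁ := p₁) ⟨i, h1⟩ ⟨i+1, h2⟩ rfl)
    simp only [map_mul] at this
    exact this
  Tcomm i j hij hj := by
    have h1 : i < n - 1 := by omega
    have h2 : j < n - 1 := by omega
    rw [hT, hT, dif_pos h1, dif_pos h2]
    have := HA_rel (HARel.Tcomm (p₁ := p₁) ⟨i, h1⟩ ⟨j, h2⟩ (Or.inl hij))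
    simp only [map_mul] at this
    exact this
  quad i hi := by
    have h1 : i < n - 1 := by omega
    rw [hT, dif_pos h1]
    have := HA_rel (HARel.quad (p₁ := p₁) ⟨i, h1⟩)
    simp only [map_mul, map_sub, map_add, AlgHom.commutes, map_zero] at this
    change (TgA p₁ ⟨i, h1⟩ - _) * (TgA p₁ ⟨i, h1⟩ + _) = 0 at this
    generalize TgA p₁ ⟨i, h1⟩ = t at *
    rw [Algebra.algebraMap_eq_smul_one, Algebra.algebraMap_eq_smul_one] at this
    simp only [sub_mul, mul_add, smul_mul_assoc, mul_smul_comm, one_mul, mul_one, smul_add, smul_sub,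
      smul_smul, mul_inv_cancel₀ hp, inv_mul_cancel₀ hp, one_smul] at this
    rw [← sub_eq_zero, ← this]
    module
  TXT i hi := by
    have h1 : i < n - 1 := by omega
    have h2 : i < n := by omega
    rw [hT, hX, hX, dif_pos h1, dif_pos h2, dif_pos hi]
    have := HA_rel (HARel.TXT (p₁ := p₁) ⟨i, h1⟩ ⟨i, h2⟩ ⟨i+1, hi⟩ rfl rfl)
    simp only [map_mul] at this
    exact this
  TXcomm i a hi ha n1 n2 := by
    have h1 : i < n - 1 := by omega
    rw [hT, hX, dif_pos h1, dif_pos ha]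
    have := HA_rel (HARel.TXcomm (p₁ := p₁) ⟨i, h1⟩ ⟨a, ha⟩ ⟨n1, n2⟩)
    simp only [map_mul] at this
    exact this

theorem IsHecke.map {q : ℂ} {R R' : Type*} [Ring R] [Algebra ℂ R] [Ring R'] [Algebra ℂ R']
    {T X : ℕ → R} (H : IsHecke q n T X) (φ : R →ₐ[ℂ] R') :
    IsHecke q n (fun i => φ (T i)) (fun i => φ (X i)) where
  Xcomm i j hi hj := (H.Xcomm i j hi hj).map φ
  Xunit i hi := (H.Xunit i hi).map φ
  braid i hi := by simp only [← map_mul, H.braid i hi]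
  Tcomm i j hi hj := (H.Tcomm i j hi hj).map φ
  quad i hi := by rw [← map_mul, H.quad i hi, map_add, map_smul, map_one]
  TXT i hi := by simp only [← map_mul, H.TXT i hi]
  TXcomm i a hi ha h1 h2 := (H.TXcomm i a hi ha h1 h2).map φ

theorem IsHecke.left {q : ℂ} {R : Type*} [Ring R] [Algebra ℂ R] {T X : ℕ → R}
    (H : IsHecke q n T X) {m : ℕ} (h : m ≤ n) : IsHecke q m T X where
  Xcomm i j hi hj := H.Xcomm i j (by omega) (by omega)
  Xunit i hi := H.Xunit i (by omega)
  braid i hi := H.braid i (by omega)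
  Tcomm i j hi hj := H.Tcomm i j hi (by omega)
  quad i hi := H.quad i (by omega)
  TXT i hi := H.TXT i (by omega)
  TXcomm i a hi ha h1 h2 := H.TXcomm i a (by omega) (by omega) h1 h2

theorem IsHecke.right {q : ℂ} {R : Type*} [Ring R] [Algebra ℂ R] {T X : ℕ → R}
    (H : IsHecke q n T X) {m k : ℕ} (h : m + k = n) :
    IsHecke q k (fun i => T (m + i)) (fun i => X (m + i)) where
  Xcomm i j hi hj := H.Xcomm _ _ (by omega) (by omega)
  Xunit i hi := H.Xunit _ (by omega)
  braid i hi := H.braid (m + i) (by omega)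
  Tcomm i j hi hj := H.Tcomm _ _ (by omega) (by omega)
  quad i hi := H.quad _ (by omega)
  TXT i hi := H.TXT (m + i) (by omega)
  TXcomm i a hi ha h1 h2 := H.TXcomm (m+i) (m+a) (by omega) (by omega) (by omega) (by omega)

def genMap {R : Type*} [Ring R] (T X : ℕ → R) : AGen n → R
  | AGen.T i => T i
  | AGen.X i => X i
  | AGen.Xi i => Ring.inverse (X i)

/-- lifting a Hecke family to the algebra -/
theorem exists_lift (hp : p₁ ≠ 0) {R : Type*} [Ring R] [Algebra ℂ R] {T X : ℕ → R}
    (H : IsHecke (p₁ - p₁⁻¹) n T X) :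
    ∃ φ : HA p₁ n →ₐ[ℂ] R, (∀ i, φ (TgA p₁ i) = T i) ∧ (∀ i, φ (XgA p₁ i) = X i) ∧
      (∀ i, φ (XigA p₁ i) = Ring.inverse (X i)) := by
  have w : ∀ ⦃x y⦄, HARel p₁ n x y → FreeAlgebra.lift ℂ (genMap T X) x
      = FreeAlgebra.lift ℂ (genMap T X) y := by
    intro x y h
    cases h with
    | Xcomm i j =>
      simp only [aX, map_mul, FreeAlgebra.lift_ι_apply, genMap]
      exact H.Xcomm i j i.2 j.2
    | Xinv_right i =>
      simp only [aX, aXi, map_mul, FreeAlgebra.lift_ι_apply, genMap, map_one]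
      exact Ring.mul_inverse_cancel _ (H.Xunit i i.2)
    | Xinv_left i =>
      simp only [aX, aXi, map_mul, FreeAlgebra.lift_ι_apply, genMap, map_one]
      exact Ring.inverse_mul_cancel _ (H.Xunit i i.2)
    | braid i j hj =>
      simp only [aT, map_mul, FreeAlgebra.lift_ι_apply, genMap, hj]
      exact H.braid i (by omega)
    | Tcomm i j h =>
      simp only [aT, map_mul, FreeAlgebra.lift_ι_apply, genMap]
      rcases h with h | h
      · exact H.Tcomm i j h (by omega)
      · exact (H.Tcomm j i h (by omega)).symm
    | quad i =>
      have := H.quad i (by omega)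
      simp only [aT, map_mul, map_sub, map_add, map_zero, FreeAlgebra.lift_ι_apply, genMap,
        AlgHom.commutes]
      generalize T i = t at *
      rw [Algebra.algebraMap_eq_smul_one, Algebra.algebraMap_eq_smul_one]
      simp only [sub_mul, mul_add, smul_mul_assoc, mul_smul_comm, one_mul, mul_one, smul_add, smul_sub,
        smul_smul, mul_inv_cancel₀ hp, inv_mul_cancel₀ hp, one_smul, this]
      module
    | TXT k a b ha hb =>
      simp only [aT, aX, map_mul, FreeAlgebra.lift_ι_apply, genMap, ha, hb]
      exact H.TXT k (by omega)
    | TXcomm k a h =>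
      simp only [aT, aX, map_mul, FreeAlgebra.lift_ι_apply, genMap]
      exact H.TXcomm k a (by omega) a.2 h.1 h.2
  refine ⟨RingQuot.liftAlgHom ℂ ⟨FreeAlgebra.lift ℂ (genMap T X), w⟩, ?_, ?_, ?_⟩
  · intro i; rw [TgA, RingQuot.liftAlgHom_mkAlgHom_apply]; simp [aT, genMap]
  · intro i; rw [XgA, RingQuot.liftAlgHom_mkAlgHom_apply]; simp [aX, genMap]
  · intro i; rw [XigA, RingQuot.liftAlgHom_mkAlgHom_apply]; simp [aXi, genMap]

theorem Xi_eq {R : Type*} [Ring R] [Algebra ℂ R] (φ : HA p₁ n →ₐ[ℂ] R) (i : Fin n) :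
    φ (XigA p₁ i) = Ring.inverse (φ (XgA p₁ i)) := by
  have h1 : φ (XgA p₁ i) * φ (XigA p₁ i) = 1 := by rw [← map_mul, XXi, map_one]
  have h2 : φ (XigA p₁ i) * φ (XgA p₁ i) = 1 := by rw [← map_mul, XiX, map_one]
  exact (Ring.inverse_unit ⟨_, _, h1, h2⟩).symm

theorem exists_emb (hp : p₁ ≠ 0) {m k n : ℕ} (h : m + k = n) :
    ∃ (em₁ : HA p₁ m →ₐ[ℂ] HA p₁ n) (em₂ : HA p₁ k →ₐ[ℂ] HA p₁ n),
      IsEmb1 p₁ m n em₁ ∧ IsEmb2 p₁ m k n em₂ := by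
  have H := HA_hecke (n := n) hp
  obtain ⟨f, f1, f2, f3⟩ := exists_lift hp (H.left (m := m) (by omega))
  obtain ⟨g, g1, g2, g3⟩ := exists_lift hp (H.right h)
  refine ⟨f, g, ⟨?_, ?_, ?_⟩, ⟨?_, ?_, ?_⟩⟩
  · intro i i' h; rw [f1, ← h, hT_eq]
  · intro i i' h; rw [f2, ← h, hX_eq]
  · intro i i' h; rw [f3, ← h, hX_eq]; exact (Xi_eq (AlgHom.id ℂ _) i').symm
  · intro i i' h; rw [g1, ← h, hT_eq]
  · intro i i' h; rw [g2, ← h, hX_eq]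
  · intro i i' h; rw [g3, ← h, hX_eq]; exact (Xi_eq (AlgHom.id ℂ _) i').symm

/-- operators of a representation -/
def ARep.T (M : ARep p₁ n) (i : ℕ) : Module.End ℂ M.carrier := M.rho (hT p₁ n i)
def ARep.X (M : ARep p₁ n) (i : ℕ) : Module.End ℂ M.carrier := M.rho (hX p₁ n i)

theorem ARep.hecke (hp : p₁ ≠ 0) (M : ARep p₁ n) : IsHecke (p₁ - p₁⁻¹) n M.T M.X :=
  (HA_hecke hp).map M.rho

theorem stable_inv {V : Type*} [AddCommGroup V] [Module ℂ V] [FiniteDimensional ℂ V]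
    (W : Submodule ℂ V) (x y : Module.End ℂ V) (hyx : y * x = 1) (h : ∀ w ∈ W, x w ∈ W) :
    ∀ w ∈ W, y w ∈ W := by
  have hyx' : ∀ v, y (x v) = v := fun v => LinearMap.congr_fun hyx v
  have inj : Function.Injective x := fun a b hab => by rw [← hyx' a, hab, hyx']
  have hle : W.map x ≤ W := by
    rintro _ ⟨w, hw, rfl⟩; exact h w hw
  have : W.map x = W := Submodule.eq_of_le_of_finrank_eq hle
    (LinearEquiv.finrank_map_eq (LinearEquiv.ofInjectiveEndo x inj) W)
  intro w hw
  rw [← this] at hw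
  obtain ⟨w', hw', rfl⟩ := hw
  rw [hyx']; exact hw'

theorem ARep.stable (M : ARep p₁ n) (W : Submodule ℂ M.carrier)
    (hT : ∀ i, i + 1 < n → ∀ w ∈ W, M.T i w ∈ W) (hX : ∀ i, i < n → ∀ w ∈ W, M.X i w ∈ W) :
    ∀ x : HA p₁ n, ∀ w ∈ W, M.rho x w ∈ W := by
  intro x
  refine HA_ind (fun x => ∀ w ∈ W, M.rho x w ∈ W) ?_ ?_ ?_ ?_ ?_ ?_ x
  · intro z w hw
    rw [AlgHom.commutes, Module.algebraMap_end_apply]; exact W.smul_mem _ hw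
  · intro i w hw
    rw [← hT_eq]; exact hT i (by omega) w hw
  · intro i w hw
    rw [← hX_eq]; exact hX i i.2 w hw
  · intro i
    refine stable_inv W (M.rho (XgA p₁ i)) _ (by rw [← map_mul, XiX, map_one]) ?_
    intro w hw
    rw [← hX_eq]; exact hX i i.2 w hw
  · intro x y hx hy w hw
    rw [map_add]; exact W.add_mem (hx w hw) (hy w hw)
  · intro x y hx hy w hw
    rw [map_mul]; exact hx _ (hy w hw)

/-- intertwining on generators suffices -/
theorem intertwine {V Z : Type*} [AddCommGroup V] [Module ℂ V] [AddCommGroup Z] [Module ℂ Z]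
    (r : HA p₁ n →ₐ[ℂ] Module.End ℂ V) (s : HA p₁ n →ₐ[ℂ] Module.End ℂ Z) (g : V →ₗ[ℂ] Z)
    (hT : ∀ i, i + 1 < n → ∀ w, g (r (hT p₁ n i) w) = s (hT p₁ n i) (g w))
    (hX : ∀ i, i < n → ∀ w, g (r (hX p₁ n i) w) = s (hX p₁ n i) (g w)) :
    ∀ x w, g (r x w) = s x (g w) := by
  intro x
  refine HA_ind (fun x => ∀ w, g (r x w) = s x (g w)) ?_ ?_ ?_ ?_ ?_ ?_ x
  · intro z w; simp [Module.algebraMap_end_apply]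
  · intro i w
    rw [← hT_eq]; exact hT i (by omega) w
  · intro i w
    rw [← hX_eq]; exact hX i i.2 w
  · intro i w
    have h := hX i i.2 (r (XigA p₁ i) w)
    rw [hX_eq, ← Module.End.mul_apply, ← map_mul, XXi, map_one, Module.End.one_apply] at h
    rw [h, ← Module.End.mul_apply, ← map_mul, XiX, map_one, Module.End.one_apply]
  · intro x y hx hy w
    simp only [map_add, LinearMap.add_apply, hx, hy]
  · intro x y hx hy w
    simp only [map_mul, Module.End.mul_apply, hx, hy]

theorem emb1_T {m n : ℕ} {em : HA p₁ m →ₐ[ℂ] HA p₁ n} (h : IsEmb1 p₁ m n em) (hmn : m ≤ n) {i : ℕ}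
    (hi : i + 1 < m) : em (hT p₁ m i) = hT p₁ n i := by
  rw [hT, hT, dif_pos (by omega), dif_pos (by omega)]
  exact h.1 ⟨i, by omega⟩ ⟨i, by omega⟩ rfl

theorem emb1_X {m n : ℕ} {em : HA p₁ m →ₐ[ℂ] HA p₁ n} (h : IsEmb1 p₁ m n em) (hmn : m ≤ n) {i : ℕ}
    (hi : i < m) : em (hX p₁ m i) = hX p₁ n i := by
  rw [hX, hX, dif_pos (by omega), dif_pos (by omega)]
  exact h.2.1 ⟨i, by omega⟩ ⟨i, by omega⟩ rfl

theorem emb2_T {m k n : ℕ} {em : HA p₁ k →ₐ[ℂ] HA p₁ n} (h : IsEmb2 p₁ m k n em) (hmn : m + k = n)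
    {i : ℕ} (hi : i + 1 < k) : em (hT p₁ k i) = hT p₁ n (m + i) := by
  rw [hT, hT, dif_pos (by omega), dif_pos (by omega)]
  exact h.1 ⟨i, by omega⟩ ⟨m + i, by omega⟩ rfl

theorem emb2_X {m k n : ℕ} {em : HA p₁ k →ₐ[ℂ] HA p₁ n} (h : IsEmb2 p₁ m k n em) (hmn : m + k = n)
    {i : ℕ} (hi : i < k) : em (hX p₁ k i) = hX p₁ n (m + i) := by
  rw [hX, hX, dif_pos (by omega), dif_pos (by omega)]
  exact h.2.1 ⟨i, by omega⟩ ⟨m + i, by omega⟩ rfl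

end

open scoped TensorProduct
theorem burnside {V : Type} [AddCommGroup V] [Module ℂ V] [FiniteDimensional ℂ V] [Nontrivial V]
    (A : Subalgebra ℂ (Module.End ℂ V))
    (h : ∀ W : Submodule ℂ V, (∀ a ∈ A, ∀ w ∈ W, a w ∈ W) → W = ⊥ ∨ W = ⊤) (f : Module.End ℂ V) :
    f ∈ A := by
  classical
  have hsm : IsSimpleModule A V := by
    rw [isSimpleModule_iff]
    refine { eq_bot_or_eq_top := fun U => ?_ }
    rcases h (U.restrictScalars ℂ) (fun a ha w hw => U.smul_mem (⟨a, ha⟩ : A) hw) with h | h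
    · left; exact (Submodule.restrictScalars_eq_bot_iff ℂ _ _).1 h
    · right; exact (Submodule.restrictScalars_eq_top_iff ℂ _ _).1 h
  have bij := (IsSimpleModule.algebraMap_end_bijective_of_isAlgClosed (A := A) (V := V) ℂ).2
  let f' : Module.End (Module.End A V) V :=
    { toFun := f
      map_add' := f.map_add
      map_smul' := by
        intro g v
        obtain ⟨z, rfl⟩ := bij g
        simp [Module.algebraMap_end_apply] }
  let b := Module.finBasis ℂ V
  obtain ⟨r, hr⟩ := jacobson_density (R := A) f' (Finset.univ.image b)
  have : f = r.1 := by
    apply b.ext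
    intro i
    exact hr (b i) (Finset.mem_image_of_mem _ (Finset.mem_univ _))
  rw [this]; exact r.2

theorem sq_flip {R : Type*} [Ring R] (a b : R) : (a - b) * (a - b) = (b - a) * (b - a) := by
  noncomm_ring

section
variable {p₁ : ℂ}

theorem rho_surj {m : ℕ} (M : ARep p₁ m) (hM : IsIrredA M) : Function.Surjective M.rho := by
  intro f
  obtain ⟨v, hv⟩ := hM.1
  haveI : Nontrivial M.carrier := ⟨v, 0, hv⟩
  have := burnside M.rho.range (fun W hW => hM.2 W fun x w hw => hW _ ⟨x, rfl⟩ w hw) f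
  exact this

theorem tensor_irred_aux {M N : Type} [AddCommGroup M] [Module ℂ M] [FiniteDimensional ℂ M]
    [AddCommGroup N] [Module ℂ N] [FiniteDimensional ℂ N] (U : Submodule ℂ (M ⊗[ℂ] N))
    (h1 : ∀ f : Module.End ℂ M, ∀ u ∈ U, f.rTensor N u ∈ U)
    (h2 : ∀ f : Module.End ℂ N, ∀ u ∈ U, f.lTensor M u ∈ U) : U = ⊥ ∨ U = ⊤ := by
  classical
  by_cases hU : U = ⊥
  · exact Or.inl hU
  right
  obtain ⟨u, hu, hu0⟩ := U.ne_bot_iff.1 hU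
  let b := Module.finBasis ℂ M
  let e := TensorProduct.equivFinsuppOfBasisLeft (N := N) b
  have he : e u ≠ 0 := by simpa using hu0
  obtain ⟨i, hi⟩ := Finsupp.ne_iff.1 he
  have key : ∀ x : M, x ⊗ₜ[ℂ] (e u i) ∈ U := by
    intro x
    have : x ⊗ₜ[ℂ] (e u i) = ((b.coord i).smulRight x).rTensor N u := by
      generalize u = w
      induction w using TensorProduct.induction_on with
      | zero => simp
      | add a b ha hb => rw [map_add, map_add, ← ha, ← hb, Finsupp.add_apply, TensorProduct.tmul_add]
      | tmul y z =>
        simp [e, TensorProduct.equivFinsuppOfBasisLeft_apply_tmul_apply, TensorProduct.smul_tmul]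
    rw [this]; exact h1 _ u hu
  have key2 : ∀ (x : M) (y : N), x ⊗ₜ[ℂ] y ∈ U := by
    intro x y
    obtain ⟨φ, hφ⟩ : ∃ φ : N →ₗ[ℂ] ℂ, φ (e u i) ≠ 0 := by
      by_contra hcon
      push Not at hcon
      exact hi ((Module.forall_dual_apply_eq_zero_iff ℂ _).1 hcon)
    have := h2 (φ.smulRight ((φ (e u i))⁻¹ • y)) _ (key x)
    rw [LinearMap.lTensor_tmul, LinearMap.smulRight_apply, smul_smul, mul_inv_cancel₀ hφ,
      one_smul] at this
    exact this
  rw [eq_top_iff, ← TensorProduct.span_tmul_eq_top, Submodule.span_le]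
  rintro _ ⟨x, y, rfl⟩
  exact key2 x y

theorem eig_map {M E : Type} [AddCommGroup M] [Module ℂ M] [FiniteDimensional ℂ M]
    [AddCommGroup E] [Module ℂ E] {a : Module.End ℂ M} {I : Set ℂ}
    (ha : ∀ (z : ℂ) (v : M), v ≠ 0 → a v = z • v → z ∈ I)
    (φ : Module.End ℂ M →ₐ[ℂ] Module.End ℂ E) (z : ℂ) (v : E) (hv : v ≠ 0) (h : φ a v = z • v) :
    z ∈ I := by
  by_contra hz
  have hu : IsUnit (a - z • 1) := by
    rw [LinearMap.isUnit_iff_ker_eq_bot, LinearMap.ker_eq_bot']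
    intro w hw
    by_contra hw0
    refine hz (ha z w hw0 ?_)
    rw [← sub_eq_zero]; simpa using hw
  have := hu.map φ
  rw [map_sub, map_smul, map_one] at this
  apply hv
  apply ((Module.End.isUnit_iff _).1 this).1
  simp [h]

theorem comm_unit {E : Type} [AddCommGroup E] [Module ℂ E] [FiniteDimensional ℂ E]
    {a b : Module.End ℂ E} (hab : Commute a b) {I J : Set ℂ}
    (ha : ∀ (z : ℂ) (v : E), v ≠ 0 → a v = z • v → z ∈ I)
    (hb : ∀ (z : ℂ) (v : E), v ≠ 0 → b v = z • v → z ∈ J) {z : ℂ}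
    (hz : ∀ β ∈ J, z * β ∉ I) : IsUnit (a - z • b) := by
  rw [LinearMap.isUnit_iff_ker_eq_bot]
  by_contra hK
  have hst : ∀ v ∈ LinearMap.ker (a - z • b), b v ∈ LinearMap.ker (a - z • b) := by
    intro v hv
    have h1 := LinearMap.congr_fun hab.eq v
    simp only [LinearMap.mem_ker, LinearMap.sub_apply, LinearMap.smul_apply, sub_eq_zero,
      Module.End.mul_apply] at *
    rw [h1, hv, map_smul]
  haveI : Nontrivial (LinearMap.ker (a - z • b)) := Submodule.nontrivial_iff_ne_bot.2 hK
  obtain ⟨β, hβ⟩ := Module.End.exists_eigenvalue (b.restrict hst)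
  obtain ⟨v, hv⟩ := hβ.exists_hasEigenvector
  have hv0 : (v : E) ≠ 0 := by simpa using hv.2
  have h1 : b v = β • (v : E) := by
    have := congrArg Subtype.val (Module.End.mem_eigenspace_iff.1 hv.1)
    simpa using this
  have h2 : a v = (z * β) • (v : E) := by
    have := v.2
    simp only [LinearMap.mem_ker, LinearMap.sub_apply, LinearMap.smul_apply, sub_eq_zero] at this
    rw [this, h1, smul_smul]
  exact hz β (hb β v hv0 h1) (ha _ v hv0 h2)

theorem ZInv.disj {I J : Set ℂ} (hp : p₁ ≠ 0) (hJ : ZInv p₁ J) (hIJ : I ∩ J = ∅) :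
    (∀ β ∈ J, (1 : ℂ) * β ∉ I) ∧ (∀ β ∈ J, p₁ ^ 2 * β ∉ I) ∧ (∀ β ∈ J, (p₁ ^ 2)⁻¹ * β ∉ I) := by
  have hd : ∀ z, z ∈ J → z ∉ I := fun z hz hz' => by
    have : z ∈ I ∩ J := ⟨hz', hz⟩
    rw [hIJ] at this; exact this
  refine ⟨fun β h => ?_, fun β h => ?_, fun β h => ?_⟩
  · rw [one_mul]; exact hd _ h
  · rw [mul_comm]; exact hd _ (hJ β h).1
  · rw [mul_comm]; exact hd _ (hJ β h).2

theorem ue_factor {R : Type*} [Ring R] [Algebra ℂ R] (hp : p₁ ≠ 0) {a b : R} (hab : Commute a b) :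
    (a - b) * (a - b) - ((p₁ - p₁⁻¹) * (p₁ - p₁⁻¹)) • (b * a)
      = (a - (p₁ ^ 2) • b) * (a - (p₁ ^ 2)⁻¹ • b) := by
  have h1 : p₁ ^ 2 * (p₁ ^ 2)⁻¹ = 1 := mul_inv_cancel₀ (pow_ne_zero 2 hp)
  have h2 : (p₁ - p₁⁻¹) * (p₁ - p₁⁻¹) = p₁ ^ 2 + (p₁ ^ 2)⁻¹ - 2 := by
    field_simp; ring
  rw [h2]
  generalize (p₁ ^ 2)⁻¹ = r at *
  generalize p₁ ^ 2 = s at *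
  have h1' : r * s = 1 := by rw [mul_comm, h1]
  simp only [sub_mul, mul_sub, smul_mul_assoc, mul_smul_comm, smul_smul, h1, h1', hab.eq, smul_sub]
  module

variable {m k : ℕ} (M : ARep p₁ m) (N : ARep p₁ k)

abbrev rT : Module.End ℂ M.carrier →ₐ[ℂ] Module.End ℂ (M.carrier ⊗[ℂ] N.carrier) :=
  Module.End.rTensorAlgHom ℂ _ _
abbrev lT : Module.End ℂ N.carrier →ₐ[ℂ] Module.End ℂ (M.carrier ⊗[ℂ] N.carrier) :=
  Module.End.lTensorAlgHom ℂ _ _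

theorem rT_tmul (f : Module.End ℂ M.carrier) (u : M.carrier) (v : N.carrier) :
    rT M N f (u ⊗ₜ v) = f u ⊗ₜ v := rfl
theorem lT_tmul (f : Module.End ℂ N.carrier) (u : M.carrier) (v : N.carrier) :
    lT M N f (u ⊗ₜ v) = u ⊗ₜ f v := rfl

theorem rl_comm (f : Module.End ℂ M.carrier) (g : Module.End ℂ N.carrier) :
    Commute (rT M N f) (lT M N g) := by
  apply TensorProduct.ext'
  intro u v
  simp only [Module.End.mul_apply, rT_tmul, lT_tmul]

def lx (l : Lab) : Module.End ℂ (M.carrier ⊗[ℂ] N.carrier) :=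
  if l.1 = true then rT M N (M.X l.2) else lT M N (N.X l.2)
def lt (l : Lab) : Module.End ℂ (M.carrier ⊗[ℂ] N.carrier) :=
  if l.1 = true then rT M N (M.T l.2) else lT M N (N.T l.2)

theorem OfTypeA.X {m : ℕ} {M : ARep p₁ m} {I : Set ℂ} (h : OfTypeA M I) {i : ℕ} (hi : i < m) (z : ℂ)
    (v : M.carrier) (hv : v ≠ 0) (e : M.X i v = z • v) : z ∈ I := by
  rw [ARep.X, hX, dif_pos hi] at e
  exact h _ z v hv e

theorem mix_units (hp : p₁ ≠ 0) {I J : Set ℂ} (hI : ZInv p₁ I) (hJ : ZInv p₁ J) (hIJ : I ∩ J = ∅)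
    {E : Type} [AddCommGroup E] [Module ℂ E] [FiniteDimensional ℂ E]
    {a b : Module.End ℂ E} (hab : Commute a b)
    (ha : ∀ (z : ℂ) (v : E), v ≠ 0 → a v = z • v → z ∈ I)
    (hb : ∀ (z : ℂ) (v : E), v ≠ 0 → b v = z • v → z ∈ J) :
    IsUnit (a - b) ∧
    IsUnit ((a - b) * (a - b) - ((p₁ - p₁⁻¹) * (p₁ - p₁⁻¹)) • (b * a)) := by
  obtain ⟨h1, h2, h3⟩ := hJ.disj hp hIJ
  refine ⟨?_, ?_⟩
  · have := comm_unit hab ha hb h1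
    rwa [one_smul] at this
  · rw [ue_factor hp hab]
    exact (comm_unit hab ha hb h2).mul (comm_unit hab ha hb h3)

def mkLS (hp : p₁ ≠ 0) {I J : Set ℂ} (hI : ZInv p₁ I) (hJ : ZInv p₁ J) (hIJ : I ∩ J = ∅)
    (tM : OfTypeA M I) (tN : OfTypeA N J) :
    LS (p₁ - p₁⁻¹) (Idx.szf m k) (Module.End ℂ (M.carrier ⊗[ℂ] N.carrier)) where
  x := lx M N
  t := lt M N
  xx := by
    rintro ⟨_ | _, i⟩ ⟨_ | _, j⟩ hi hj
    · exact ((N.hecke hp).Xcomm i j hi hj).map (lT M N)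
    · exact (rl_comm M N _ _).symm
    · exact rl_comm M N _ _
    · exact ((M.hecke hp).Xcomm i j hi hj).map (rT M N)
  xu := by
    rintro ⟨_ | _, i⟩ hi
    · exact ((N.hecke hp).Xunit i hi).map (lT M N)
    · exact ((M.hecke hp).Xunit i hi).map (rT M N)
  braid := by
    rintro ⟨_ | _, i⟩ hi
    · exact ((N.hecke hp).map (lT M N)).braid i hi
    · exact ((M.hecke hp).map (rT M N)).braid i hi
  tcomm := by
    rintro ⟨_ | _, i⟩ ⟨_ | _, j⟩ hi hj h1 h2 h3
    · have hi' : i + 1 < k := hi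
      have hj' : j + 1 < k := hj
      simp [lsucc] at h1 h2 h3
      rcases lt_or_gt_of_ne h1 with h | h
      · exact ((N.hecke hp).Tcomm i j (by omega) hj').map (lT M N)
      · exact (((N.hecke hp).Tcomm j i (by omega) hi').map (lT M N)).symm
    · exact (rl_comm M N _ _).symm
    · exact rl_comm M N _ _
    · have hi' : i + 1 < m := hi
      have hj' : j + 1 < m := hj
      simp [lsucc] at h1 h2 h3
      rcases lt_or_gt_of_ne h1 with h | h
      · exact ((M.hecke hp).Tcomm i j (by omega) hj').map (rT M N)
      · exact (((M.hecke hp).Tcomm j i (by omega) hi').map (rT M N)).symm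
  quad := by
    rintro ⟨_ | _, i⟩ hi
    · exact ((N.hecke hp).map (lT M N)).quad i hi
    · exact ((M.hecke hp).map (rT M N)).quad i hi
  txt := by
    rintro ⟨_ | _, i⟩ hi
    · exact ((N.hecke hp).map (lT M N)).TXT i hi
    · exact ((M.hecke hp).map (rT M N)).TXT i hi
  txc := by
    rintro ⟨_ | _, i⟩ ⟨_ | _, j⟩ hi hj h1 h2
    · simp [lsucc] at h1 h2
      exact ((N.hecke hp).map (lT M N)).TXcomm i j hi hj h1 h2
    · exact (rl_comm M N _ _).symm
    · exact rl_comm M N _ _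
    · simp [lsucc] at h1 h2
      exact ((M.hecke hp).map (rT M N)).TXcomm i j hi hj h1 h2
  ud := by
    rintro ⟨_ | _, i⟩ ⟨_ | _, j⟩ hi hj h
    · simp at h
    · exact (mix_units hp hI hJ hIJ (rl_comm M N (M.X j) (N.X i)) (eig_map (tM.X hj) (rT M N))
        (eig_map (tN.X hi) (lT M N))).1
    · have := (mix_units hp hI hJ hIJ (rl_comm M N (M.X i) (N.X j)) (eig_map (tM.X hi) (rT M N))
        (eig_map (tN.X hj) (lT M N))).1.neg
      rw [neg_sub] at this
      exact this
    · simp at h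
  ue := by
    rintro ⟨_ | _, i⟩ ⟨_ | _, j⟩ hi hj h
    · simp at h
    · exact (mix_units hp hI hJ hIJ (rl_comm M N (M.X j) (N.X i)) (eig_map (tM.X hj) (rT M N))
        (eig_map (tN.X hi) (lT M N))).2
    · have hc := rl_comm M N (M.X i) (N.X j)
      have := (mix_units hp hI hJ hIJ hc (eig_map (tM.X hi) (rT M N))
        (eig_map (tN.X hj) (lT M N))).2
      rw [← hc.eq] at this
      have e : (lT M N (N.X j) - rT M N (M.X i)) * (lT M N (N.X j) - rT M N (M.X i))
          = (rT M N (M.X i) - lT M N (N.X j)) * (rT M N (M.X i) - lT M N (N.X j)) := by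
        exact sq_flip _ _
      change IsUnit ((lT M N (N.X j) - rT M N (M.X i)) * (lT M N (N.X j) - rT M N (M.X i))
        - _ • (rT M N (M.X i) * lT M N (N.X j)))
      rw [e]; exact this
    · simp at h

theorem poly_exists {E : Type*} {ι : Type*} [AddCommGroup E] [Module ℂ E] [FiniteDimensional ℂ E]
    (s : Finset ι) (f : ι → Module.End ℂ E) (I : Set ℂ)
    (h : ∀ i ∈ s, ∀ (z : ℂ) (v : E), v ≠ 0 → f i v = z • v → z ∈ I) :
    ∃ P : Polynomial ℂ, (∀ i ∈ s, Polynomial.aeval (f i) P = 0) ∧ ∀ z, P.IsRoot z → z ∈ I := by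
  refine ⟨∏ i ∈ s, minpoly ℂ (f i), ?_, ?_⟩
  · intro i hi
    obtain ⟨c, hc⟩ := Finset.dvd_prod_of_mem (fun i => minpoly ℂ (f i)) hi
    rw [hc, map_mul, minpoly.aeval, zero_mul]
  · intro z hz
    rw [Polynomial.IsRoot, Polynomial.eval_prod, Finset.prod_eq_zero_iff] at hz
    obtain ⟨i, hi, hz⟩ := hz
    obtain ⟨v, hv⟩ := (Module.End.hasEigenvalue_of_isRoot hz).exists_hasEigenvector
    exact h i hi z v hv.2 (Module.End.mem_eigenspace_iff.1 hv.1)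

theorem exists_pi {I J : Set ℂ} (hIJ : I ∩ J = ∅)
    (tM : OfTypeA M I) (tN : OfTypeA N J) : ∃ π : Polynomial ℂ,
    ∀ l, LVal (Idx.szf m k) l → Polynomial.aeval (lx M N l) π = if l.1 = true then 1 else 0 := by
  obtain ⟨P, hP, hP'⟩ := poly_exists (Finset.range m) M.X I
    (fun i hi => tM.X (Finset.mem_range.1 hi))
  obtain ⟨Q, hQ, hQ'⟩ := poly_exists (Finset.range k) N.X J
    (fun i hi => tN.X (Finset.mem_range.1 hi))
  have hcop : IsCoprime P Q := by
    rw [Polynomial.isCoprime_iff_aeval_ne_zero_of_isAlgClosed ℂ ℂ]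
    intro z
    by_contra hcon
    push Not at hcon
    have : z ∈ I ∩ J := ⟨hP' z (by simpa using hcon.1), hQ' z (by simpa using hcon.2)⟩
    rw [hIJ] at this; exact this
  obtain ⟨a, b, hab⟩ := hcop
  refine ⟨b * Q, ?_⟩
  rintro ⟨_ | _, i⟩ hi
  · change Polynomial.aeval (lT M N (N.X i)) _ = _
    rw [Polynomial.aeval_algHom_apply, map_mul, hQ i (Finset.mem_range.2 hi)]
    simp
  · change Polynomial.aeval (rT M N (M.X i)) _ = _
    have : b * Q = 1 - a * P := by rw [← hab]; ring
    rw [Polynomial.aeval_algHom_apply, this, map_sub, map_mul, hP i (Finset.mem_range.2 hi)]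
    simp

theorem tensor_irred (hM : IsIrredA M) (hN : IsIrredA N) 
    (U : Submodule ℂ (M.carrier ⊗[ℂ] N.carrier))
    (hx : ∀ l, LVal (Idx.szf m k) l → ∀ u ∈ U, lx M N l u ∈ U)
    (ht : ∀ l, LVal (Idx.szf m k) (lsucc l) → ∀ u ∈ U, lt M N l u ∈ U) : U = ⊥ ∨ U = ⊤ := by
  apply tensor_irred_aux
  · intro f
    obtain ⟨x, rfl⟩ := rho_surj M hM f
    exact ARep.stable ⟨_, (rT M N).comp M.rho⟩ U (fun i hi => ht (true, i) hi)
      (fun i hi => hx (true, i) hi) x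
  · intro f
    obtain ⟨x, rfl⟩ := rho_surj N hN f
    exact ARep.stable ⟨_, (lT M N).comp N.rho⟩ U (fun i hi => ht (false, i) hi)
      (fun i hi => hx (false, i) hi) x

end

open scoped TensorProduct
theorem exists_dual_ne {V : Type} [AddCommGroup V] [Module ℂ V] {v : V} (hv : v ≠ 0) :
    ∃ φ : V →ₗ[ℂ] ℂ, φ v ≠ 0 := by
  by_contra hcon
  push Not at hcon
  exact hv ((Module.forall_dual_apply_eq_zero_iff ℂ _).1 hcon)

section
variable {p₁ : ℂ} {m k n : ℕ} (M : ARep p₁ m) (N : ARep p₁ k)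

theorem base_same {hmn : m ≤ n} {i : ℕ} (h : ((Idx.base hmn).lab i).1 = ((Idx.base hmn).lab (i+1)).1) :
    i + 1 < m ∨ m ≤ i := by
  by_contra hcon
  push Not at hcon
  rw [Idx.color, Idx.color] at h
  simp [Idx.base] at h
  omega

theorem exists_V0 (hp : p₁ ≠ 0) {I J : Set ℂ} (hI : ZInv p₁ I) (hJ : ZInv p₁ J) (hIJ : I ∩ J = ∅)
    (hn : m + k = n) (hM : IsIrredA M) (tM : OfTypeA M I) (hN : IsIrredA N) (tN : OfTypeA N J)
    (em₁ : HA p₁ m →ₐ[ℂ] HA p₁ n) (em₂ : HA p₁ k →ₐ[ℂ] HA p₁ n)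
    (e1 : IsEmb1 p₁ m n em₁) (e2 : IsEmb2 p₁ m k n em₂) :
    ∃ V : ARep p₁ n, IsInducedA em₁ em₂ M N V ∧ IsIrredA V ∧ OfTypeA V (I ∪ J) := by
  classical
  have hmn : m ≤ n := by omega
  set S := mkLS M N hp hI hJ hIJ tM tN with hS
  obtain ⟨ρ, ρT, ρX, -⟩ := exists_lift hp (S.op_hecke hn)
  have ρT' : ∀ i, i + 1 < n → ρ (hT p₁ n i) = S.opT n i := by
    intro i hi
    rw [← ρT ⟨i, by omega⟩, ← hT_eq]
  have ρX' : ∀ i, i < n → ρ (hX p₁ n i) = S.opX n i := by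
    intro i hi
    rw [← ρX ⟨i, hi⟩, ← hX_eq]
  let V : ARep p₁ n := ⟨Idx n m → M.carrier ⊗[ℂ] N.carrier, ρ⟩
  let φ : M.carrier →ₗ[ℂ] N.carrier →ₗ[ℂ] V.carrier :=
    (TensorProduct.mk ℂ M.carrier N.carrier).compr₂ (LinearMap.single ℂ (fun _ => _) (Idx.base hmn))
  have hφ : ∀ u v, φ u v = Pi.single (Idx.base hmn) (u ⊗ₜ v) := fun u v => rfl
  have gen : ∀ W : Submodule ℂ V.carrier, (∀ z : HA p₁ n, ∀ w ∈ W, V.rho z w ∈ W) →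
      (∀ u v, φ u v ∈ W) → W = ⊤ := by
    intro W hW hb
    refine S.gen hmn W (fun i hi w hw => ?_) ?_
    · rw [← ρT' i hi]; exact hW _ w hw
    · intro e
      have : (⊤ : Submodule ℂ (M.carrier ⊗[ℂ] N.carrier)) ≤
          W.comap (LinearMap.single ℂ (fun _ => _) (Idx.base hmn)) := by
        rw [← TensorProduct.span_tmul_eq_top, Submodule.span_le]
        rintro _ ⟨x, y, rfl⟩
        exact hb x y
      exact this (x := e) trivial
  have lab1 : ∀ i, i < m → (Idx.base hmn).lab i = (true, i) := fun i hi => Idx.lab_base_lt hmn hi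
  have lab2 : ∀ i, (Idx.base hmn).lab (m + i) = (false, i) := fun i => Idx.lab_base_ge hmn i
  refine ⟨V, ⟨φ, ?_, ?_, gen, ?_⟩, ⟨?_, ?_⟩, ?_⟩
  · intro x u v
    refine intertwine M.rho (ρ.comp em₁) (φ.flip v) ?_ ?_ x u
    · intro i hi w
      rw [LinearMap.flip_apply, LinearMap.flip_apply, AlgHom.comp_apply, emb1_T e1 hmn hi,
        ρT' i (by omega), hφ, hφ, S.opT_single_same (by omega) _ (by rw [lab1 _ hi, lab1 i (by omega)]),
        lab1 i (by omega)]
      rfl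
    · intro i hi w
      rw [LinearMap.flip_apply, LinearMap.flip_apply, AlgHom.comp_apply, emb1_X e1 hmn hi,
        ρX' i (by omega), hφ, hφ, S.opX_single, lab1 i (by omega)]
      rfl
  · intro x u v
    refine intertwine N.rho (ρ.comp em₂) (φ u) ?_ ?_ x v
    · intro i hi w
      rw [AlgHom.comp_apply, emb2_T e2 hn hi,
        ρT' _ (by omega), hφ, hφ, S.opT_single_same (by omega) _
        (by rw [lab2 i, add_assoc, lab2]), lab2]
      rfl
    · intro i hi w
      rw [AlgHom.comp_apply, emb2_X e2 hn hi,
        ρX' _ (by omega), hφ, hφ, S.opX_single, lab2]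
      rfl
  · intro Z ψ h1 h2
    have good : S.Good Z.T Z.X (Idx.base hmn) (TensorProduct.lift ψ) := by
      constructor
      · intro i hi e
        induction e using TensorProduct.induction_on with
        | zero => simp
        | add a b ha hb => simp only [map_add, ha, hb]
        | tmul u v =>
          by_cases him : i < m
          · rw [lab1 i him]
            change _ = TensorProduct.lift ψ (M.X i u ⊗ₜ v)
            rw [TensorProduct.lift.tmul, TensorProduct.lift.tmul, ARep.X, ARep.X, h1, emb1_X e1 hmn him]
          · obtain ⟨j, rfl⟩ : ∃ j, i = m + j := ⟨i - m, by omega⟩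
            rw [lab2]
            change _ = TensorProduct.lift ψ (u ⊗ₜ N.X j v)
            rw [TensorProduct.lift.tmul, TensorProduct.lift.tmul, ARep.X, ARep.X, h2,
              emb2_X e2 hn (by omega)]
      · intro i hi hs e
        induction e using TensorProduct.induction_on with
        | zero => simp
        | add a b ha hb => simp only [map_add, ha, hb]
        | tmul u v =>
          rcases base_same hs with him | him
          · rw [lab1 i (by omega)]
            change _ = TensorProduct.lift ψ (M.T i u ⊗ₜ v)
            rw [TensorProduct.lift.tmul, TensorProduct.lift.tmul, ARep.T, ARep.T, h1, emb1_T e1 hmn him]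
          · obtain ⟨j, rfl⟩ : ∃ j, i = m + j := ⟨i - m, by omega⟩
            rw [lab2]
            change _ = TensorProduct.lift ψ (u ⊗ₜ N.T j v)
            rw [TensorProduct.lift.tmul, TensorProduct.lift.tmul, ARep.T, ARep.T, h2,
              emb2_T e2 hn (by omega)]
    refine ⟨S.uni Z.T n (TensorProduct.lift ψ), ⟨?_, ?_⟩, ?_⟩
    · refine intertwine ρ Z.rho (S.uni Z.T n (TensorProduct.lift ψ)) ?_ ?_
      · intro i hi w
        rw [ρT' i hi, S.uni_T Z.T Z.X hn (Z.hecke hp) _ good hi]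
        rfl
      · intro i hi w
        rw [ρX' i hi, S.uni_X Z.T Z.X hn (Z.hecke hp) _ good hi]
        rfl
    · intro u v
      rw [hφ, S.uni_base, TensorProduct.lift.tmul]
    · rintro g ⟨g1, g2⟩
      have key := gen (LinearMap.eqLocus g (S.uni Z.T n (TensorProduct.lift ψ))) ?_ ?_
      · refine LinearMap.ext fun w => ?_
        have : w ∈ LinearMap.eqLocus g (S.uni Z.T n (TensorProduct.lift ψ)) := by
          rw [key]; trivial
        exact this
      · intro z w hw
        rw [LinearMap.mem_eqLocus] at hw ⊢
        rw [g1, hw]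
        refine (intertwine ρ Z.rho (S.uni Z.T n (TensorProduct.lift ψ)) ?_ ?_ z w).symm
        · intro i hi w
          rw [ρT' i hi, S.uni_T Z.T Z.X hn (Z.hecke hp) _ good hi]
          rfl
        · intro i hi w
          rw [ρX' i hi, S.uni_X Z.T Z.X hn (Z.hecke hp) _ good hi]
          rfl
      · intro u v
        rw [LinearMap.mem_eqLocus, g2, hφ, S.uni_base, TensorProduct.lift.tmul]
  · obtain ⟨u, hu⟩ := hM.1
    obtain ⟨v, hv⟩ := hN.1
    refine ⟨φ u v, ?_⟩
    rw [hφ, Ne, Pi.single_eq_zero_iff]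
    intro h0
    obtain ⟨f, hf⟩ := exists_dual_ne hu
    obtain ⟨g, hg⟩ := exists_dual_ne hv
    have := congrArg (TensorProduct.lift (f.smulRight g)) h0
    simp [hf, hg] at this
  · intro W hW
    obtain ⟨π, hπ⟩ := exists_pi M N hIJ tM tN
    refine S.irred hn π hπ W ?_ ?_ (tensor_irred M N hM hN)
    · intro i hi w hw
      rw [← ρX' i hi]; exact hW _ w hw
    · intro i hi w hw
      rw [← ρT' i hi]; exact hW _ w hw
  · intro i z f hf h
    have h' : S.opX n i f = z • f := by rw [← ρX' i i.2, hX_eq]; exact h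
    obtain ⟨c, e, he, hce⟩ := S.opX_eig i z f hf h'
    have hv := c.lab_val hn i.2
    generalize c.lab i = l at hv hce
    obtain ⟨b, j⟩ := l
    cases b
    · right
      exact eig_map (tN.X hv) (lT M N) z e he hce
    · left
      exact eig_map (tM.X hv) (rT M N) z e he hce

variable {M N}

theorem irred_iso {V V' : ARep p₁ n} (g : V.carrier ≃ₗ[ℂ] V'.carrier)
    (hg : ∀ x w, g (V.rho x w) = V'.rho x (g w)) (h : IsIrredA V) : IsIrredA V' := by
  obtain ⟨⟨v, hv⟩, h2⟩ := h
  refine ⟨⟨g v, by simpa using hv⟩, ?_⟩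
  intro W hW
  rcases h2 (W.comap g.toLinearMap) (fun x w hw => by
    change g (V.rho x w) ∈ W
    rw [hg]; exact hW _ _ hw) with h | h
  · left
    rw [eq_bot_iff]
    intro w hw
    have : g.symm w ∈ W.comap g.toLinearMap := by
      change g (g.symm w) ∈ W
      simpa using hw
    rw [h] at this
    simpa using this
  · right
    rw [eq_top_iff]
    intro w _
    have : g.symm w ∈ W.comap g.toLinearMap := by rw [h]; trivial
    have : g (g.symm w) ∈ W := this
    simpa using this

theorem type_iso {V V' : ARep p₁ n} (g : V.carrier ≃ₗ[ℂ] V'.carrier)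
    (hg : ∀ x w, g (V.rho x w) = V'.rho x (g w)) {I : Set ℂ} (h : OfTypeA V I) : OfTypeA V' I := by
  intro i z v hv e
  refine h i z (g.symm v) (by simpa using hv) ?_
  apply g.injective
  rw [hg, map_smul]
  simpa using e

theorem ind_iso {em₁ : HA p₁ m →ₐ[ℂ] HA p₁ n} {em₂ : HA p₁ k →ₐ[ℂ] HA p₁ n} {V V' : ARep p₁ n}
    (h : IsInducedA em₁ em₂ M N V) (h' : IsInducedA em₁ em₂ M N V') :
    ∃ g : V.carrier ≃ₗ[ℂ] V'.carrier, ∀ x w, g (V.rho x w) = V'.rho x (g w) := by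
  obtain ⟨φ, a1, a2, a3, a4⟩ := h
  obtain ⟨φ', b1, b2, b3, b4⟩ := h'
  obtain ⟨g, ⟨g1, g2⟩, -⟩ := a4 V' φ' b1 b2
  obtain ⟨g', ⟨g1', g2'⟩, -⟩ := b4 V φ a1 a2
  have e1 : ∀ w, g' (g w) = w := by
    have := a3 (LinearMap.eqLocus (g' ∘ₗ g) LinearMap.id) ?_ ?_
    · intro w
      have hw : w ∈ LinearMap.eqLocus (g' ∘ₗ g) LinearMap.id := by rw [this]; trivial
      exact hw
    · intro z w hw
      rw [LinearMap.mem_eqLocus] at *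
      simp only [LinearMap.comp_apply, LinearMap.id_apply] at *
      rw [g1, g1', hw]
    · intro u v
      rw [LinearMap.mem_eqLocus]
      simp only [LinearMap.comp_apply, LinearMap.id_apply]
      rw [g2, g2']
  have e2 : ∀ w, g (g' w) = w := by
    have := b3 (LinearMap.eqLocus (g ∘ₗ g') LinearMap.id) ?_ ?_
    · intro w
      have hw : w ∈ LinearMap.eqLocus (g ∘ₗ g') LinearMap.id := by rw [this]; trivial
      exact hw
    · intro z w hw
      rw [LinearMap.mem_eqLocus] at *
      simp only [LinearMap.comp_apply, LinearMap.id_apply] at *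
      rw [g1', g1, hw]
    · intro u v
      rw [LinearMap.mem_eqLocus]
      simp only [LinearMap.comp_apply, LinearMap.id_apply]
      rw [g2', g2]
  exact ⟨LinearEquiv.ofLinear g g' (LinearMap.ext e2) (LinearMap.ext e1), g1⟩

theorem ind_of_iso {em₁ : HA p₁ m →ₐ[ℂ] HA p₁ n} {em₂ : HA p₁ k →ₐ[ℂ] HA p₁ n} {V V' : ARep p₁ n}
    (g : V.carrier ≃ₗ[ℂ] V'.carrier)
    (hg : ∀ x w, g (V.rho x w) = V'.rho x (g w))
    (h : IsInducedA em₁ em₂ M N V) : IsInducedA em₁ em₂ M N V' := by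
  obtain ⟨φ, a1, a2, a3, a4⟩ := h
  have hg' : ∀ x w, g.symm (V'.rho x w) = V.rho x (g.symm w) := by
    intro x w
    apply g.injective
    rw [hg]; simp
  refine ⟨φ.compr₂ g.toLinearMap, ?_, ?_, ?_, ?_⟩
  · intro x u v
    change g (φ _ _) = V'.rho _ (g (φ _ _))
    rw [a1, hg]
  · intro x u v
    change g (φ _ _) = V'.rho _ (g (φ _ _))
    rw [a2, hg]
  · intro W hW hb
    have := a3 (W.comap g.toLinearMap) (fun z w hw => by
      change g (V.rho z w) ∈ W
      rw [hg]; exact hW _ _ hw) (fun u v => hb u v)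
    rw [eq_top_iff]
    intro w _
    have hw : g.symm w ∈ W.comap g.toLinearMap := by rw [this]; trivial
    have hw : g (g.symm w) ∈ W := hw
    simpa using hw
  · intro Z ψ h1 h2
    obtain ⟨f, ⟨f1, f2⟩, f3⟩ := a4 Z ψ h1 h2
    refine ⟨f ∘ₗ g.symm.toLinearMap, ⟨?_, ?_⟩, ?_⟩
    · intro z w
      change f (g.symm _) = Z.rho z (f (g.symm w))
      rw [hg', f1]
    · intro u v
      change f (g.symm (g (φ u v))) = _
      rw [g.symm_apply_apply, f2]
    · rintro f' ⟨f1', f2'⟩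
      have := f3 (f' ∘ₗ g.toLinearMap) ⟨fun z w => by
        change f' (g _) = Z.rho z (f' (g w))
        rw [hg, f1'], fun u v => f2' u v⟩
      rw [← this]
      ext1 w
      simp

theorem part1 (hp : p₁ ≠ 0) {I J : Set ℂ} (hI : ZInv p₁ I) (hJ : ZInv p₁ J) (hIJ : I ∩ J = ∅)
    (hn : m + k = n) (hM : IsIrredA M) (tM : OfTypeA M I) (hN : IsIrredA N) (tN : OfTypeA N J)
    (em₁ : HA p₁ m →ₐ[ℂ] HA p₁ n) (em₂ : HA p₁ k →ₐ[ℂ] HA p₁ n)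
    (e1 : IsEmb1 p₁ m n em₁) (e2 : IsEmb2 p₁ m k n em₂) :
    (∃ V : ARep p₁ n, IsInducedA em₁ em₂ M N V) ∧
        (∀ V : ARep p₁ n, IsInducedA em₁ em₂ M N V →
          IsIrredA V ∧ OfTypeA V (I ∪ J)) := by
  obtain ⟨V, h1, h2, h3⟩ := exists_V0 M N hp hI hJ hIJ hn hM tM hN tN em₁ em₂ e1 e2
  refine ⟨⟨V, h1⟩, fun V' h' => ?_⟩
  obtain ⟨g, hg⟩ := ind_iso h1 h'
  exact ⟨irred_iso g hg h2, type_iso g hg h3⟩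

/-- an irreducible module receiving a nonzero compatible bilinear map is induced -/
theorem ind_of_map (hp : p₁ ≠ 0) {I J : Set ℂ} (hI : ZInv p₁ I) (hJ : ZInv p₁ J) (hIJ : I ∩ J = ∅)
    (hn : m + k = n) (hM : IsIrredA M) (tM : OfTypeA M I) (hN : IsIrredA N) (tN : OfTypeA N J)
    (em₁ : HA p₁ m →ₐ[ℂ] HA p₁ n) (em₂ : HA p₁ k →ₐ[ℂ] HA p₁ n)
    (e1 : IsEmb1 p₁ m n em₁) (e2 : IsEmb2 p₁ m k n em₂) (L : ARep p₁ n) (hL : IsIrredA L)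
    (ψ : M.carrier →ₗ[ℂ] N.carrier →ₗ[ℂ] L.carrier)
    (h1 : ∀ (x : HA p₁ m) (u : M.carrier) (v : N.carrier),
        ψ (M.rho x u) v = L.rho (em₁ x) (ψ u v))
    (h2 : ∀ (y : HA p₁ k) (u : M.carrier) (v : N.carrier),
        ψ u (N.rho y v) = L.rho (em₂ y) (ψ u v)) (hψ : ∃ u v, ψ u v ≠ 0) :
    IsInducedA em₁ em₂ M N L := by
  obtain ⟨V, hV, iV, -⟩ := exists_V0 M N hp hI hJ hIJ hn hM tM hN tN em₁ em₂ e1 e2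
  obtain ⟨φ, -, -, -, a4⟩ := id hV
  obtain ⟨g, ⟨g1, g2⟩, -⟩ := a4 L ψ h1 h2
  obtain ⟨u, v, huv⟩ := hψ
  have inj : LinearMap.ker g = ⊥ := by
    refine (iV.2 (LinearMap.ker g) ?_).resolve_right ?_
    · intro x w hw
      rw [LinearMap.mem_ker] at *
      rw [g1, hw, map_zero]
    · intro h
      have : φ u v ∈ LinearMap.ker g := by rw [h]; trivial
      rw [LinearMap.mem_ker, g2] at this
      exact huv this
  have surj : LinearMap.range g = ⊤ := by
    refine (hL.2 (LinearMap.range g) ?_).resolve_left ?_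
    · rintro x _ ⟨w, rfl⟩
      exact ⟨_, g1 x w⟩
    · intro h
      have : g (φ u v) ∈ LinearMap.range g := ⟨_, rfl⟩
      rw [h, g2] at this
      exact huv this
  exact ind_of_iso (LinearEquiv.ofBijective g ⟨LinearMap.ker_eq_bot.1 inj, LinearMap.range_eq_top.1 surj⟩)
    g1 hV

end

open scoped TensorProduct
/-- the product of `z - X i`, `i < m` -/
def Cpoly {R : Type*} [Ring R] [Algebra ℂ R] (X : ℕ → R) (z : ℂ) : ℕ → R
  | 0 => 1
  | m + 1 => Cpoly X z m * (z • 1 - X m)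

section
variable {R : Type*} [Ring R] [Algebra ℂ R] {X T : ℕ → R} {q : ℂ}

theorem Cpoly_comm {m : ℕ} {y : R} (z : ℂ) (h : ∀ i, i < m → Commute y (X i)) :
    Commute y (Cpoly X z m) := by
  induction m with
  | zero => exact Commute.one_right y
  | succ m ih =>
    exact (ih fun i hi => h i (by omega)).mul_right
      (((Commute.one_right y).smul_right z).sub_right (h m (by omega)))

theorem TX_pair {n i : ℕ} (H : IsHecke q n T X) (hi : i + 1 < n) (z : ℂ) :
    Commute (T i) ((z • 1 - X i) * (z • 1 - X (i + 1))) := by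
  have h1 := H.TXT i hi
  have h2 := H.quad i hi
  have hc : X i * X (i+1) = X (i+1) * X i := H.Xcomm i (i+1) (by omega) hi
  rw [← h1] at *
  generalize T i = t at *
  generalize X i = x at *
  have e1 : t * (t * x * t) = (q • t + 1) * (x * t) := by rw [← h2]; noncomm_ring
  have e2 : (t * x * t) * t = (t * x) * (q • t + 1) := by rw [← h2]; noncomm_ring
  have e3 : t * (x * (t * x * t)) = (x * (t * x * t)) * t := by
    have : x * (t * x * t) * t = (t * x * t * x) * t := by rw [hc]
    rw [this]; noncomm_ring
  simp only [add_mul, mul_add, smul_mul_assoc, mul_smul_comm, one_mul, mul_one] at e1 e2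
  rw [commute_iff_eq]
  simp only [sub_mul, mul_sub, smul_mul_assoc, mul_smul_comm, one_mul, mul_one, smul_sub]
  rw [e1, e3, e2]
  simp only [mul_assoc]
  module

theorem IsHecke.C_comm {n : ℕ} (H : IsHecke q n T X) (z : ℂ) {j : ℕ} (hj : j + 1 < n) :
    Commute (T j) (Cpoly X z n) := by
  induction n with
  | zero => omega
  | succ n ih =>
    by_cases h : j + 1 < n
    · exact (ih (H.left (by omega)) h).mul_right
        (((Commute.one_right _).smul_right z).sub_right
          (H.TXcomm j n hj (by omega) (by omega) (by omega)))
    · obtain rfl : n = j + 1 := by omega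
      change Commute (T j) (Cpoly X z j * (z • 1 - X j) * (z • 1 - X (j+1)))
      rw [mul_assoc]
      exact (Cpoly_comm z fun i hi => H.TXcomm j i hj (by omega) (by omega) (by omega)).mul_right
        (TX_pair H hj z)
end

section
variable {V : Type} [AddCommGroup V] [Module ℂ V]

theorem Cpoly_eig {X : ℕ → Module.End ℂ V} {a : ℕ → ℂ} {v : V} (z : ℂ) {m : ℕ}
    (h : ∀ i, i < m → X i v = a i • v) :
    Cpoly X z m v = (∏ i ∈ Finset.range m, (z - a i)) • v := by
  induction m with
  | zero => simp [Cpoly]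
  | succ m ih =>
    have h1 : (z • (1 : Module.End ℂ V) - X m) v = (z - a m) • v := by
      simp [h m (by omega), sub_smul]
    rw [Cpoly, Module.End.mul_apply, h1, map_smul, ih fun i hi => h i (by omega), smul_smul,
      Finset.prod_range_succ, mul_comm]

theorem Cpoly_kill {X : ℕ → Module.End ℂ V} {w : V} (z : ℂ) {m j : ℕ} (hj : j < m)
    (hc : ∀ i, i < m → Commute (X j) (X i)) (h : X j w = z • w) : Cpoly X z m w = 0 := by
  induction m generalizing w with
  | zero => omega
  | succ m ih =>
    rw [Cpoly, Module.End.mul_apply]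
    by_cases e : j = m
    · subst e
      have h1 : (z • (1 : Module.End ℂ V) - X j) w = 0 := by simp [h]
      rw [h1, map_zero]
    · refine ih (by omega) (fun i hi => hc i (by omega)) ?_
      have h2 : X j (X m w) = X m (X j w) := LinearMap.congr_fun (hc m (by omega)).eq w
      simp only [LinearMap.sub_apply, LinearMap.smul_apply, Module.End.one_apply, map_sub, map_smul,
        h2, h, smul_sub]

/-- existence of a joint eigenvector -/
theorem joint_eig [FiniteDimensional ℂ V] [Nontrivial V] {X : ℕ → Module.End ℂ V} (n : ℕ)
    (hc : ∀ i j, i < n → j < n → Commute (X i) (X j)) :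
    ∃ (a : ℕ → ℂ) (v : V), v ≠ 0 ∧ ∀ i, i < n → X i v = a i • v := by
  induction n with
  | zero =>
    obtain ⟨v, hv⟩ := exists_ne (0 : V)
    exact ⟨0, v, hv, fun i hi => by omega⟩
  | succ n ih =>
    obtain ⟨a, v, hv, h⟩ := ih fun i j hi hj => hc i j (by omega) (by omega)
    let K : Submodule ℂ V := ⨅ i : Fin n, LinearMap.ker (X i - a i • 1)
    have mK : ∀ w, w ∈ K ↔ ∀ i, i < n → X i w = a i • w := by
      intro w
      simp only [K, Submodule.mem_iInf, LinearMap.mem_ker, LinearMap.sub_apply, LinearMap.smul_apply,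
        Module.End.one_apply, sub_eq_zero]
      exact ⟨fun h i hi => h ⟨i, hi⟩, fun h i => h i i.2⟩
    have hst : ∀ w ∈ K, X n w ∈ K := by
      intro w hw
      rw [mK] at *
      intro i hi
      have h2 : X i (X n w) = X n (X i w) :=
        LinearMap.congr_fun (hc i n (by omega) (by omega)).eq w
      rw [h2, hw i hi, map_smul]
    haveI : Nontrivial K := ⟨⟨v, (mK v).2 h⟩, 0, fun e => hv (congrArg Subtype.val e)⟩
    obtain ⟨β, hβ⟩ := Module.End.exists_eigenvalue ((X n).restrict hst)
    obtain ⟨w, hw⟩ := hβ.exists_hasEigenvector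
    have hw0 : (w : V) ≠ 0 := by simpa using hw.2
    have h1 : X n w = β • (w : V) := by
      have := congrArg Subtype.val (Module.End.mem_eigenspace_iff.1 hw.1)
      simpa using this
    refine ⟨Function.update a n β, w, hw0, ?_⟩
    intro i hi
    by_cases e : i = n
    · subst e; simpa using h1
    · rw [Function.update_of_ne e]
      exact (mK w).1 w.2 i (by omega)

/-- one intertwiner step -/
theorem sort_step {p₁ : ℂ} (hp : p₁ ≠ 0) {I J : Set ℂ} (hJ : ZInv p₁ J) (hIJ : I ∩ J = ∅)
    {n : ℕ} {T X : ℕ → Module.End ℂ V} (H : IsHecke (p₁ - p₁⁻¹) n T X) {a : ℕ → ℂ} {v : V}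
    (hv : v ≠ 0) (h : ∀ i, i < n → X i v = a i • v) {i : ℕ} (hi : i + 1 < n)
    (h1 : a i ∈ J) (h2 : a (i + 1) ∈ I) :
    ∃ w : V, w ≠ 0 ∧ ∀ j, j < n → X j w = a (Equiv.swap i (i + 1) j) • w := by
  have hd : ∀ z, z ∈ J → z ∉ I := fun z hz hz' => by
    have : z ∈ I ∩ J := ⟨hz', hz⟩
    rw [hIJ] at this; exact this
  have hne : a i - a (i + 1) ≠ 0 := by
    intro e
    rw [sub_eq_zero] at e
    rw [← e] at h2
    exact hd _ h1 h2
  set q := p₁ - p₁⁻¹ with hq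
  have x1 := h i (by omega)
  have x2 := h (i+1) hi
  have t1 : X (i + 1) (T i v) = a i • T i v + (q * a (i+1)) • v := by
    have := LinearMap.congr_fun (H.TX hi) v
    simp only [Module.End.mul_apply, LinearMap.sub_apply, LinearMap.smul_apply, x1, x2, map_smul,
      smul_smul] at this
    rw [this]; module
  have t2 : X i (T i v) = a (i+1) • T i v - (q * a (i+1)) • v := by
    have := LinearMap.congr_fun (H.TX' hi) v
    simp only [Module.End.mul_apply, LinearMap.add_apply, LinearMap.smul_apply, x1, x2, map_smul,
      smul_smul] at this
    rw [this]; module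
  refine ⟨(a i - a (i+1)) • T i v + (q * a (i+1)) • v, ?_, ?_⟩
  · intro h0
    have hT : ∃ τ : ℂ, T i v = τ • v := by
      refine ⟨-(a i - a (i+1))⁻¹ * (q * a (i+1)), ?_⟩
      have h0' : (a i - a (i+1)) • T i v = -((q * a (i+1)) • v) := eq_neg_of_add_eq_zero_left h0
      rw [← inv_smul_smul₀ hne (T i v), h0']
      module
    obtain ⟨τ, hτ⟩ := hT
    have hquad := LinearMap.congr_fun (H.quad i hi) v
    have htxt := LinearMap.congr_fun (H.TXT i hi) v
    simp only [Module.End.mul_apply, LinearMap.add_apply, LinearMap.smul_apply, Module.End.one_apply,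
      hτ, map_smul, smul_smul, x1, x2] at hquad htxt
    have e1 : (τ * τ) = q * τ + 1 := by
      apply smul_left_injective ℂ hv
      simp only
      rw [hquad]; module
    have e2 : τ * (a i * τ) = a (i+1) := by
      apply smul_left_injective ℂ hv
      simp only
      rw [← htxt]
    have e3 : (τ - p₁) * (τ + p₁⁻¹) = 0 := by
      have : p₁ * p₁⁻¹ = 1 := mul_inv_cancel₀ hp
      linear_combination e1 + hq * τ - this
    apply hd _ _ h2
    rw [← e2]
    rcases mul_eq_zero.1 e3 with e | e
    · have : τ = p₁ := sub_eq_zero.1 e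
      rw [this]
      convert (hJ _ h1).1 using 1; ring
    · have : τ = -p₁⁻¹ := eq_neg_of_add_eq_zero_left e
      rw [this]
      convert (hJ _ h1).2 using 1; field_simp
  · intro j hj
    by_cases j1 : j = i
    · subst j1
      rw [Equiv.swap_apply_left, map_add, map_smul, map_smul, t2, x1]
      module
    by_cases j2 : j = i + 1
    · subst j2
      rw [Equiv.swap_apply_right, map_add, map_smul, map_smul, t1, x2]
      module
    rw [Equiv.swap_apply_of_ne_of_ne j1 j2, map_add, map_smul, map_smul]
    have : X j (T i v) = T i (X j v) :=
      (LinearMap.congr_fun (H.TXcomm i j hi hj j1 j2).eq v).symm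
    rw [this, h j hj, map_smul]
    module

theorem swap_lt {n i j : ℕ} (hi : i + 1 < n) (hj : j < n) : Equiv.swap i (i + 1) j < n := by
  rw [Equiv.swap_apply_def]; split_ifs <;> omega

theorem meas_lt {n i : ℕ} (hi : i + 1 < n) (P : ℕ → Prop) [DecidablePred P] (h1 : ¬ P i)
    (h2 : P (i + 1)) : ∑ j ∈ Finset.range n, (if P (Equiv.swap i (i + 1) j) then j else 0)
      < ∑ j ∈ Finset.range n, (if P j then j else 0) := by
  have e : ∑ j ∈ Finset.range n, (if P (Equiv.swap i (i + 1) j) then j else 0)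
      = ∑ j ∈ Finset.range n, (if P j then Equiv.swap i (i + 1) j else 0) := by
    refine Finset.sum_nbij' (Equiv.swap i (i+1)) (Equiv.swap i (i+1)) ?_ ?_ ?_ ?_ ?_
    · intro j hj; simp only [Finset.mem_range] at *; exact swap_lt hi hj
    · intro j hj; simp only [Finset.mem_range] at *; exact swap_lt hi hj
    · intro j _; simp
    · intro j _; simp
    · intro j _; simp
  rw [e]
  refine Finset.sum_lt_sum ?_ ⟨i + 1, Finset.mem_range.2 hi, ?_⟩
  · intro j _
    split_ifs with hP
    · rw [Equiv.swap_apply_def]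
      split_ifs with h
      · subst h; exact absurd hP h1
      · omega
      · exact le_rfl
    · exact le_rfl
  · simp [h2]

theorem sort_all {p₁ : ℂ} (hp : p₁ ≠ 0) {I J : Set ℂ} (hJ : ZInv p₁ J) (hIJ : I ∩ J = ∅)
    {n : ℕ} {T X : ℕ → Module.End ℂ V} (H : IsHecke (p₁ - p₁⁻¹) n T X) (N : ℕ) :
    ∀ (a : ℕ → ℂ) (v : V), v ≠ 0 → (∀ i, i < n → X i v = a i • v) →
    (∀ i, i < n → a i ∈ I ∪ J) →
    (open Classical in ∑ j ∈ Finset.range n, (if a j ∈ I then j else 0)) < N →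
    ∃ (a : ℕ → ℂ) (v : V), v ≠ 0 ∧ (∀ i, i < n → X i v = a i • v) ∧
    (∀ i, i < n → a i ∈ I ∪ J) ∧ ∀ i, i + 1 < n → a (i + 1) ∈ I → a i ∈ I := by
  classical
  have hd : ∀ z, z ∈ J → z ∉ I := fun z hz hz' => by
    have : z ∈ I ∩ J := ⟨hz', hz⟩
    rw [hIJ] at this; exact this
  induction N with
  | zero => intro a v _ _ _ h; omega
  | succ N ih =>
    intro a v hv h hIJ' hN
    by_cases hs : ∀ i, i + 1 < n → a (i + 1) ∈ I → a i ∈ I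
    · exact ⟨a, v, hv, h, hIJ', hs⟩
    push Not at hs
    obtain ⟨i, hi, h2, h1⟩ := hs
    have h1' : a i ∈ J := (hIJ' i (by omega)).resolve_left h1
    obtain ⟨w, hw, hw'⟩ := sort_step hp hJ hIJ H hv h hi h1' h2
    refine ih (fun j => a (Equiv.swap i (i+1) j)) w hw hw' (fun j hj => hIJ' _ (swap_lt hi hj)) ?_
    have := meas_lt hi (fun j => a j ∈ I) h1 h2
    omega

theorem cut {n : ℕ} (P : ℕ → Prop) (h : ∀ i, i + 1 < n → P (i + 1) → P i) :
    ∃ m, m ≤ n ∧ ∀ i, i < n → (P i ↔ i < m) := by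
  induction n with
  | zero => exact ⟨0, le_rfl, fun i hi => by omega⟩
  | succ n ih =>
    obtain ⟨m, hm, h'⟩ := ih fun i hi => h i (by omega)
    by_cases hP : P n
    · have : m = n := by
        by_contra hne
        have h1 : n - 1 + 1 = n := by omega
        have := h (n-1) (by omega) (by rwa [h1])
        have := (h' (n-1) (by omega)).1 this
        omega
      subst this
      refine ⟨m + 1, le_rfl, fun i hi => ⟨fun _ => hi, fun _ => ?_⟩⟩
      by_cases e : i = m
      · subst e; exact hP
      · exact (h' i (by omega)).2 (by omega)
    · refine ⟨m, by omega, fun i hi => ?_⟩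
      by_cases e : i = n
      · subst e; exact ⟨fun h => absurd h hP, fun h => by omega⟩
      · exact h' i (by omega)
end

open scoped TensorProduct
section
variable {p₁ : ℂ} {m k n : ℕ}

/-- subrepresentation -/
def subrep (M : ARep p₁ n) (W : Submodule ℂ M.carrier)
    (hW : ∀ x : HA p₁ n, ∀ w ∈ W, M.rho x w ∈ W) : ARep p₁ n where
  carrier := W
  rho := AlgHom.ofLinearMap
    { toFun := fun x => (M.rho x).restrict (hW x)
      map_add' := by intro x y; ext w; simp
      map_smul' := by intro z x; ext w; simp }
    (by ext w; simp) (by intro x y; ext w; simp)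

theorem subrep_rho (M : ARep p₁ n) (W : Submodule ℂ M.carrier)
    (hW : ∀ x : HA p₁ n, ∀ w ∈ W, M.rho x w ∈ W) (x : HA p₁ n) (w : W) :
    ((subrep M W hW).rho x w : W).1 = M.rho x w.1 := rfl

theorem exists_irred_sub (M : ARep p₁ n) (U : Submodule ℂ M.carrier)
    (hU : ∀ x : HA p₁ n, ∀ w ∈ U, M.rho x w ∈ U) (hU0 : U ≠ ⊥) :
    ∃ (W : Submodule ℂ M.carrier) (hW : ∀ x : HA p₁ n, ∀ w ∈ W, M.rho x w ∈ W),
      W ≤ U ∧ IsIrredA (subrep M W hW) := by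
  obtain ⟨W, ⟨hWU, hW0, hW⟩, hmin⟩ := WellFounded.has_min
    (wellFounded_lt (α := Submodule ℂ M.carrier))
    {W | W ≤ U ∧ W ≠ ⊥ ∧ ∀ x : HA p₁ n, ∀ w ∈ W, M.rho x w ∈ W} ⟨U, le_rfl, hU0, hU⟩
  refine ⟨W, hW, hWU, ?_, ?_⟩
  · obtain ⟨v, hv, hv0⟩ := W.ne_bot_iff.1 hW0
    exact ⟨(⟨v, hv⟩ : W), fun e => hv0 (congrArg Subtype.val e)⟩
  · intro (K : Submodule ℂ W) hK
    by_cases hK0 : K = ⊥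
    · exact Or.inl hK0
    right
    by_contra hK1
    refine hmin (K.map W.subtype) ⟨?_, ?_, ?_⟩ ?_
    · exact (Submodule.map_subtype_le W K).trans hWU
    · intro h
      refine hK0 ((Submodule.eq_bot_iff (p := K)).2 fun w hw => ?_)
      have : w.1 ∈ K.map W.subtype := ⟨w, hw, rfl⟩
      rw [h, Submodule.mem_bot] at this
      exact Subtype.ext this
    · rintro x _ ⟨w, hw, rfl⟩
      exact ⟨_, hK x w hw, rfl⟩
    · refine lt_of_le_of_ne (Submodule.map_subtype_le W K) ?_
      intro h
      apply hK1
      refine (Submodule.eq_top_iff' (p := K)).2 fun w => ?_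
      have : w.1 ∈ K.map W.subtype := by rw [h]; exact w.2
      obtain ⟨w', hw', e⟩ := this
      have : w' = w := Subtype.ext e
      rwa [← this]

/-- post-composition -/
def postc (A B : Type) [AddCommGroup A] [Module ℂ A] [AddCommGroup B] [Module ℂ B] :
    Module.End ℂ B →ₐ[ℂ] Module.End ℂ (A →ₗ[ℂ] B) := AlgHom.ofLinearMap
    { toFun := fun f => { toFun := fun g => f ∘ₗ g
                          map_add' := by intro g h; ext; simp
                          map_smul' := by intro z g; ext; simp }
      map_add' := by intro x y; ext; simp
      map_smul' := by intro x y; ext; simp }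
    (by ext; simp) (by intro x y; ext; simp)

theorem emb_comm (hp : p₁ ≠ 0) (hn : m + k = n) {em₁ : HA p₁ m →ₐ[ℂ] HA p₁ n} {em₂ : HA p₁ k →ₐ[ℂ] HA p₁ n}
    (e1 : IsEmb1 p₁ m n em₁) (e2 : IsEmb2 p₁ m k n em₂) (L : ARep p₁ n) (x : HA p₁ m) (y : HA p₁ k)
    (w : L.carrier) : L.rho (em₂ y) (L.rho (em₁ x) w) = L.rho (em₁ x) (L.rho (em₂ y) w) := by
  have H := HA_hecke (n := n) hp
  have key : ∀ (a b : HA p₁ n), Commute a b → ∀ w, L.rho a (L.rho b w) = L.rho b (L.rho a w) := by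
    intro a b h w
    have := LinearMap.congr_fun (h.map L.rho).eq w
    exact this
  have hmn : m ≤ n := by omega
  refine intertwine (L.rho.comp em₁) (L.rho.comp em₁) (L.rho (em₂ y)) ?_ ?_ x w
  · intro i hi w
    refine (intertwine (L.rho.comp em₂) (L.rho.comp em₂) (L.rho (em₁ (hT p₁ m i))) ?_ ?_ y w).symm
    · intro j hj w
      simp only [AlgHom.comp_apply]
      rw [emb1_T e1 hmn hi, emb2_T e2 hn hj]
      exact key _ _ (H.Tcomm _ _ (by omega) (by omega)) w
    · intro j hj w
      simp only [AlgHom.comp_apply]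
      rw [emb1_T e1 hmn hi, emb2_X e2 hn hj]
      exact key _ _ (H.TXcomm _ _ (by omega) (by omega) (by omega) (by omega)) w
  · intro i hi w
    refine (intertwine (L.rho.comp em₂) (L.rho.comp em₂) (L.rho (em₁ (hX p₁ m i))) ?_ ?_ y w).symm
    · intro j hj w
      simp only [AlgHom.comp_apply]
      rw [emb1_X e1 hmn hi, emb2_T e2 hn hj]
      exact key _ _ (H.TXcomm _ _ (by omega) (by omega) (by omega) (by omega)).symm w
    · intro j hj w
      simp only [AlgHom.comp_apply]
      rw [emb1_X e1 hmn hi, emb2_X e2 hn hj]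
      exact key _ _ (H.Xcomm _ _ (by omega) (by omega)) w

theorem part2 (hp : p₁ ≠ 0) {I J : Set ℂ} (hI : ZInv p₁ I) (hJ : ZInv p₁ J) (hIJ : I ∩ J = ∅)
    (L : ARep p₁ n) (hL : IsIrredA L) (tL : OfTypeA L (I ∪ J)) :
      ∃ (m k : ℕ) (_ : m + k = n)
        (em₁ : HA p₁ m →ₐ[ℂ] HA p₁ n) (em₂ : HA p₁ k →ₐ[ℂ] HA p₁ n)
        (_ : IsEmb1 p₁ m n em₁) (_ : IsEmb2 p₁ m k n em₂)
        (M : ARep p₁ m) (N : ARep p₁ k),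
        IsIrredA M ∧ OfTypeA M I ∧ IsIrredA N ∧ OfTypeA N J ∧
        IsInducedA em₁ em₂ M N L := by
  classical
  have H := L.hecke hp
  obtain ⟨v0, hv0⟩ := hL.1
  haveI : Nontrivial L.carrier := ⟨v0, 0, hv0⟩
  obtain ⟨a0, v1, hv1, ha0⟩ := joint_eig n H.Xcomm
  obtain ⟨a, v, hv, hav, haIJ, hs⟩ := sort_all hp hJ hIJ H _ a0 v1 hv1 ha0
    (fun i hi => tL.X hi _ v1 hv1 (ha0 i hi)) (Nat.lt_succ_self _)
  obtain ⟨m, hmn, hm⟩ := cut (fun i => a i ∈ I) hs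
  obtain ⟨k, hn⟩ : ∃ k, m + k = n := ⟨n - m, by omega⟩
  have aI : ∀ i, i < m → a i ∈ I := fun i hi => (hm i (by omega)).2 hi
  have aJ : ∀ i, i < k → a (m + i) ∈ J := fun i hi =>
    (haIJ (m + i) (by omega)).resolve_left fun h => by
      have := (hm (m+i) (by omega)).1 h
      omega
  obtain ⟨em₁, em₂, e1, e2⟩ := exists_emb (p₁ := p₁) hp hn
  let X2 : ℕ → Module.End ℂ L.carrier := fun i => L.X (m + i)
  let Y : Submodule ℂ L.carrier :=
    (⨅ z : ℂ, LinearMap.ker (Cpoly L.X z m - (∏ i ∈ Finset.range m, (z - a i)) • 1)) ⊓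
    (⨅ z : ℂ, LinearMap.ker (Cpoly X2 z k - (∏ i ∈ Finset.range k, (z - a (m + i))) • 1))
  have memY : ∀ w, w ∈ Y ↔ (∀ z, Cpoly L.X z m w = (∏ i ∈ Finset.range m, (z - a i)) • w) ∧
      (∀ z, Cpoly X2 z k w = (∏ i ∈ Finset.range k, (z - a (m + i))) • w) := by
    intro w
    simp only [Y, Submodule.mem_inf, Submodule.mem_iInf, LinearMap.mem_ker, LinearMap.sub_apply,
      LinearMap.smul_apply, Module.End.one_apply, sub_eq_zero]
  have stab : ∀ g : Module.End ℂ L.carrier, (∀ z, Commute g (Cpoly L.X z m)) →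
      (∀ z, Commute g (Cpoly X2 z k)) → ∀ w ∈ Y, g w ∈ Y := by
    intro g g1 g2 w hw
    rw [memY] at *
    refine ⟨fun z => ?_, fun z => ?_⟩
    · have := LinearMap.congr_fun (g1 z).eq w
      simp only [Module.End.mul_apply] at this
      rw [← this, hw.1, map_smul]
    · have := LinearMap.congr_fun (g2 z).eq w
      simp only [Module.End.mul_apply] at this
      rw [← this, hw.2, map_smul]
  have vY : v ∈ Y := by
    rw [memY]
    exact ⟨fun z => Cpoly_eig z fun i hi => hav i (by omega),
      fun z => Cpoly_eig (X := X2) (a := fun i => a (m + i)) z fun i hi => hav (m + i) (by omega)⟩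
  have H1 := H.left (m := m) (by omega)
  have H2 := H.right hn
  have st1 : ∀ (x : HA p₁ m), ∀ w ∈ Y, L.rho (em₁ x) w ∈ Y := by
    refine ARep.stable ⟨L.carrier, L.rho.comp em₁⟩ Y ?_ ?_
    · intro i hi
      change ∀ w ∈ Y, L.rho (em₁ (hT p₁ m i)) w ∈ Y
      rw [emb1_T e1 hmn hi]
      exact stab (L.T i) (fun z => H1.C_comm z hi) (fun z => Cpoly_comm z fun j hj =>
        H.TXcomm i (m + j) (by omega) (by omega) (by omega) (by omega))
    · intro i hi
      change ∀ w ∈ Y, L.rho (em₁ (hX p₁ m i)) w ∈ Y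
      rw [emb1_X e1 hmn hi]
      exact stab (L.X i) (fun z => Cpoly_comm z fun j hj => H.Xcomm i j (by omega) (by omega))
        (fun z => Cpoly_comm z fun j hj => H.Xcomm i (m + j) (by omega) (by omega))
  have st2 : ∀ (x : HA p₁ k), ∀ w ∈ Y, L.rho (em₂ x) w ∈ Y := by
    refine ARep.stable ⟨L.carrier, L.rho.comp em₂⟩ Y ?_ ?_
    · intro i hi
      change ∀ w ∈ Y, L.rho (em₂ (hT p₁ k i)) w ∈ Y
      rw [emb2_T e2 hn hi]
      exact stab (L.T (m + i)) (fun z => Cpoly_comm z fun j hj =>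
        H.TXcomm (m + i) j (by omega) (by omega) (by omega) (by omega)) (fun z => H2.C_comm z hi)
    · intro i hi
      change ∀ w ∈ Y, L.rho (em₂ (hX p₁ k i)) w ∈ Y
      rw [emb2_X e2 hn hi]
      exact stab (L.X (m + i)) (fun z => Cpoly_comm z fun j hj => H.Xcomm _ j (by omega) (by omega))
        (fun z => Cpoly_comm z fun j hj => H.Xcomm _ (m + j) (by omega) (by omega))
  have ty1 : ∀ i, i < m → ∀ (z : ℂ) (w : L.carrier), w ∈ Y → w ≠ 0 → L.X i w = z • w → z ∈ I := by
    intro i hi z w hw hw0 h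
    have h1 := Cpoly_kill (X := L.X) z hi (fun j hj => H.Xcomm i j (by omega) (by omega)) h
    rw [((memY w).1 hw).1 z, smul_eq_zero, Finset.prod_eq_zero_iff] at h1
    obtain ⟨j, hj, e⟩ := h1.resolve_right hw0
    rw [sub_eq_zero.1 e]
    exact aI j (Finset.mem_range.1 hj)
  have ty2 : ∀ i, i < k → ∀ (z : ℂ) (w : L.carrier), w ∈ Y → w ≠ 0 → L.X (m + i) w = z • w →
      z ∈ J := by
    intro i hi z w hw hw0 h
    have h1 := Cpoly_kill (X := X2) z hi (fun j hj => H.Xcomm _ _ (by omega) (by omega)) h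
    rw [((memY w).1 hw).2 z, smul_eq_zero, Finset.prod_eq_zero_iff] at h1
    obtain ⟨j, hj, e⟩ := h1.resolve_right hw0
    rw [sub_eq_zero.1 e]
    exact aJ j (Finset.mem_range.1 hj)
  -- the first factor
  obtain ⟨W, hW, hWY, irW⟩ := exists_irred_sub ⟨L.carrier, L.rho.comp em₁⟩ Y st1
    (fun h => hv (by rw [h] at vY; simpa using vY))
  -- the second factor
  let R : ARep p₁ k := ⟨W →ₗ[ℂ] L.carrier, (postc W L.carrier).comp (L.rho.comp em₂)⟩
  let U : Submodule ℂ (W →ₗ[ℂ] L.carrier) :=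
    { carrier := {f | (∀ u, f u ∈ Y) ∧ ∀ (x : HA p₁ m) (u : W),
        f ⟨L.rho (em₁ x) u.1, hW x u.1 u.2⟩ = L.rho (em₁ x) (f u)}
      add_mem' := by
        rintro f g ⟨f1, f2⟩ ⟨g1, g2⟩
        refine ⟨fun u => Y.add_mem (f1 u) (g1 u), fun x u => ?_⟩
        rw [LinearMap.add_apply, LinearMap.add_apply, f2, g2, map_add]
      zero_mem' := ⟨fun u => Y.zero_mem, fun x u => by simp⟩
      smul_mem' := by
        rintro c f ⟨f1, f2⟩
        refine ⟨fun u => Y.smul_mem c (f1 u), fun x u => ?_⟩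
        rw [LinearMap.smul_apply, LinearMap.smul_apply, f2, map_smul] }
  have hU : ∀ y : HA p₁ k, ∀ f ∈ U, R.rho y f ∈ U := by
    rintro y f ⟨f1, f2⟩
    refine ⟨fun u => st2 y _ (f1 u), fun x u => ?_⟩
    change L.rho (em₂ y) (f _) = L.rho (em₁ x) (L.rho (em₂ y) (f u))
    rw [f2, emb_comm hp hn e1 e2]
  have hU0 : U ≠ ⊥ := by
    intro h
    have : W.subtype ∈ U := ⟨fun u => hWY u.2, fun x u => rfl⟩
    rw [h, Submodule.mem_bot] at this
    obtain ⟨u, hu⟩ := irW.1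
    apply hu
    exact Subtype.ext (LinearMap.congr_fun this u)
  obtain ⟨K, hK, hKU, irK⟩ := exists_irred_sub R U hU hU0
  have tW : OfTypeA (subrep ⟨L.carrier, L.rho.comp em₁⟩ W hW) I := by
    intro i z (w : W) hw h
    refine ty1 i i.2 z w.1 (hWY w.2) (fun e => hw (Subtype.ext e)) ?_
    have := congrArg Subtype.val h
    rw [subrep_rho, ← hX_eq] at this
    rw [ARep.X, ← emb1_X e1 hmn i.2]
    exact this
  have tK : OfTypeA (subrep R K hK) J := by
    intro i z (f : K) hf h
    have hf0 : ∃ u, f.1 u ≠ 0 := by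
      by_contra hcon
      push Not at hcon
      exact hf (Subtype.ext (LinearMap.ext hcon))
    obtain ⟨u, hu⟩ := hf0
    refine ty2 i i.2 z (f.1 u) ((hKU f.2).1 u) hu ?_
    have := congrArg Subtype.val h
    rw [subrep_rho, ← hX_eq] at this
    rw [ARep.X, ← emb2_X e2 hn i.2]
    exact LinearMap.congr_fun this u
  refine ⟨m, k, hn, em₁, em₂, e1, e2, _, _, irW, tW, irK, tK, ?_⟩
  let ψ : W →ₗ[ℂ] K →ₗ[ℂ] L.carrier := LinearMap.flip K.subtype
  refine ind_of_map hp hI hJ hIJ hn irW tW irK tK em₁ em₂ e1 e2 L hL ψ ?_ ?_ ?_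
  · intro x (u : W) (f : K)
    exact (hKU f.2).2 x u
  · intro y (u : W) (f : K)
    rfl
  · obtain ⟨(f : K), hf⟩ := irK.1
    by_contra hcon
    push Not at hcon
    exact hf (Subtype.ext (LinearMap.ext fun u => hcon u f))

end


theorem stmt18 (p₁ : ℂ) (hp₁ : p₁ ≠ 0) (h₁ : p₁ ^ 2 ≠ 1)
    (I J : Set ℂ) (hI : ZInv p₁ I) (hJ : ZInv p₁ J) (hIJ : I ∩ J = ∅) :
    -- (1) induction of irreducibles of disjoint `ℤ`-invariant types is irreducible
    (∀ (m k : ℕ) (M : ARep p₁ m) (N : ARep p₁ k),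
      IsIrredA M → OfTypeA M I → IsIrredA N → OfTypeA N J →
      ∀ (em₁ : HA p₁ m →ₐ[ℂ] HA p₁ (m + k)) (em₂ : HA p₁ k →ₐ[ℂ] HA p₁ (m + k)),
        IsEmb1 p₁ m (m + k) em₁ → IsEmb2 p₁ m k (m + k) em₂ →
        (∃ V : ARep p₁ (m + k), IsInducedA em₁ em₂ M N V) ∧
        (∀ V : ARep p₁ (m + k), IsInducedA em₁ em₂ M N V →
          IsIrredA V ∧ OfTypeA V (I ∪ J))) ∧
    -- (2) conversely, every irreducible of type `I ∪ J` is induced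
    (∀ (n : ℕ) (L : ARep p₁ n), IsIrredA L → OfTypeA L (I ∪ J) →
      ∃ (m k : ℕ) (_ : m + k = n)
        (em₁ : HA p₁ m →ₐ[ℂ] HA p₁ n) (em₂ : HA p₁ k →ₐ[ℂ] HA p₁ n)
        (_ : IsEmb1 p₁ m n em₁) (_ : IsEmb2 p₁ m k n em₂)
        (M : ARep p₁ m) (N : ARep p₁ k),
        IsIrredA M ∧ OfTypeA M I ∧ IsIrredA N ∧ OfTypeA N J ∧
        IsInducedA em₁ em₂ M N L) := by
  exact ⟨fun m k M N hM tM hN tN em₁ em₂ e1 e2 =>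
      part1 hp₁ hI hJ hIJ rfl hM tM hN tN em₁ em₂ e1 e2,
    fun n L hL tL => part2 hp₁ hI hJ hIJ L hL tL⟩
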